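/- Let X be a tree and f : X → X a continuous map. Then f has zero topological entropy, h(f) = 0, if and only if the restriction f|_{CR(f)} has equicontinuous powers at every periodic point of f; that is, for every periodic point p of f and every ε > 0 there is δ > 0 such that every y ∈ CR(f) with d(y,p) < δ satisfies d(f^n(y), f^n(p)) < ε for all n ≥ 0. -/

import Mathlib

open Set Filter Topology Function
open scoped ENNReal

/-- A subset of a topological space is an *arc* if it is homeomorphic to `[0,1]`. -/
def IsArc {X : Type*} [TopologicalSpace X] (A : Set X) : Prop :=
  Nonempty (A ≃ₜ Set.Icc (0 : ℝ) 1)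

/-- A point `p` is an *endpoint* of the arc `A` if `p ∈ A` and `A \ {p}` is connected. -/
def IsArcEndpoint {X : Type*} [TopologicalSpace X] (A : Set X) (p : X) : Prop :=
  p ∈ A ∧ IsConnected (A \ {p})

/-- A subset is a *simple closed curve* if it is homeomorphic to the unit circle. -/
def IsSimpleClosedCurve {X : Type*} [TopologicalSpace X] (S : Set X) : Prop :=
  Nonempty (S ≃ₜ Metric.sphere (0 : ℂ) 1)

/-- A *tree* is a compact connected metric space which is a union of finitely many arcs,
any two of which are disjoint or intersect only in (one or both of) their endpoints,
and which contains no simple closed curve. -/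
def IsTree (X : Type*) [MetricSpace X] : Prop :=
  CompactSpace X ∧ ConnectedSpace X ∧
    (∃ 𝒜 : Finset (Set X), (∀ A ∈ 𝒜, IsArc A) ∧ ⋃₀ (𝒜 : Set (Set X)) = Set.univ ∧
      ∀ A ∈ 𝒜, ∀ B ∈ 𝒜, A ≠ B → ∀ p ∈ A ∩ B, IsArcEndpoint A p ∧ IsArcEndpoint B p) ∧
    ∀ S : Set X, ¬ IsSimpleClosedCurve S

/-- A *dendrite* is a locally connected continuum containing no simple closed curve. -/
def IsDendrite (X : Type*) [MetricSpace X] : Prop :=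
  CompactSpace X ∧ ConnectedSpace X ∧ LocallyConnectedSpace X ∧
    ∀ S : Set X, ¬ IsSimpleClosedCurve S

/-- `𝒰` is a finite open cover of the subset `Y`. -/
def IsOpenCoverOn {X : Type*} [TopologicalSpace X] (Y : Set X) (𝒰 : Finset (Set X)) : Prop :=
  (∀ U ∈ 𝒰, IsOpen U) ∧ Y ⊆ ⋃₀ (𝒰 : Set (Set X))

/-- `N(⋁_{i=1}^n f^{-a_i}(𝒰))`, relative to the subset `Y`: the minimal number `m` of elements
of the join cover `⋁_{i=1}^n f^{-a_i}(𝒰)` needed to cover `Y`. -/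
noncomputable def seqCoverCountOn {X : Type*} (f : X → X) (Y : Set X) (a : ℕ → ℕ)
    (𝒰 : Finset (Set X)) (n : ℕ) : ℕ :=
  sInf { m | ∃ c : Fin m → Fin n → Set X, (∀ j i, c j i ∈ 𝒰) ∧
    Y ⊆ ⋃ j, ⋂ i, f^[a i.1] ⁻¹' c j i }

/-- Topological sequence entropy of `f` restricted to the (invariant) subset `Y`,
with respect to the sequence `a`. -/
noncomputable def seqEntropyOn {X : Type*} [TopologicalSpace X] (f : X → X) (Y : Set X)
    (a : ℕ → ℕ) : ℝ≥0∞ :=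
  ⨆ (𝒰 : Finset (Set X)) (_ : IsOpenCoverOn Y 𝒰),
    Filter.limsup
      (fun n : ℕ => ENNReal.ofReal (Real.log (seqCoverCountOn f Y a 𝒰 n) / n)) Filter.atTop

/-- Topological sequence entropy of `f : X → X` with respect to the sequence `a`. -/
noncomputable def seqEntropy {X : Type*} [TopologicalSpace X] (f : X → X) (a : ℕ → ℕ) : ℝ≥0∞ :=
  seqEntropyOn f Set.univ a

/-- The ordinary topological entropy `h(f)`, i.e. the sequence entropy for `A = (0,1,2,…)`. -/
noncomputable def topEntropy {X : Type*} [TopologicalSpace X] (f : X → X) : ℝ≥0∞ :=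
  seqEntropy f id

/-- `h_∞(f|_Y)`: the supremum over all strictly increasing sequences of positive integers of
the topological sequence entropies of `f` restricted to `Y`. -/
noncomputable def supSeqEntropyOn {X : Type*} [TopologicalSpace X] (f : X → X) (Y : Set X) :
    ℝ≥0∞ :=
  ⨆ (a : ℕ → ℕ) (_ : StrictMono a) (_ : 1 ≤ a 0), seqEntropyOn f Y a

/-- `h_∞(f)`: the supremum of the topological sequence entropies of `f`. -/
noncomputable def supSeqEntropy {X : Type*} [TopologicalSpace X] (f : X → X) : ℝ≥0∞ :=
  supSeqEntropyOn f Set.univ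

/-- The ω-limit set `ω_f(x) = ⋂_n closure {f^k(x) : k ≥ n}`. -/
def omegaLimitSet {X : Type*} [TopologicalSpace X] (f : X → X) (x : X) : Set X :=
  ⋂ n : ℕ, closure ((fun k => f^[k] x) '' Set.Ici n)

/-- `ω(f) = ⋃_x ω_f(x)`. -/
def omegaSet {X : Type*} [TopologicalSpace X] (f : X → X) : Set X :=
  ⋃ x : X, omegaLimitSet f x

/-- The non-wandering set `Ω(f)`. -/
def nonWanderingSet {X : Type*} [TopologicalSpace X] (f : X → X) : Set X :=
  { x | ∀ U : Set X, IsOpen U → x ∈ U → ∃ n, 1 ≤ n ∧ (f^[n] ⁻¹' U ∩ U).Nonempty }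

/-- There is an ε-chain from `x` to `y` under `f`. -/
def EpsChain {X : Type*} [MetricSpace X] (f : X → X) (ε : ℝ) (x y : X) : Prop :=
  ∃ n, 1 ≤ n ∧ ∃ c : ℕ → X, c 0 = x ∧ c n = y ∧ ∀ i < n, dist (f (c i)) (c (i + 1)) < ε

/-- The chain recurrent set `CR(f)`. -/
def chainRecurrentSet {X : Type*} [MetricSpace X] (f : X → X) : Set X :=
  { x | ∀ ε > 0, EpsChain f ε x x }

/-- The chain recurrent set of the restriction `f|_Y`: chain recurrence witnessed by
ε-chains lying entirely inside `Y`. -/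
def chainRecurrentSetOn {X : Type*} [MetricSpace X] (f : X → X) (Y : Set X) : Set X :=
  { x ∈ Y | ∀ ε > 0, ∃ n, 1 ≤ n ∧ ∃ c : ℕ → X, c 0 = x ∧ c n = x ∧
      (∀ i ≤ n, c i ∈ Y) ∧ ∀ i < n, dist (f (c i)) (c (i + 1)) < ε }

/-- `I` is a periodic arc of `f` of period `s`: an arc with `f^s(I) ⊆ I` whose iterates
`I, f(I), …, f^{s-1}(I)` are pairwise disjoint. -/
def IsPeriodicArc {X : Type*} [TopologicalSpace X] (f : X → X) (I : Set X) (s : ℕ) : Prop :=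
  IsArc I ∧ 1 ≤ s ∧ Set.MapsTo f^[s] I I ∧
    ∀ i j, i < j → j < s → Disjoint (f^[i] '' I) (f^[j] '' I)

/-- `Orb_f(I) = I ∪ f(I) ∪ … ∪ f^{s-1}(I)`. -/
def arcOrbit {X : Type*} (f : X → X) (I : Set X) (s : ℕ) : Set X :=
  ⋃ i ∈ Finset.range s, f^[i] '' I

/-- `I` is an independence set for the pair `(U, V)` under `f`. -/
def IsIndepSetPair {X : Type*} (f : X → X) (U V : Set X) (I : Finset ℕ) : Prop :=
  ∀ J ⊆ I, J.Nonempty → ∀ s : ℕ → Bool,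
    (⋂ j ∈ J, f^[j] ⁻¹' (if s j then U else V)).Nonempty

/-- `(x, y)` is an IN-pair of `(X, f)`. -/
def INPair {X : Type*} [TopologicalSpace X] (f : X → X) (x y : X) : Prop :=
  ∀ U ∈ nhds x, ∀ V ∈ nhds y, ∀ m : ℕ, ∃ I : Finset ℕ, m ≤ I.card ∧ IsIndepSetPair f U V I

/-- The set `IN(X, f)` of IN-pairs of `(X, f)`. -/
def INPairs {X : Type*} [TopologicalSpace X] (f : X → X) : Set (X × X) :=
  { p | INPair f p.1 p.2 }

/-- `(x, y)` is an IN-pair of the restricted (sub)system `(Y, f|_Y)`, for `Y` invariant. -/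
def INPairOn {X : Type*} [TopologicalSpace X] (f : X → X) (Y : Set X) (x y : X) : Prop :=
  x ∈ Y ∧ y ∈ Y ∧ ∀ U ∈ nhds x, ∀ V ∈ nhds y, ∀ m : ℕ, ∃ I : Finset ℕ, m ≤ I.card ∧
    ∀ J ⊆ I, J.Nonempty → ∀ s : ℕ → Bool,
      (Y ∩ ⋂ j ∈ J, f^[j] ⁻¹' (if s j then U else V)).Nonempty

/-- `(x, y)` is a Li–Yorke pair for `f`. -/
def LiYorkePair {X : Type*} [MetricSpace X] (f : X → X) (x y : X) : Prop :=
  Filter.liminf (fun n : ℕ => dist (f^[n] x) (f^[n] y)) Filter.atTop = 0 ∧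
    0 < Filter.limsup (fun n : ℕ => dist (f^[n] x) (f^[n] y)) Filter.atTop

namespace TreeEnt

/-- metric segment -/
def seg {X : Type*} [MetricSpace X] (x y : X) : Set X := {z | dist x z + dist z y = dist x y}

/-- finite real trees -/
structure IsRT (X : Type*) [MetricSpace X] : Prop where
  conn : ∀ x y : X, IsPreconnected (seg x y)
  sub : ∀ (S : Set X), IsPreconnected S → ∀ x ∈ S, ∀ y ∈ S, seg x y ⊆ S
  fin : ∃ V : Finset X, ∀ p x : X, ∃ v ∈ V, x ∈ seg p v

section basics
variable {X : Type*} [MetricSpace X]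

lemma mem_seg {x y z : X} : z ∈ seg x y ↔ dist x z + dist z y = dist x y := Iff.rfl

lemma seg_symm (x y : X) : seg x y = seg y x := by
  ext z; simp only [mem_seg, dist_comm x z, dist_comm z y, dist_comm x y]
  constructor <;> intro h <;> linarith

lemma left_mem (x y : X) : x ∈ seg x y := by simp [mem_seg]
lemma right_mem (x y : X) : y ∈ seg x y := by simp [mem_seg]

lemma seg_closed (x y : X) : IsClosed (seg x y) :=
  isClosed_eq (by fun_prop) (by fun_prop)

lemma seg_self {x z : X} (h : z ∈ seg x x) : z = x := by
  rw [mem_seg, dist_self, dist_comm z x] at h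
  have := @dist_nonneg _ _ x z
  exact (dist_eq_zero.mp (by linarith)).symm

lemma seg_sub_left {x y z : X} (h : z ∈ seg x y) : seg x z ⊆ seg x y := by
  intro w hw
  rw [mem_seg] at *
  have h1 := dist_triangle w z y
  have h2 := dist_triangle x w y
  linarith

lemma seg_sub_right {x y z : X} (h : z ∈ seg x y) : seg z y ⊆ seg x y := by
  rw [seg_symm z y, seg_symm x y]; rw [seg_symm] at h; exact seg_sub_left h

/-- order `x w z y` -/
lemma seg_trans {x y z w : X} (h : z ∈ seg x y) (hw : w ∈ seg x z) : z ∈ seg w y := by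
  rw [mem_seg] at *
  have h1 := dist_triangle w z y
  have h2 := dist_triangle x w y
  linarith

lemma dist_le_of_mem {x y z : X} (h : z ∈ seg x y) : dist x z ≤ dist x y := by
  rw [mem_seg] at h; have := @dist_nonneg _ _ z y; linarith

variable (hX : IsRT X)
include hX

lemma IsRT.image {Y : Type*} [TopologicalSpace Y] {g : Y → X} {S : Set Y} (hS : IsPreconnected S)
    (hg : ContinuousOn g S) {x y : Y} (hx : x ∈ S) (hy : y ∈ S) : seg (g x) (g y) ⊆ g '' S :=
  hX.sub _ (hS.image g hg) _ (mem_image_of_mem g hx) _ (mem_image_of_mem g hy)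

lemma IsRT.image_seg {g : X → X} (hg : Continuous g) (x y : X) :
    seg (g x) (g y) ⊆ g '' seg x y :=
  hX.image (hX.conn x y) hg.continuousOn (left_mem _ _) (right_mem _ _)

lemma IsRT.exists_at {x y : X} {t : ℝ} (h0 : 0 ≤ t) (h1 : t ≤ dist x y) :
    ∃ z ∈ seg x y, dist x z = t := by
  have := (hX.conn x y).intermediate_value (left_mem x y) (right_mem x y)
    (f := fun z => dist x z) (by fun_prop)
  have h := this (show t ∈ Icc (dist x x) (dist x y) by simp [h0, h1])
  exact h

lemma IsRT.tri {x y z : X} (hz : z ∈ seg x y) : seg x y ⊆ seg x z ∪ seg z y := by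
  apply hX.sub
  · exact IsPreconnected.union z (right_mem _ _) (left_mem _ _) (hX.conn _ _) (hX.conn _ _)
  · exact Or.inl (left_mem _ _)
  · exact Or.inr (right_mem _ _)

/-- any three points -/
lemma IsRT.tri' (x y z : X) : seg x y ⊆ seg x z ∪ seg z y := by
  apply hX.sub
  · exact IsPreconnected.union z (right_mem _ _) (left_mem _ _) (hX.conn _ _) (hX.conn _ _)
  · exact Or.inl (left_mem _ _)
  · exact Or.inr (right_mem _ _)

lemma IsRT.mem_of_le {x y z z' : X} (hz : z ∈ seg x y) (hz' : z' ∈ seg x y)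
    (h : dist x z ≤ dist x z') : z ∈ seg x z' := by
  rcases hX.tri hz hz' with h1 | h1
  · rw [mem_seg] at h1
    have := @dist_nonneg _ _ z' z
    have h2 : z' = z := dist_eq_zero.mp (by linarith)
    rw [h2]; exact right_mem _ _
  · rw [mem_seg] at *; linarith

lemma IsRT.eq_of_dist {x y z z' : X} (hz : z ∈ seg x y) (hz' : z' ∈ seg x y)
    (h : dist x z = dist x z') : z = z' := by
  have h1 := hX.mem_of_le hz hz' h.le
  rw [mem_seg] at h1
  exact dist_eq_zero.mp (by linarith)

lemma IsRT.preconn_iff {S : Set X} : IsPreconnected S ↔ ∀ x ∈ S, ∀ y ∈ S, seg x y ⊆ S := by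
  constructor
  · intro h; exact hX.sub S h
  · intro h
    apply isPreconnected_of_forall_pair
    intro x hx y hy
    exact ⟨seg x y, h x hx y hy, left_mem _ _, right_mem _ _, hX.conn x y⟩

lemma IsRT.preconn_inter {S T : Set X} (hS : IsPreconnected S) (hT : IsPreconnected T) :
    IsPreconnected (S ∩ T) := by
  rw [hX.preconn_iff] at *
  intro x hx y hy
  exact subset_inter (hS x hx.1 y hy.1) (hT x hx.2 y hy.2)

/-- gate -/
lemma IsRT.gate [CompactSpace X] {Z : Set X} (hZ : IsClosed Z) (hc : IsPreconnected Z)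
    (hne : Z.Nonempty) (v : X) : ∃ a ∈ Z, ∀ x ∈ Z, a ∈ seg x v := by
  obtain ⟨x0, hx0⟩ := hne
  have hcomp : IsCompact (Z ∩ seg x0 v) := (hZ.inter (seg_closed _ _)).isCompact
  obtain ⟨a, ⟨haZ, has⟩, hmax⟩ := hcomp.exists_isMaxOn ⟨x0, hx0, left_mem _ _⟩
    (f := fun z => dist x0 z) (by fun_prop)
  refine ⟨a, haZ, fun x hx => ?_⟩
  have key : ∀ b ∈ seg a v, b ≠ a → b ∈ seg x v := by
    intro b hb hba
    have hb' : b ∈ seg x0 v := seg_sub_right has hb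
    have hbZ : b ∉ Z := by
      intro hbZ
      have h1 : dist x0 b ≤ dist x0 a := hmax ⟨hbZ, hb'⟩
      have h2 := hX.mem_of_le hb' has h1
      have h3 : a ∈ seg b v := seg_trans has h2
      rw [mem_seg] at hb h3
      rw [dist_comm b a] at h3
      have := dist_pos.mpr (Ne.symm hba)
      linarith
    rcases hX.tri' x0 v x hb' with h | h
    · exact absurd (hX.sub Z hc x0 hx0 x hx h) hbZ
    · exact h
  by_cases hav : a = v
  · rw [hav]; exact right_mem _ _
  -- a is a limit of such b
  have hcl : a ∈ closure (seg x v) := by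
    rw [Metric.mem_closure_iff]
    intro ε hε
    have hd := dist_pos.mpr hav
    obtain ⟨b, hb, hbd⟩ := hX.exists_at (x := a) (y := v) (t := min (ε/2) (dist a v))
      (by positivity) (min_le_right _ _)
    refine ⟨b, key b hb ?_, ?_⟩
    · rintro rfl
      rw [dist_self] at hbd
      have : 0 < min (ε/2) (dist b v) := by positivity
      linarith
    · rw [hbd]; exact lt_of_le_of_lt (min_le_left _ _) (by linarith)
  rwa [(seg_closed x v).closure_eq] at hcl

lemma IsRT.median [CompactSpace X] (p x z : X) : ∃ m, m ∈ seg p x ∧ m ∈ seg p z ∧ m ∈ seg x z := by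
  obtain ⟨a, ha, h⟩ := hX.gate (seg_closed p x) (hX.conn p x) ⟨p, left_mem _ _⟩ z
  exact ⟨a, ha, h p (left_mem _ _), h x (right_mem _ _)⟩

end basics

/-- subtrees -/
lemma IsRT.subtype {X : Type*} [MetricSpace X] [CompactSpace X] (hX : IsRT X) {T : Set X}
    (hT : IsClosed T) (hc : IsPreconnected T) : IsRT T := by
  have hseg : ∀ x y : T, Subtype.val '' (seg x y) = seg x.1 y.1 := by
    intro x y
    ext z
    constructor
    · rintro ⟨w, hw, rfl⟩; exact hw
    · intro hz
      have : z ∈ T := hX.sub T hc _ x.2 _ y.2 hz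
      exact ⟨⟨z, this⟩, hz, rfl⟩
  refine ⟨?_, ?_, ?_⟩
  · intro x y
    rw [← Topology.IsInducing.subtypeVal.isPreconnected_image, hseg]
    exact hX.conn _ _
  · intro S hS x hx y hy z hz
    have h1 := hX.sub _ (hS.image Subtype.val continuous_subtype_val.continuousOn) x.1
      (mem_image_of_mem _ hx) y.1 (mem_image_of_mem _ hy) (show z.1 ∈ seg x.1 y.1 from hz)
    obtain ⟨w, hw, hwz⟩ := h1
    rwa [← Subtype.ext hwz]
  · obtain ⟨V, hV⟩ := hX.fin
    by_cases hne : T.Nonempty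
    · choose a ha hg using fun v => hX.gate hT hc hne v
      classical
      refine ⟨V.image (fun v => ⟨a v, ha v⟩), fun p x => ?_⟩
      obtain ⟨v, hv, hx⟩ := hV p.1 x.1
      refine ⟨⟨a v, ha v⟩, Finset.mem_image_of_mem _ hv, ?_⟩
      have h1 := hg v x.1 x.2
      have h2 := hg v p.1 p.2
      show dist p.1 x.1 + dist x.1 (a v) = dist p.1 (a v)
      rw [mem_seg] at *
      linarith
    · refine ⟨∅, fun p => absurd ⟨p.1, p.2⟩ hne⟩

end TreeEnt

namespace TreeEnt

/-- chains of given length -/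
def Ch {X : Type*} [MetricSpace X] (f : X → X) (ε : ℝ) : ℕ → X → X → Prop
  | 0, x, y => x = y
  | (n+1), x, y => ∃ z, Ch f ε n x z ∧ dist (f z) y < ε

section chains
variable {X : Type*} [MetricSpace X]

lemma epsChain_iff {f : X → X} {ε : ℝ} {x y : X} :
    EpsChain f ε x y ↔ ∃ n, 1 ≤ n ∧ Ch f ε n x y := by
  constructor
  · rintro ⟨n, hn, c, h0, hc, h⟩
    refine ⟨n, hn, ?_⟩
    have : ∀ i ≤ n, Ch f ε i x (c i) := by
      intro i
      induction i with
      | zero => intro _; exact h0.symm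
      | succ i ih => intro hi; exact ⟨c i, ih (by omega), h i (by omega)⟩
    rw [← hc]; exact this n le_rfl
  · rintro ⟨n, hn, h⟩
    refine ⟨n, hn, ?_⟩
    clear hn
    induction n generalizing y with
    | zero => exact ⟨fun _ => x, rfl, h, by simp⟩
    | succ n ih =>
      obtain ⟨z, hz, hzy⟩ := h
      obtain ⟨c, h0, hc, h⟩ := ih hz
      refine ⟨fun i => if i ≤ n then c i else y, by simp [h0], by simp, ?_⟩
      intro i hi
      rcases Nat.lt_or_ge i n with h1 | h1
      · simp only [show i ≤ n by omega, if_true, show i + 1 ≤ n by omega]; exact h i h1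
      · have : i = n := by omega
        subst this
        simp [hc, hzy]

lemma Ch.add {f : X → X} {ε : ℝ} {m n : ℕ} {x y z : X} (h : Ch f ε m x y) (h' : Ch f ε n y z) :
    Ch f ε (m + n) x z := by
  induction n generalizing z with
  | zero => cases h'; exact h
  | succ n ih => obtain ⟨w, hw, hwz⟩ := h'; exact ⟨w, ih hw, hwz⟩

lemma Ch.split {f : X → X} {ε : ℝ} {m n : ℕ} {x z : X} (h : Ch f ε (m + n) x z) :
    ∃ y, Ch f ε m x y ∧ Ch f ε n y z := by
  induction n generalizing z with
  | zero => exact ⟨z, h, rfl⟩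
  | succ n ih =>
    obtain ⟨w, hw, hwz⟩ := h
    obtain ⟨y, h1, h2⟩ := ih hw
    exact ⟨y, h1, w, h2, hwz⟩

lemma Ch.mono {f : X → X} {ε ε' : ℝ} (he : ε ≤ ε') {n : ℕ} {x z : X} (h : Ch f ε n x z) :
    Ch f ε' n x z := by
  induction n generalizing z with
  | zero => exact h
  | succ n ih =>
    obtain ⟨w, hw, hwz⟩ := h
    exact ⟨w, ih hw, hwz.trans_le he⟩

lemma Ch.orbit {f : X → X} {ε : ℝ} (he : 0 < ε) (n : ℕ) (x : X) : Ch f ε n x (f^[n] x) := by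
  induction n with
  | zero => rfl
  | succ n ih => exact ⟨_, ih, by rw [iterate_succ_apply']; simpa⟩

lemma Ch.mem {f : X → X} {ε : ℝ} {S : Set X} (hS : ∀ x ∈ S, ∀ y, dist (f x) y < ε → y ∈ S)
    {n : ℕ} {x y : X} (h : Ch f ε n x y) (hx : x ∈ S) : y ∈ S := by
  induction n generalizing y with
  | zero => cases h; exact hx
  | succ n ih => obtain ⟨w, hw, hwz⟩ := h; exact hS w (ih hw) _ hwz

lemma shadow {f : X → X} (hf : UniformContinuous f) (k : ℕ) {ε : ℝ} (he : 0 < ε) :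
    ∃ δ > 0, ∀ x y, Ch f δ k x y → dist (f^[k] x) y < ε := by
  induction k generalizing ε with
  | zero => exact ⟨1, one_pos, fun x y h => by cases h; simpa⟩
  | succ k ih =>
    obtain ⟨δ1, h1, h2⟩ := Metric.uniformContinuous_iff.mp hf (ε / 2) (by linarith)
    obtain ⟨δ, hd, h3⟩ := ih h1
    refine ⟨min δ (ε / 2), by positivity, ?_⟩
    rintro x y ⟨z, hz, hzy⟩
    have h4 := h2 (h3 x z (hz.mono (min_le_left _ _)))
    rw [iterate_succ_apply']
    have := dist_triangle (f (f^[k] x)) (f z) y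
    have := min_le_right δ (ε / 2)
    linarith

lemma Ch.block {f : X → X} (hf : UniformContinuous f) (k : ℕ) {ε : ℝ} (he : 0 < ε) :
    ∃ δ > 0, ∀ q x y, Ch f δ (k * q) x y → Ch (f^[k]) ε q x y := by
  obtain ⟨δ, hd, h⟩ := shadow hf k he
  refine ⟨δ, hd, ?_⟩
  intro q
  induction q with
  | zero => intro x y h; exact h
  | succ q ih =>
    intro x y hc
    rw [Nat.mul_succ] at hc
    obtain ⟨z, h1, h2⟩ := hc.split
    exact ⟨z, ih _ _ h1, h _ _ h2⟩

/-- chains from a fixed point pass to powers -/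
lemma chain_pow_of_fixed {f : X → X} (hf : UniformContinuous f) {p x : X} (hp : f p = p) {k : ℕ}
    (hk : 1 ≤ k) (h : ∀ ε > 0, EpsChain f ε p x) : ∀ ε > 0, EpsChain (f^[k]) ε p x := by
  intro ε he
  obtain ⟨δ, hd, hb⟩ := Ch.block hf k he
  obtain ⟨n, hn, hc⟩ := epsChain_iff.mp (h δ hd)
  rw [epsChain_iff]
  have hpad : Ch f δ (k * n - n) p p := by
    have := Ch.orbit (f := f) hd (k * n - n) p
    rwa [iterate_fixed hp] at this
  have h2 := hpad.add hc
  rw [Nat.sub_add_cancel (Nat.le_mul_of_pos_left n hk)] at h2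
  exact ⟨n, hn, hb n _ _ h2⟩

lemma chain_pow_to_fixed {f : X → X} (hf : UniformContinuous f) {p x : X} (hp : f p = p) {k : ℕ}
    (hk : 1 ≤ k) (h : ∀ ε > 0, EpsChain f ε x p) : ∀ ε > 0, EpsChain (f^[k]) ε x p := by
  intro ε he
  obtain ⟨δ, hd, hb⟩ := Ch.block hf k he
  obtain ⟨n, hn, hc⟩ := epsChain_iff.mp (h δ hd)
  rw [epsChain_iff]
  have hpad : Ch f δ (k * n - n) p p := by
    have := Ch.orbit (f := f) hd (k * n - n) p
    rwa [iterate_fixed hp] at this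
  have h2 := hc.add hpad
  rw [Nat.add_sub_cancel' (Nat.le_mul_of_pos_left n hk)] at h2
  exact ⟨n, hn, hb n _ _ h2⟩

lemma cr_pow {f : X → X} (hf : UniformContinuous f) {x : X} {k : ℕ}
    (hk : 1 ≤ k) (h : x ∈ chainRecurrentSet f) : x ∈ chainRecurrentSet (f^[k]) := by
  intro ε he
  obtain ⟨δ, hd, hb⟩ := Ch.block hf k he
  obtain ⟨n, hn, hc⟩ := epsChain_iff.mp (h δ hd)
  rw [epsChain_iff]
  refine ⟨n, hn, hb n _ _ ?_⟩
  clear hk hb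
  induction k with
  | zero => simp [Ch]
  | succ k ih => rw [Nat.succ_mul]; exact ih.add hc

lemma EpsChain.trans' {f : X → X} {ε : ℝ} {x y z : X} (h : EpsChain f ε x y)
    (h' : EpsChain f ε y z) : EpsChain f ε x z := by
  rw [epsChain_iff] at *
  obtain ⟨n, hn, h⟩ := h
  obtain ⟨m, hm, h'⟩ := h'
  exact ⟨n + m, by omega, h.add h'⟩

lemma EpsChain.mem {f : X → X} {ε : ℝ} {S : Set X} (hS : ∀ x ∈ S, ∀ y, dist (f x) y < ε → y ∈ S)
    {x y : X} (h : EpsChain f ε x y) (hx : x ∈ S) : y ∈ S := by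
  obtain ⟨n, _, h⟩ := epsChain_iff.mp h
  exact h.mem hS hx

lemma EpsChain.mono' {f : X → X} {ε ε' : ℝ} (he : ε ≤ ε') {x y : X} (h : EpsChain f ε x y) :
    EpsChain f ε' x y := by
  rw [epsChain_iff] at *
  obtain ⟨n, hn, h⟩ := h
  exact ⟨n, hn, h.mono he⟩

end chains
end TreeEnt

namespace TreeEnt

/-- arc horseshoe -/
def AHS {X : Type*} [MetricSpace X] (g : X → X) : Prop :=
  ∃ n, 1 ≤ n ∧ ∃ a u x : X, u ∈ seg a x ∧ u ≠ a ∧ u ≠ x ∧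
    seg a x ⊆ g^[n] '' seg a u ∧ seg a x ⊆ g^[n] '' seg u x

section
variable {X : Type*} [MetricSpace X] (hX : IsRT X) {g : X → X} (hg : Continuous g)
include hX hg

lemma ahs_gate {n : ℕ} (hn : 1 ≤ n) {Z : Set X} {a u x : X} (hgate : ∀ z ∈ Z, a ∈ seg z x)
    (hu : u ∈ seg a x) (hua : u ≠ a) (hux : u ≠ x) (h1 : g^[n] u = x) (h2 : g^[n] a ∈ Z)
    (h3 : g^[n] x ∈ Z) : AHS g := by
  refine ⟨n, hn, a, u, x, hu, hua, hux, ?_, ?_⟩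
  · refine subset_trans ?_ (hX.image_seg (hg.iterate n) a u)
    rw [h1]
    exact seg_sub_right (hgate _ h2)
  · refine subset_trans ?_ (hX.image_seg (hg.iterate n) u x)
    rw [h1, seg_symm x]
    exact seg_sub_right (hgate _ h3)

variable [CompactSpace X]

lemma crossing {p s : X} (hch : ∀ x, ∀ ε > 0, EpsChain g ε p x) (hs : s ≠ p) :
    ∃ v, (s ∉ seg p v ∨ v = s) ∧ s ∈ seg p (g v) := by
  by_contra! hcon
  set B : Set X := {x | s ∉ seg p x} with hB
  have hBo : IsOpen B := by
    rw [← isClosed_compl_iff]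
    have : Bᶜ = {x | s ∈ seg p x} := by ext; simp [hB]
    rw [this]
    exact isClosed_eq (by fun_prop) (by fun_prop)
  have hcl : ∀ v ∈ closure B, s ∉ seg p v ∨ v = s := by
    intro v hv
    by_contra! h
    obtain ⟨y, hy, hyv⟩ := Metric.mem_closure_iff.mp hv (dist s v)
      (dist_pos.mpr (Ne.symm h.2))
    rcases hX.tri' p v y h.1 with h1 | h1
    · exact hy h1
    · rw [mem_seg] at h1
      have := @dist_nonneg _ _ y s
      rw [dist_comm v y] at hyv
      linarith
  obtain ⟨ε, he, hsub⟩ := (isClosed_closure (s := B)).isCompact.image hg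
    |>.exists_thickening_subset_open hBo (by
      rintro _ ⟨v, hv, rfl⟩
      exact hcon v (hcl v hv))
  have : s ∈ B := by
    refine TreeEnt.EpsChain.mem (S := B) ?_ (hch s ε he) ?_
    · intro x hx y hy
      apply hsub
      rw [Metric.mem_thickening_iff]
      exact ⟨g x, mem_image_of_mem _ (subset_closure hx), by rwa [dist_comm]⟩
    · intro h; exact hs (seg_self h)
  exact this (right_mem _ _)

omit hX in
lemma surj_of_chain {p : X} (hch : ∀ x, ∀ ε > 0, EpsChain g ε p x) : Surjective g := by
  intro y
  have hc : IsClosed (range g) := (isCompact_range hg).isClosed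
  have : y ∈ closure (range g) := by
    rw [Metric.mem_closure_iff]
    intro ε he
    obtain ⟨n, hn, h⟩ := epsChain_iff.mp (hch y ε he)
    obtain ⟨m, rfl⟩ : ∃ m, n = m + 1 := ⟨n - 1, by omega⟩
    obtain ⟨z, _, hz⟩ := h
    exact ⟨g z, mem_range_self z, by rwa [dist_comm]⟩
  rw [hc.closure_eq] at this
  exact this

omit hg in
lemma half_open_mem {p : X} {O : Set X} (hO : IsPreconnected O) (hp : p ∈ O) {s y : X}
    (hs : s ∈ closure O) (hy : y ∈ seg p s) (hys : y ≠ s) : y ∈ O := by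
  obtain ⟨o, ho, hso⟩ := Metric.mem_closure_iff.mp hs (dist y s) (dist_pos.mpr hys)
  rcases hX.tri' p s o hy with h | h
  · exact hX.sub O hO p hp o ho h
  · rw [mem_seg] at h
    rw [dist_comm] at hso
    have := @dist_nonneg _ _ o y
    linarith

omit hg in
lemma lemmaS {p : X} (hsurj : Surjective g) {O : Set X} (hO : IsPreconnected O) (hp : p ∈ O)
    (hinv : MapsTo g O O) (hback : ∀ x, g x ∈ closure O → x ∈ closure O) :
    (closure O \ O).Finite ∧ (∀ s ∈ closure O \ O, g s ∈ closure O \ O) ∧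
      ∃ k, 1 ≤ k ∧ ∀ s ∈ closure O \ O, g^[k] s = s := by
  have hfin : (closure O \ O).Finite := by
    obtain ⟨V, hV⟩ := hX.fin
    have : closure O \ O ⊆ ⋃ v ∈ V, (closure O \ O) ∩ seg p v := by
      intro s hs
      obtain ⟨v, hv, hsv⟩ := hV p s
      simp only [mem_iUnion]
      exact ⟨v, hv, hs, hsv⟩
    refine Set.Finite.subset (Set.Finite.biUnion V.finite_toSet ?_) this
    intro v _
    apply Set.Subsingleton.finite
    intro s hs s' hs'
    by_contra hne
    rcases le_total (dist p s) (dist p s') with h | h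
    · exact hs.1.2 (half_open_mem hX hO hp hs'.1.1 (hX.mem_of_le hs.2 hs'.2 h) hne)
    · exact hs'.1.2 (half_open_mem hX hO hp hs.1.1 (hX.mem_of_le hs'.2 hs.2 h) (Ne.symm hne))
  have hpre : ∀ s : ↥(closure O \ O), ∃ t : ↥(closure O \ O), g t = s := by
    rintro ⟨s, hs⟩
    obtain ⟨x, hx⟩ := hsurj s
    exact ⟨⟨x, hback x (hx ▸ hs.1), fun h => hs.2 (hx ▸ hinv h)⟩, hx⟩
  choose h hh using hpre
  have : Finite ↥(closure O \ O) := hfin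
  have hinj : Injective h := by
    intro a b hab
    apply Subtype.ext
    rw [← hh a, ← hh b, hab]
  have hbij := Finite.injective_iff_bijective.mp hinj
  let σ : Equiv.Perm ↥(closure O \ O) := (Equiv.ofBijective h hbij).symm
  have hσ : ∀ s, (σ s : X) = g s := by
    intro s
    obtain ⟨t, rfl⟩ := hbij.2 s
    have : σ (h t) = t := (Equiv.ofBijective h hbij).symm_apply_apply t
    rw [this, hh]
  refine ⟨hfin, fun s hs => ?_, orderOf σ, orderOf_pos σ, fun s hs => ?_⟩
  · rw [← hσ ⟨s, hs⟩]; exact (σ ⟨s, hs⟩).2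
  · have hit : ∀ n, ((σ ^ n) ⟨s, hs⟩ : X) = g^[n] s := by
      intro n
      induction n with
      | zero => rfl
      | succ n ih => rw [iterate_succ_apply', pow_succ', Equiv.Perm.mul_apply, hσ, ih]
    rw [← hit, pow_orderOf_eq_one]; rfl

theorem lemma2 {p : X} (hp : g p = p) (hch : ∀ x, ∀ ε > 0, EpsChain g ε p x) {x0 : X}
    (hx0 : x0 ≠ p) (hgx0 : g x0 = p) : AHS g := by
  classical
  have hsurj := surj_of_chain hg hch
  let ZZ : Set (Set X) := {Z | IsClosed Z ∧ IsPreconnected Z ∧ p ∈ Z ∧ MapsTo g Z Z ∧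
    ∃ x, x ∉ Z ∧ g x ∈ Z}
  have key : ∀ O : Set X, IsPreconnected O → p ∈ O → MapsTo g O O → closure O ∉ ZZ →
      ∀ x, g x ∈ closure O → x ∈ closure O := by
    intro O h1 h2 h3 h4 x hx
    by_contra hcon
    exact h4 ⟨isClosed_closure, h1.closure, subset_closure h2, h3.closure hg, x, hcon, hx⟩
  have hmulti : ∀ (Z : Set X), MapsTo g Z Z → ∀ n, MapsTo (g^[n]) Z Z :=
    fun Z hZ n => hZ.iterate n
  by_cases hN : ∃ C : Set (Set X), C ⊆ ZZ ∧ IsChain (· ⊆ ·) C ∧ C.Nonempty ∧ closure (⋃₀ C) ∉ ZZ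
  · obtain ⟨C, hC, hchain, hne, hnot⟩ := hN
    have hOc : IsPreconnected (⋃₀ C) :=
      isPreconnected_sUnion p C (fun Z hZ => (hC hZ).2.2.1) (fun Z hZ => (hC hZ).2.1)
    have hOp : p ∈ ⋃₀ C := by
      obtain ⟨Z, hZ⟩ := hne
      exact ⟨Z, hZ, (hC hZ).2.2.1⟩
    have hOi : MapsTo g (⋃₀ C) (⋃₀ C) := by
      rintro x ⟨Z, hZ, hx⟩
      exact ⟨Z, hZ, (hC hZ).2.2.2.1 hx⟩
    set O := ⋃₀ C with hOdef
    have hback := key O hOc hOp hOi hnot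
    obtain ⟨hfin, _, k, hk, hGS⟩ := lemmaS hX hsurj hOc hOp hOi hback
    set S := closure O \ O with hS
    have hbackk : ∀ n x, g^[n] x ∈ closure O → x ∈ closure O := by
      intro n
      induction n with
      | zero => intro x hx; exact hx
      | succ n ih =>
        intro x hx
        rw [iterate_succ_apply] at hx
        exact hback _ (ih _ hx)
    -- separation
    obtain ⟨η0, hη0, hsep⟩ : ∃ η0 > 0, ∀ a ∈ S, ∀ b ∈ S, dist a b < 2 * η0 → a = b := by
      rcases S.subsingleton_or_nontrivial with hsub | hnt
      · exact ⟨1, one_pos, fun a ha b hb _ => hsub ha hb⟩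
      · have hpos : 0 < S.infsep := (Set.Finite.infsep_pos_iff_nontrivial hfin).mpr hnt
        refine ⟨S.infsep / 2, by linarith, fun a ha b hb hab => ?_⟩
        by_contra hne
        have h2 := Set.infsep_le_dist_of_mem ha hb hne
        linarith
    obtain ⟨η1, hη1, hunif⟩ := Metric.uniformContinuous_iff.mp
      (CompactSpace.uniformContinuous_of_continuous (hg.iterate k)) η0 hη0
    set η := min η0 η1 with hη
    have hηpos : 0 < η := lt_min hη0 hη1
    obtain ⟨V, hV⟩ := hX.fin
    have hov : ∀ v : X, ∃ o ∈ O, ∀ x ∈ closure O, x ∈ seg p v → x ∈ seg p o ∨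
        ∃ l ∈ S, x ∈ seg p l ∧ dist x l < η := by
      intro v
      obtain ⟨e, he, hmax⟩ := ((isClosed_closure (s := O)).inter (seg_closed p v)).isCompact.exists_isMaxOn
        ⟨p, subset_closure hOp, left_mem _ _⟩ (f := fun x => dist p x) (by fun_prop)
      have hmem : ∀ x ∈ closure O, x ∈ seg p v → x ∈ seg p e :=
        fun x hx hxv => hX.mem_of_le hxv he.2 (hmax ⟨hx, hxv⟩)
      by_cases heO : e ∈ O
      · exact ⟨e, heO, fun x hx hxv => Or.inl (hmem x hx hxv)⟩
      · have hpe : 0 < dist p e := dist_pos.mpr (fun h => heO (h ▸ hOp))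
        obtain ⟨o, ho, hod⟩ := hX.exists_at (x := p) (y := e) (t := max 0 (dist p e - η / 2))
          (le_max_left _ _) (max_le hpe.le (by linarith))
        have hoe : dist p o < dist p e := by rw [hod]; exact max_lt hpe (by linarith)
        have hone : o ≠ e := by rintro rfl; exact lt_irrefl _ hoe
        refine ⟨o, half_open_mem hX hOc hOp he.1 ho hone, fun x hx hxv => ?_⟩
        have hxe := hmem x hx hxv
        rcases hX.tri ho hxe with h | h
        · exact Or.inl h
        · refine Or.inr ⟨e, ⟨he.1, heO⟩, hxe, ?_⟩
          rw [mem_seg] at h ho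
          have := @dist_nonneg _ _ o x
          have := le_max_right 0 (dist p e - η / 2)
          linarith
    choose o hoO hox using hov
    obtain ⟨Z, hZC, hZo⟩ : ∃ Z ∈ C, ∀ v ∈ V, o v ∈ Z := by
      clear hV
      induction V using Finset.induction_on with
      | empty => obtain ⟨Z, hZ⟩ := hne; exact ⟨Z, hZ, by simp⟩
      | insert v V _ ih =>
        obtain ⟨Z, hZ, h⟩ := ih
        obtain ⟨Z', hZ', h'⟩ := hoO v
        rcases hchain.total hZ hZ' with hh | hh
        · refine ⟨Z', hZ', fun w hw => ?_⟩
          rcases Finset.mem_insert.mp hw with rfl | hw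
          · exact h'
          · exact hh (h w hw)
        · refine ⟨Z, hZ, fun w hw => ?_⟩
          rcases Finset.mem_insert.mp hw with rfl | hw
          · exact hh h'
          · exact h w hw
    obtain ⟨hZcl, hZpc, hpZ, hZi, x, hxZ, hgxZ⟩ := hC hZC
    have hZO : Z ⊆ closure O := fun z hz => subset_closure ⟨Z, hZC, hz⟩
    have hnear : ∀ y ∈ closure O, y ∉ Z → ∃ l ∈ S, y ∈ seg p l ∧ dist y l < η := by
      intro y hy hyZ
      obtain ⟨v, hv, hyv⟩ := hV p y
      rcases hox v y hy hyv with h | h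
      · exact absurd (hX.sub Z hZpc p hpZ _ (hZo v hv) h) hyZ
      · exact h
    obtain ⟨l, hl, hxl, hxld⟩ := hnear x (hback x (hZO hgxZ)) hxZ
    have hxp : x ≠ p := fun h => hxZ (h ▸ hpZ)
    have hGx : g^[k] x ∈ Z := by
      obtain ⟨j, rfl⟩ : ∃ j, k = j + 1 := ⟨k - 1, by omega⟩
      rw [iterate_succ_apply]
      exact hmulti Z hZi j hgxZ
    obtain ⟨v, hv1, hv2⟩ := crossing hX (hg.iterate k) (p := p) (s := x)
      (fun y => chain_pow_of_fixed (CompactSpace.uniformContinuous_of_continuous hg) hp hk (hch y)) hxp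
    have hvx : x ∉ seg p v := by
      rcases hv1 with h | rfl
      · exact h
      · exact absurd (hX.sub Z hZpc p hpZ _ hGx hv2) hxZ
    have him := hX.image_seg (hg.iterate k) p v
    rw [iterate_fixed hp] at him
    obtain ⟨τ, hτv, hτx⟩ := him hv2
    have hτO : τ ∈ closure O := hbackk k τ (by rw [hτx]; exact hback x (hZO hgxZ))
    have hτZ : τ ∉ Z := fun h => hxZ (hτx ▸ hmulti Z hZi k h)
    obtain ⟨l', hl', hτl', hτd⟩ := hnear τ hτO hτZ
    have h1 : dist x l' < η0 := by
      have := hunif (hτd.trans_le (min_le_right _ _))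
      rwa [hτx, hGS l' hl'] at this
    have hll : l = l' := by
      apply hsep l hl l' hl'
      have := dist_triangle l x l'
      rw [dist_comm l x] at this
      have := min_le_left η0 η1
      linarith
    subst hll
    have hxτ : x ∉ seg p τ := fun h => hvx (seg_sub_left hτv h)
    have hτpx : τ ∈ seg p x := by
      rcases le_total (dist p τ) (dist p x) with h | h
      · exact hX.mem_of_le hτl' hxl h
      · exact absurd (hX.mem_of_le hxl hτl' h) hxτ
    obtain ⟨a, haZ, hgate⟩ := hX.gate hZcl hZpc ⟨p, hpZ⟩ x
    have hτax : τ ∈ seg a x := by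
      rcases hX.tri (hgate p hpZ) hτpx with h | h
      · exact absurd (hX.sub Z hZpc p hpZ a haZ h) hτZ
      · exact h
    exact ahs_gate hX hg hk hgate hτax (fun h => hτZ (h ▸ haZ))
      (fun h => hxτ (by rw [h]; exact right_mem _ _)) hτx (hmulti Z hZi k haZ) hGx
  · push Not at hN
    obtain ⟨Z, hZmax⟩ := zorn_subset ZZ (by
      intro c hc hch
      rcases c.eq_empty_or_nonempty with rfl | hne
      · exact ⟨{p}, ⟨isClosed_singleton, isPreconnected_singleton, rfl, by
          intro x hx; rw [mem_singleton_iff] at *; rw [hx, hp], x0, hx0, hgx0⟩, by simp⟩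
      · exact ⟨closure (⋃₀ c), hN c hc hch hne,
          fun s hs => (subset_sUnion_of_mem hs).trans subset_closure⟩)
    obtain ⟨hZcl, hZpc, hpZ, hZi, x, hxZ, hgxZ⟩ := hZmax.prop
    obtain ⟨a, haZ, hgate⟩ := hX.gate hZcl hZpc ⟨p, hpZ⟩ x
    have hax : 0 < dist a x := dist_pos.mpr (fun h => hxZ (h ▸ haZ))
    obtain ⟨t, ht, htd⟩ := hX.exists_at (x := a) (y := x) (t := dist a x / 2) (by linarith)
      (by linarith)
    have htZ : t ∉ Z := by
      intro h
      have h1 := hgate t h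
      rw [mem_seg] at h1 ht
      rw [dist_comm t a] at h1
      linarith
    set O : Set X := ⋃ n : ℕ, (Z ∪ g^[n] '' seg a t) with hO
    have hOc : IsPreconnected O := by
      apply isPreconnected_iUnion ⟨p, mem_iInter.mpr (fun n => Or.inl hpZ)⟩
      intro n
      exact IsPreconnected.union (g^[n] a) (hmulti Z hZi n haZ)
        (mem_image_of_mem _ (left_mem _ _)) hZpc
        ((hX.conn a t).image _ (hg.iterate n).continuousOn)
    have hZO : Z ⊆ O := fun z hz => mem_iUnion.mpr ⟨0, Or.inl hz⟩
    have hOi : MapsTo g O O := by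
      intro y hy
      obtain ⟨n, hy | ⟨w, hw, rfl⟩⟩ := mem_iUnion.mp hy
      · exact hZO (hZi hy)
      · exact mem_iUnion.mpr ⟨n + 1, Or.inr ⟨w, hw, iterate_succ_apply' _ _ _⟩⟩
    have htO : t ∈ O := mem_iUnion.mpr ⟨0, Or.inr ⟨t, right_mem _ _, rfl⟩⟩
    have hnot : closure O ∉ ZZ := fun h =>
      htZ (hZmax.le_of_ge h (hZO.trans subset_closure) (subset_closure htO))
    have hback := key O hOc (hZO hpZ) hOi hnot
    obtain ⟨_, hSS, _⟩ := lemmaS hX hsurj hOc (hZO hpZ) hOi hback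
    have hxcl := hback x (subset_closure (hZO hgxZ))
    have hxO : x ∈ O := by
      by_contra h
      exact (hSS x ⟨hxcl, h⟩).2 (hZO hgxZ)
    obtain ⟨n, h | ⟨u, hu, hux⟩⟩ := mem_iUnion.mp hxO
    · exact absurd h hxZ
    have huax : u ∈ seg a x := seg_sub_left ht hu
    have hdu := dist_le_of_mem hu
    have hune : u ≠ x := by rintro rfl; linarith
    have hn : 1 ≤ n := by
      by_contra h
      have : n = 0 := by omega
      subst this
      exact hune hux
    refine ahs_gate hX hg hn hgate huax ?_ hune hux (hmulti Z hZi n haZ) ?_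
    · rintro rfl
      exact hxZ (hux ▸ hmulti Z hZi n haZ)
    · obtain ⟨j, rfl⟩ : ∃ j, n = j + 1 := ⟨n - 1, by omega⟩
      rw [iterate_succ_apply]
      exact hmulti Z hZi j hgxZ
end
end TreeEnt

namespace TreeEnt

lemma AHS.of_iterate {X : Type*} [MetricSpace X] {g : X → X} {K : ℕ} (hK : 1 ≤ K)
    (h : AHS (g^[K])) : AHS g := by
  obtain ⟨n, hn, a, u, x, h⟩ := h
  rw [← iterate_mul] at h
  exact ⟨K * n, Nat.mul_pos hK hn, a, u, x, h⟩

lemma seg_val {X : Type*} [MetricSpace X] (hX : IsRT X) {T : Set X}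
    (hc : IsPreconnected T) (x y : T) : Subtype.val '' (seg x y) = seg x.1 y.1 := by
  ext z
  constructor
  · rintro ⟨w, hw, rfl⟩; exact hw
  · intro hz; exact ⟨⟨z, hX.sub T hc _ x.2 _ y.2 hz⟩, hz, rfl⟩

lemma AHS.of_subtype {X : Type*} [MetricSpace X] (hX : IsRT X) {g : X → X} {T : Set X}
    (hc : IsPreconnected T) (hi : MapsTo g T T) (h : AHS (hi.restrict g T T)) : AHS g := by
  obtain ⟨n, hn, a, u, x, hu, hua, hux, h1, h2⟩ := h
  have hsub : ∀ x y x' y' : T, seg x y ⊆ (hi.restrict g T T)^[n] '' seg x' y' →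
      seg x.1 y.1 ⊆ g^[n] '' seg x'.1 y'.1 := by
    intro x y x' y' h z hz
    rw [← seg_val hX hc] at hz
    obtain ⟨w, hw, rfl⟩ := hz
    obtain ⟨v, hv, rfl⟩ := h hw
    refine ⟨v.1, ?_, ?_⟩
    · rw [← seg_val hX hc]; exact ⟨v, hv, rfl⟩
    · rw [hi.iterate_restrict]; rfl
  exact ⟨n, hn, a, u, x, hu, fun h => hua (Subtype.ext h), fun h => hux (Subtype.ext h),
    hsub _ _ _ _ h1, hsub _ _ _ _ h2⟩

section
variable {X : Type*} [MetricSpace X]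

lemma Ch.perturb_end {f : X → X} {ε : ℝ} {n : ℕ} {x y z : X} (h : Ch f (ε / 2) (n + 1) x y)
    (hz : dist y z < ε / 2) : Ch f ε (n + 1) x z := by
  obtain ⟨w, hw, hwy⟩ := h
  have he : 0 < ε / 2 := dist_nonneg.trans_lt hz
  refine ⟨w, hw.mono (by linarith), ?_⟩
  have := dist_triangle (f w) y z
  linarith

lemma Ch.perturb_start {f : X → X} {ε : ℝ} {n : ℕ} {x x' y : X} (h : Ch f (ε / 2) (n + 1) x y)
    (hx : dist (f x') (f x) < ε / 2) : Ch f ε (n + 1) x' y := by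
  rw [add_comm] at h ⊢
  obtain ⟨w, ⟨x1, hx1, hw⟩, hwy⟩ := h.split
  cases hx1
  have he : 0 < ε / 2 := dist_nonneg.trans_lt hx
  refine Ch.add (m := 1) (y := w) ⟨x', rfl, ?_⟩ (hwy.mono (by linarith))
  have := dist_triangle (f x') (f x) w
  linarith

/-- chain-reachable set -/
def QQ (g : X → X) (p : X) : Set X := {x | ∀ ε > 0, ∃ n, Ch g ε (n + 1) p x}

variable {g : X → X} {p : X}

lemma QQ.closed : IsClosed (QQ g p) := by
  rw [← closure_subset_iff_isClosed]
  intro x hx ε he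
  obtain ⟨y, hy, hxy⟩ := Metric.mem_closure_iff.mp hx (ε / 2) (by linarith)
  obtain ⟨n, hn⟩ := hy (ε / 2) (by linarith)
  exact ⟨n, hn.perturb_end (by rwa [dist_comm])⟩

lemma QQ.inv : MapsTo g (QQ g p) (QQ g p) := by
  intro x hx ε he
  obtain ⟨n, hn⟩ := hx ε he
  exact ⟨n + 1, x, hn, by simpa⟩

lemma QQ.self (hp : g p = p) : p ∈ QQ g p := fun ε he => ⟨0, p, rfl, by simpa [hp]⟩

lemma QQ.lim (hp : g p = p) {w : X} (h : ∀ δ > 0, ∃ y, dist y p < δ ∧ ∃ j, dist (g^[j] y) w < δ) :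
    w ∈ QQ g p := by
  intro ε he
  obtain ⟨y, hy, j, hj⟩ := h (ε / 2) (by linarith)
  refine ⟨j, ?_⟩
  have h1 : Ch g (ε / 2) 1 p y := ⟨p, rfl, by rwa [hp, dist_comm]⟩
  have := h1.add (Ch.orbit (f := g) (half_pos he) j y)
  rw [add_comm] at this
  exact this.perturb_end hj

lemma limP (hg : UniformContinuous g) {w : X}
    (h : ∀ δ > 0, ∃ y ∈ chainRecurrentSet g, dist y p < δ ∧ ∃ j, dist (g^[j] y) w < δ) :
    ∀ ε > 0, EpsChain g ε w p := by
  intro ε he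
  obtain ⟨δ1, hδ1, hu⟩ := Metric.uniformContinuous_iff.mp hg (ε / 2 / 2) (by linarith)
  obtain ⟨y, hy, hyp, j, hj⟩ := h (min (δ1 / 2) (ε / 2)) (by positivity)
  obtain ⟨δ2, hδ2, hsh⟩ := shadow hg j (half_pos hδ1)
  obtain ⟨n, hn, hc⟩ := epsChain_iff.mp (hy (min δ2 (ε / 2 / 2)) (by positivity))
  have hmul : ∀ q, Ch g (min δ2 (ε / 2 / 2)) (q * n) y y := by
    intro q
    induction q with
    | zero => simp [Ch]
    | succ k ih => rw [Nat.succ_mul]; exact ih.add hc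
  have h1 := hmul (j + 1)
  obtain ⟨m, hm⟩ : ∃ m, (j + 1) * n = j + (m + 1) := by
    refine ⟨(j + 1) * n - (j + 1), ?_⟩
    have : j + 1 ≤ (j + 1) * n := Nat.le_mul_of_pos_right _ hn
    omega
  rw [hm] at h1
  obtain ⟨v, hv1, hv2⟩ := h1.split
  have hv3 := hsh y v (hv1.mono (min_le_left _ _))
  have hwv : dist w v < δ1 := by
    have := dist_triangle w (g^[j] y) v
    rw [dist_comm w (g^[j] y)] at this
    have := min_le_left (δ1 / 2) (ε / 2)
    linarith
  have h3 := (hv2.mono (min_le_right _ _)).perturb_start (hu hwv)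
  have h4 := h3.perturb_end (hyp.trans_le (min_le_right _ _))
  exact epsChain_iff.mpr ⟨m + 1, by omega, h4⟩

lemma QQ.seg_sub (hX : IsRT X) (hg : Continuous g) (hp : g p = p) {x : X} (hx : x ∈ QQ g p) :
    seg p x ⊆ QQ g p := by
  have key : ∀ ε > 0, ∀ n x, Ch g ε n p x → ∀ y ∈ seg p x, ∃ m, Ch g ε (m + 1) p y := by
    intro ε he n
    induction n with
    | zero =>
      intro x hx y hy
      cases hx
      rw [seg_self hy]
      exact ⟨0, p, rfl, by simpa [hp]⟩
    | succ n ih =>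
      rintro x ⟨z, hz, hzx⟩ y hy
      rcases hX.tri' p x (g z) hy with h | h
      · have := hX.image_seg hg p z
        rw [hp] at this
        obtain ⟨w, hw, rfl⟩ := this h
        obtain ⟨m, hm⟩ := ih z hz w hw
        exact ⟨m + 1, w, hm, by simpa⟩
      · exact ⟨n, z, hz, (dist_le_of_mem h).trans_lt hzx⟩
  intro y hy ε he
  obtain ⟨n, hn⟩ := hx ε he
  exact key ε he _ _ hn y hy

lemma QQ.preconn (hX : IsRT X) (hg : Continuous g) (hp : g p = p) : IsPreconnected (QQ g p) :=
  isPreconnected_of_forall p fun x hx => ⟨seg p x, QQ.seg_sub hX hg hp hx, left_mem _ _,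
    right_mem _ _, hX.conn _ _⟩

lemma QQ.near [CompactSpace X] (hp : g p = p) {η : ℝ} (hη : 0 < η) :
    ∃ ε > 0, ∀ n w, Ch g ε n p w → ∃ t ∈ QQ g p, dist w t < η := by
  by_contra! hcon
  choose n w hw hfar using fun m : ℕ => hcon (1 / ((m : ℝ) + 1)) (by positivity)
  obtain ⟨w0, _, φ, hφ, hlim⟩ := isCompact_univ.tendsto_subseq (x := w) (fun _ => mem_univ _)
  have hw0 : w0 ∈ QQ g p := by
    intro ε he
    have h1 : ∀ᶠ m in atTop, dist (w (φ m)) w0 < ε / 2 :=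
      (Metric.tendsto_nhds.mp hlim) _ (half_pos he)
    have h2 : ∀ᶠ m : ℕ in atTop, 1 / ((φ m : ℝ) + 1) < ε / 2 :=
      (tendsto_one_div_add_atTop_nhds_zero_nat.comp hφ.tendsto_atTop).eventually
        (gt_mem_nhds (half_pos he))
    obtain ⟨m, hm1, hm2⟩ := (h1.and h2).exists
    have h3 := (hw (φ m)).mono hm2.le
    rcases hn : n (φ m) with _ | k
    · rw [hn] at h3
      have h3 : p = w (φ m) := h3
      have := hfar (φ m) p (QQ.self hp)
      rw [← h3, dist_self] at this
      linarith
    · rw [hn] at h3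
      exact ⟨k, h3.perturb_end hm1⟩
  obtain ⟨m, hm⟩ := ((Metric.tendsto_nhds.mp hlim) _ hη).exists
  exact absurd hm (not_lt.mpr (hfar (φ m) w0 hw0))

/-- chains inside `QQ` -/
lemma QQ.chain [CompactSpace X] (hg : Continuous g) (hp : g p = p) (x y : QQ g p)
    (h : ∀ ε > 0, EpsChain g ε x.1 y.1) :
    ∀ ε > 0, EpsChain ((QQ.inv (g := g) (p := p)).restrict g _ _) ε x y := by
  intro ε he
  obtain ⟨δ1, hδ1, hu⟩ := Metric.uniformContinuous_iff.mp
    (CompactSpace.uniformContinuous_of_continuous hg) (ε / 3) (by linarith)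
  obtain ⟨ε1, he1, hnear⟩ := QQ.near (g := g) hp (η := min δ1 (ε / 3)) (by positivity)
  set ε2 := min ε1 (ε / 3) with hε2
  have hε2p : 0 < ε2 := by positivity
  have hstep : ∀ z t y : X, dist z t < min δ1 (ε / 3) → dist (g z) y < ε2 →
      dist (g t) y < ε / 3 + ε / 3 := by
    intro z t y h1 h2
    have h3 := hu (h1.trans_le (min_le_left _ _))
    rw [dist_comm] at h3
    have := dist_triangle (g t) (g z) y
    have := min_le_right ε1 (ε / 3)
    linarith
  have key : ∀ n w, Ch g ε2 n x.1 w → ∃ t : QQ g p, dist w t < min δ1 (ε / 3) ∧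
      Ch ((QQ.inv (g := g) (p := p)).restrict g _ _) ε n x t := by
    intro n
    induction n with
    | zero =>
      intro w hw
      cases hw
      refine ⟨x, by rw [dist_self]; positivity, rfl⟩
    | succ n ih =>
      intro w hw
      obtain ⟨k, hk⟩ := x.2 ε2 hε2p
      obtain ⟨t, ht, htd⟩ := hnear _ w ((hk.add hw).mono (min_le_left _ _))
      obtain ⟨z, hz, hzw⟩ := hw
      obtain ⟨t', htd', hch⟩ := ih z hz
      refine ⟨⟨t, ht⟩, htd, t', hch, ?_⟩
      show dist (g t') t < ε
      have h1 := hstep _ _ _ htd' hzw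
      have := dist_triangle (g t') w t
      have := min_le_right δ1 (ε / 3)
      linarith
  obtain ⟨n, hn, hc⟩ := epsChain_iff.mp (h ε2 hε2p)
  obtain ⟨m, rfl⟩ : ∃ m, n = m + 1 := ⟨n - 1, by omega⟩
  obtain ⟨z, hz, hzw⟩ := hc
  obtain ⟨t', htd', hch⟩ := key m z hz
  refine epsChain_iff.mpr ⟨m + 1, hn, t', hch, ?_⟩
  show dist (g t') y < ε
  have h1 := hstep _ _ _ htd' hzw
  linarith

lemma lemma2T [CompactSpace X] (hX : IsRT X) (hg : Continuous g) (hp : g p = p)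
    (hno : ¬ AHS g) {x : X} (hx : x ∈ QQ g p) (hgx : g x = p) : x = p := by
  by_contra hne
  apply hno
  have hpc := QQ.preconn hX hg hp
  apply AHS.of_subtype hX hpc QQ.inv
  have : CompactSpace (QQ g p) := isCompact_iff_compactSpace.mp QQ.closed.isCompact
  refine lemma2 (hX.subtype QQ.closed hpc) (hg.restrict _) (p := ⟨p, QQ.self hp⟩)
    (x0 := ⟨x, hx⟩) (Subtype.ext hp) ?_ (fun h => hne (congrArg Subtype.val h)) (Subtype.ext hgx)
  intro y
  apply QQ.chain hg hp ⟨p, QQ.self hp⟩ y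
  intro ε he
  obtain ⟨n, hn⟩ := y.2 ε he
  exact epsChain_iff.mpr ⟨n + 1, by omega, hn⟩

lemma lemma2T' [CompactSpace X] (hX : IsRT X) (hg : Continuous g) (hp : g p = p)
    (hno : ¬ AHS g) (n : ℕ) {x : X} (hx : x ∈ QQ g p) (hgx : g^[n] x = p) : x = p := by
  induction n generalizing x with
  | zero => exact hgx
  | succ n ih =>
    rw [iterate_succ_apply] at hgx
    exact lemma2T hX hg hp hno hx (ih (QQ.inv hx) hgx)

end
end TreeEnt

namespace TreeEnt
section
variable {X : Type*} [MetricSpace X] (hX : IsRT X)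

lemma br_symm {p x y : X} (h : p ∉ seg x y) : p ∉ seg y x := by rwa [seg_symm]

lemma br_refl {p x : X} (h : x ≠ p) : p ∉ seg x x := fun hh => h (seg_self hh).symm

lemma br_open (p y : X) : IsOpen {x | p ∉ seg x y} := by
  rw [← isClosed_compl_iff]
  have : {x | p ∉ seg x y}ᶜ = {x | p ∈ seg x y} := by ext; simp
  rw [this]
  exact isClosed_eq (by fun_prop) (by fun_prop)

lemma br_of_mem {p x v : X} (h : x ∈ seg p v) (hx : x ≠ p) : p ∉ seg x v := by
  intro h2
  rw [mem_seg] at *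
  rw [dist_comm x p] at h2
  exact hx (dist_eq_zero.mp (by rw [dist_comm]; linarith))

lemma br_ne {p x z : X} (h : p ∉ seg x z) : x ≠ p := by
  rintro rfl; exact h (left_mem _ _)

include hX

lemma br_trans {p x y z : X} (h : p ∉ seg x y) (h' : p ∉ seg y z) : p ∉ seg x z :=
  fun hh => (hX.tri' x z y hh).elim h h'

lemma no_branch [CompactSpace X] {p z : X} (hz : z ≠ p) : ∃ w ∈ seg p z, w ≠ p ∧
    ∀ x, p ∉ seg x z → x ∈ seg p w ∨ w ∈ seg p x := by
  classical
  obtain ⟨V, hV⟩ := hX.fin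
  choose m hm1 hm2 hm3 using fun v => hX.median p z v
  have hzp : 0 < dist p z := dist_pos.mpr (Ne.symm hz)
  obtain ⟨r, hr, hrz, hrm⟩ : ∃ r > 0, r ≤ dist p z ∧ ∀ v ∈ V, m v ≠ p → r ≤ dist p (m v) := by
    clear hV
    induction V using Finset.induction_on with
    | empty => exact ⟨_, hzp, le_rfl, by simp⟩
    | insert v V _ ih =>
      obtain ⟨r, hr, hrz, h⟩ := ih
      by_cases hv : m v = p
      · refine ⟨r, hr, hrz, fun u hu hup => ?_⟩
        rcases Finset.mem_insert.mp hu with rfl | hu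
        · exact absurd hv hup
        · exact h u hu hup
      · refine ⟨min r (dist p (m v)), lt_min hr (dist_pos.mpr (Ne.symm hv)),
          (min_le_left _ _).trans hrz, fun u hu hup => ?_⟩
        rcases Finset.mem_insert.mp hu with rfl | hu
        · exact min_le_right _ _
        · exact (min_le_left _ _).trans (h u hu hup)
  obtain ⟨w, hw, hwd⟩ := hX.exists_at hr.le hrz
  refine ⟨w, hw, fun h => ?_, fun x hx => ?_⟩
  · rw [h, dist_self] at hwd; linarith
  · obtain ⟨v, hv, hxv⟩ := hV p x
    have h1 := br_of_mem hxv (br_ne hx)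
    have hmv : m v ≠ p := by
      intro h
      have := hm3 v
      rw [h] at this
      exact (br_trans hX (br_symm hx) h1) this
    have h2 : w ∈ seg p v := seg_sub_left (hm2 v)
      (hX.mem_of_le hw (hm1 v) (by rw [hwd]; exact hrm v hv hmv))
    rcases le_total (dist p x) (dist p w) with h | h
    · exact Or.inl (hX.mem_of_le hxv h2 h)
    · exact Or.inr (hX.mem_of_le h2 hxv h)

theorem local_arg [CompactSpace X] {G : X → X} (hG : Continuous G) {p z w : X} {T : Set X}
    (hTc : IsClosed T) (hTz : seg p z ⊆ T)
    (hC : ∀ x ∈ T, p ∉ seg x z → p ∉ seg (G x) z)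
    (h0 : ∀ x ∈ T, G x = p → x = p) (hp : G p = p)
    (hw : w ∈ seg p z) (hwp : w ≠ p) (nb : ∀ x, p ∉ seg x z → x ∈ seg p w ∨ w ∈ seg p x)
    (hD : ∀ s > 0, s ≤ dist p z → ∃ x ∈ T, p ∉ seg x z ∧ s ≤ dist p x ∧ dist p (G x) ≤ s)
    (hU : ∀ s > 0, s < dist p w → ∃ u ∈ seg p w, dist p u ≤ s ∧ s < dist p (G u)) : AHS G := by
  have hNw : 0 < dist p w := dist_pos.mpr (Ne.symm hwp)
  have hwz := dist_le_of_mem hw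
  have hzp : z ≠ p := by rintro rfl; rw [dist_self] at hwz; linarith
  -- points near p
  have nb' : ∀ x, p ∉ seg x z → dist p x ≤ dist p w → x ∈ seg p w := by
    intro x hx hd
    rcases nb x hx with h | h
    · exact h
    · rw [mem_seg] at h
      have : w = x := dist_eq_zero.mp (by have := @dist_nonneg _ _ w x; linarith)
      rw [this]; exact right_mem _ _
  have hsegT : ∀ u ∈ seg p w, u ∈ T := fun u hu => hTz (seg_sub_left hw hu)
  have hsegz : ∀ u ∈ seg p w, u ≠ p → p ∉ seg u z := fun u hu hup =>
    br_of_mem (seg_sub_left hw hu) hup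
  let K : ℝ → Set X := fun s => {x | x ∈ T ∧ p ∉ seg x z ∧ s ≤ dist p x}
  have hKc : ∀ s > 0, IsCompact (K s) := by
    intro s hs
    apply IsClosed.isCompact
    rw [← closure_subset_iff_isClosed]
    intro x hx
    have h1 : x ∈ T := by
      have : closure (K s) ⊆ T := closure_minimal (fun y hy => hy.1) hTc
      exact this hx
    have h2 : s ≤ dist p x := by
      have : closure (K s) ⊆ {x | s ≤ dist p x} :=
        closure_minimal (fun y hy => hy.2.2) (isClosed_le (by fun_prop) (by fun_prop))
      exact this hx
    have hxp : x ≠ p := by rintro rfl; rw [dist_self] at h2; linarith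
    obtain ⟨y, hy, hyK⟩ := mem_closure_iff.mp hx _ (br_open p x) (br_refl hxp)
    exact ⟨h1, br_trans hX (br_symm hy) hyK.2.1, h2⟩
  have hmin : ∀ s > 0, (K s).Nonempty → ∃ x ∈ K s, ∀ y ∈ K s, dist p (G x) ≤ dist p (G y) := by
    intro s hs hne
    obtain ⟨x, hx, h⟩ := (hKc s hs).exists_isMinOn hne (f := fun x => dist p (G x)) (by fun_prop)
    exact ⟨x, hx, fun y hy => h hy⟩
  -- Lemma L
  have hL : ∀ u ∈ seg p w, u ≠ p → dist p u < dist p (G u) →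
      ∃ x ∈ K (dist p u), dist p (G x) < dist p u := by
    intro u hu hup hlt
    by_contra! hcon
    have hs : 0 < dist p u := dist_pos.mpr (Ne.symm hup)
    obtain ⟨δ, hδ, hball⟩ := Metric.isOpen_iff.mp
      (isOpen_lt (continuous_const (y := dist p u)) (show Continuous fun x => dist p (G x) by fun_prop)) u hlt
    set s' := max (dist p u / 2) (dist p u - δ / 2) with hs'
    have h1 : 0 < s' := lt_max_of_lt_left (by linarith)
    have h2 : s' < dist p u := max_lt (by linarith) (by linarith)
    obtain ⟨x, hxT, hxz, hxs, hxG⟩ := hD s' h1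
      (h2.le.trans ((dist_le_of_mem hu).trans hwz))
    rcases le_or_gt (dist p u) (dist p x) with h | h
    · have := hcon x ⟨hxT, hxz, h⟩
      linarith
    · have hxw : x ∈ seg p w := nb' x hxz (h.le.trans (dist_le_of_mem hu))
      have h3 := hX.mem_of_le hxw hu h.le
      rw [mem_seg] at h3
      have h4 : dist x u < δ := by
        have := le_max_right (dist p u / 2) (dist p u - δ / 2)
        linarith
      have := hball (Metric.mem_ball.mpr h4)
      simp only [mem_setOf_eq] at this
      linarith
  -- (4)
  obtain ⟨δ0, hδ0, h4⟩ : ∃ δ0 > 0, ∀ x ∈ T, p ∉ seg x z → dist p (G x) < δ0 →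
      dist p x < dist p w := by
    obtain ⟨x, hx, hxm⟩ := hmin (dist p w) hNw ⟨w, hsegT w (right_mem _ _),
      hsegz w (right_mem _ _) hwp, le_rfl⟩
    refine ⟨dist p (G x), dist_pos.mpr fun h => br_ne hx.2.1 (h0 x hx.1 h.symm), ?_⟩
    intro y hy hyz hlt
    by_contra! hcon
    exact absurd hlt (not_lt.mpr (hxm y ⟨hy, hyz, hcon⟩))
  obtain ⟨u, hu, hus, hGu⟩ := hU (min δ0 (dist p w) / 2) (by positivity)
    (by have := min_le_right δ0 (dist p w); linarith)
  have hup : u ≠ p := by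
    rintro rfl
    rw [hp, dist_self] at hGu
    have : 0 < min δ0 (dist u w) := lt_min hδ0 hNw
    linarith
  have hspos : 0 < dist p u := dist_pos.mpr (Ne.symm hup)
  have hsδ : dist p u < δ0 := by
    have := min_le_left δ0 (dist p w)
    linarith
  obtain ⟨x, hxK, hxmin⟩ := hmin (dist p u) hspos ⟨u, hsegT u hu, hsegz u hu hup, le_rfl⟩
  have hxs : dist p (G x) < dist p u := by
    obtain ⟨y, hy, hy2⟩ := hL u hu hup (by linarith)
    exact (hxmin y hy).trans_lt hy2
  have hxw := h4 x hxK.1 hxK.2.1 (hxs.trans hsδ)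
  have hxsw := nb' x hxK.2.1 hxw.le
  obtain ⟨u1, hu1, hu1x, hGu1⟩ := hU (dist p x) (hspos.trans_le hxK.2.2) hxw
  have hu1p : u1 ≠ p := by
    rintro rfl
    rw [hp, dist_self] at hGu1
    have := @dist_nonneg _ _ u1 x
    linarith
  have hτpos : 0 < dist p u1 := dist_pos.mpr (Ne.symm hu1p)
  have hu1x' : dist p u1 < dist p x := by
    refine lt_of_le_of_ne hu1x fun h => ?_
    have := hX.eq_of_dist hu1 hxsw h
    rw [this] at hGu1
    have := hxK.2.2
    linarith
  -- choose x1
  have hx1 : ∃ x1 ∈ K (dist p u1), (∀ y ∈ K (dist p u1), dist p (G x1) ≤ dist p (G y)) ∧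
      dist p x1 ≤ dist p x := by
    by_cases hx : ∀ y ∈ K (dist p u1), dist p (G x) ≤ dist p (G y)
    · exact ⟨x, ⟨hxK.1, hxK.2.1, hu1x⟩, hx, le_rfl⟩
    · push Not at hx
      obtain ⟨y, hy, hyx⟩ := hx
      obtain ⟨x1, hx1, hm⟩ := hmin (dist p u1) hτpos ⟨y, hy⟩
      refine ⟨x1, hx1, hm, ?_⟩
      by_contra! hcon
      have := hxmin x1 ⟨hx1.1, hx1.2.1, hxK.2.2.trans hcon.le⟩
      have := hm y hy
      linarith
  obtain ⟨x1, hx1K, hx1min, hx1x⟩ := hx1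
  have hx1G : dist p (G x1) < dist p u1 := by
    obtain ⟨y, hy, hy2⟩ := hL u1 hu1 hu1p (by linarith)
    exact (hx1min y hy).trans_lt hy2
  have hx1w : x1 ∈ seg p w := nb' x1 hx1K.2.1 (by linarith)
  have hu1x1 : dist p u1 < dist p x1 := by
    refine lt_of_le_of_ne hx1K.2.2 fun h => ?_
    have := hX.eq_of_dist hu1 hx1w h
    rw [this] at hGu1
    rw [this] at hx1G
    linarith
  have hGx1z := hC x1 hx1K.1 hx1K.2.1
  have hGx1w : G x1 ∈ seg p w := nb' _ hGx1z (by linarith)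
  -- find a
  have ha : ∃ a ∈ seg p w, dist p (G x1) ≤ dist p a ∧ dist p a < dist p u1 ∧
      dist p (G a) ≤ dist p a ∧ a ≠ p := by
    by_cases hup : dist p (G x1) < dist p (G (G x1))
    · obtain ⟨x2, hx2, hx2G⟩ := hL (G x1) hGx1w (br_ne hGx1z) hup
      rcases le_or_gt (dist p u1) (dist p x2) with h | h
      · have := hx1min x2 ⟨hx2.1, hx2.2.1, h⟩
        linarith
      · exact ⟨x2, nb' x2 hx2.2.1 (by linarith), hx2.2.2, h, hx2G.le.trans hx2.2.2,
          br_ne hx2.2.1⟩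
    · exact ⟨G x1, hGx1w, le_rfl, hx1G, not_lt.mp hup, br_ne hGx1z⟩
  obtain ⟨a, haw, ha1, ha2, ha3, hap⟩ := ha
  have hax1 : a ∈ seg p x1 := hX.mem_of_le haw hx1w (by linarith)
  have hu1ax : u1 ∈ seg a x1 := by
    rcases hX.tri hax1 (hX.mem_of_le hu1 hx1w hu1x1.le) with h | h
    · have := dist_le_of_mem h
      linarith
    · exact h
  have hGu1z := hC u1 (hsegT u1 hu1) (hsegz u1 hu1 hu1p)
  have hx1Gu : x1 ∈ seg p (G u1) := by
    rcases nb _ hGu1z with h | h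
    · exact hX.mem_of_le hx1w h (by linarith)
    · exact seg_sub_left h hx1w
  have cover : ∀ b ∈ seg p w, dist p b ≤ dist p a → seg a x1 ⊆ seg b (G u1) := by
    intro b hb hba
    have h1 := hX.mem_of_le hb haw hba
    have h2 : a ∈ seg b (G u1) := seg_trans (seg_sub_left hx1Gu hax1) h1
    have h3 : x1 ∈ seg a (G u1) := seg_trans hx1Gu hax1
    exact (seg_sub_left h3).trans (seg_sub_right h2)
  refine ⟨1, le_rfl, a, u1, x1, hu1ax, ?_, ?_, ?_, ?_⟩
  · rintro rfl; linarith
  · rintro rfl; linarith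
  · refine (cover (G a) (nb' _ (hC a (hsegT a haw) (hsegz a haw hap)) (by linarith)) ha3).trans ?_
    exact hX.image_seg hG a u1
  · refine (cover (G x1) hGx1w ha1).trans ?_
    rw [seg_symm (G x1)]
    exact hX.image_seg hG u1 x1

end
end TreeEnt

namespace TreeEnt

lemma exists_idem_iterate {Q : Type*} [Finite Q] (σ : Q → Q) : ∃ K, 1 ≤ K ∧ σ^[K + K] = σ^[K] := by
  obtain ⟨i, j, hne, hij⟩ := Finite.exists_ne_map_eq_of_infinite (fun n : ℕ => σ^[n])
  wlog h : i < j generalizing i j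
  · exact this j i (Ne.symm hne) hij.symm (by omega)
  obtain ⟨d, rfl⟩ : ∃ d, j = i + d := ⟨j - i, by omega⟩
  have hd : 1 ≤ d := by omega
  have h1 : ∀ n, i ≤ n → σ^[n + d] = σ^[n] := by
    intro n hn
    obtain ⟨m, rfl⟩ : ∃ m, n = m + i := ⟨n - i, by omega⟩
    rw [add_assoc, iterate_add, iterate_add σ m i]
    have : σ^[i] = σ^[i + d] := hij
    rw [← this]
  have h2 : ∀ q n, i ≤ n → σ^[n + d * q] = σ^[n] := by
    intro q
    induction q with
    | zero => intro n _; rfl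
    | succ q ih =>
      intro n hn
      rw [Nat.mul_succ, ← add_assoc, h1 _ (by omega), ih n hn]
  exact ⟨d * (i + 1), Nat.mul_pos hd (by omega), h2 _ _ (by nlinarith)⟩

section
variable {X : Type*} [MetricSpace X] [CompactSpace X] (hX : IsRT X) {g : X → X} {p : X}
  (hg : Continuous g) (hp : g p = p) (hno : ¬ AHS g)
include hX hg hp hno

lemma br_map {x y : X} (hx : x ∈ QQ g p) (hy : y ∈ QQ g p) (h : p ∉ seg x y) :
    p ∉ seg (g x) (g y) := by
  intro hh
  obtain ⟨u, hu, hup⟩ := hX.image_seg hg x y hh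
  have huT := hX.sub _ (QQ.preconn hX hg hp) x hx y hy hu
  rw [lemma2T hX hg hp hno huT hup] at hu
  exact h hu

lemma exists_idem : ∃ K, 1 ≤ K ∧ ∀ x ∈ QQ g p, x ≠ p →
    p ∉ seg (g^[K] (g^[K] x)) (g^[K] x) := by
  let D := {x : X // x ∈ QQ g p ∧ x ≠ p}
  let r : Setoid D := ⟨fun x y => p ∉ seg x.1 y.1, fun x => br_refl x.2.2, fun h => br_symm h,
    fun h h' => br_trans hX h h'⟩
  let gD : D → D := fun x => ⟨g x.1, QQ.inv x.2.1, fun h => x.2.2 (lemma2T hX hg hp hno x.2.1 h)⟩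
  let σ : Quotient r → Quotient r := Quotient.map gD (fun x y h => br_map hX hg hp hno x.2.1 y.2.1 h)
  obtain ⟨V, hV⟩ := hX.fin
  choose v hv hxv using hV p
  have : Finite (Quotient r) := by
    apply Finite.of_injective (fun q : Quotient r => (⟨v q.out.1, hv _⟩ : V))
    intro q q' h
    rw [← q.out_eq, ← q'.out_eq]
    apply Quotient.sound
    have h1 : v q.out.1 = v q'.out.1 := congrArg Subtype.val h
    have h2 := br_of_mem (hxv q.out.1) q.out.2.2
    have h3 := br_of_mem (hxv q'.out.1) q'.out.2.2
    rw [← h1] at h3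
    exact br_trans hX h2 (br_symm h3)
  obtain ⟨K, hK, hσ⟩ := exists_idem_iterate σ
  refine ⟨K, hK, fun x hx hxp => ?_⟩
  have hit : ∀ n (y : D), σ^[n] (Quotient.mk r y) = Quotient.mk r (gD^[n] y) := by
    intro n
    induction n with
    | zero => intro y; rfl
    | succ n ih => intro y; rw [iterate_succ_apply, iterate_succ_apply, ← ih]; rfl
  have hval : ∀ n (y : D), (gD^[n] y).1 = g^[n] y.1 := by
    intro n
    induction n with
    | zero => intro y; rfl
    | succ n ih => intro y; rw [iterate_succ_apply, iterate_succ_apply, ih]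
  have h1 := congrFun hσ (Quotient.mk r ⟨x, hx, hxp⟩)
  rw [hit, hit] at h1
  have h2 : p ∉ seg (gD^[K + K] ⟨x, hx, hxp⟩).1 (gD^[K] ⟨x, hx, hxp⟩).1 := Quotient.exact h1
  rw [hval, hval, iterate_add_apply] at h2
  exact h2

theorem mainC (hbad : ∀ m, 1 ≤ m → ∃ ε > 0, ∀ δ > 0, ∃ y ∈ chainRecurrentSet g, dist y p < δ ∧
    ∃ q, ε ≤ dist ((g^[m])^[q] y) p) : False := by
  obtain ⟨K, hK, hidem⟩ := exists_idem hX hg hp hno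
  obtain ⟨ε, he, hb⟩ := hbad K hK
  have hpc := QQ.preconn hX hg hp
  set T := QQ g p with hT
  set G := g^[K] with hGdef
  have hG : Continuous G := hg.iterate K
  have hGp : G p = p := iterate_fixed hp K
  have hTi : MapsTo G T T := (QQ.inv (g := g) (p := p)).iterate K
  have hG0 : ∀ x ∈ T, G x = p → x = p := fun x hx h => lemma2T' hX hg hp hno K hx h
  have hTp : p ∈ T := QQ.self hp
  have hGit : ∀ q x, G^[q] x = g^[K * q] x := fun q x => by rw [hGdef, ← iterate_mul]
  -- the point z1
  have hseq : ∀ m : ℕ, ∃ y ∈ chainRecurrentSet g, dist y p < 1 / ((m : ℝ) + 1) ∧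
      ∃ q, ε ≤ dist (G (G^[q] y)) p := by
    intro m
    obtain ⟨y, hy, hyp, q, hq⟩ := hb (min (1 / ((m : ℝ) + 1)) ε) (by positivity)
    refine ⟨y, hy, hyp.trans_le (min_le_left _ _), ?_⟩
    rcases q with _ | q
    · have := hyp.trans_le (min_le_right _ _)
      exact absurd this (not_lt.mpr hq)
    · exact ⟨q, by rwa [iterate_succ_apply'] at hq⟩
  choose y hyCR hyp q hq using hseq
  have hy0 : Tendsto y atTop (𝓝 p) := by
    rw [tendsto_iff_dist_tendsto_zero]
    exact squeeze_zero (fun _ => dist_nonneg) (fun m => (hyp m).le)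
      tendsto_one_div_add_atTop_nhds_zero_nat
  obtain ⟨z1, _, φ, hφ, hz1⟩ := isCompact_univ.tendsto_subseq
    (x := fun m => G^[q m] (y m)) (fun _ => mem_univ _)
  have hyφ := hy0.comp hφ.tendsto_atTop
  have hz1T : z1 ∈ T := by
    apply QQ.lim hp
    intro δ hδ
    obtain ⟨m, hm1, hm2⟩ := ((Metric.tendsto_nhds.mp hyφ δ hδ).and
      (Metric.tendsto_nhds.mp hz1 δ hδ)).exists
    exact ⟨_, hm1, K * q (φ m), by rw [← hGit]; exact hm2⟩
  set z := G z1 with hzdef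
  have hz : Tendsto (fun m => G (G^[q (φ m)] (y (φ m)))) atTop (𝓝 z) :=
    (hG.tendsto z1).comp hz1
  have hzε : ε ≤ dist z p :=
    ge_of_tendsto' (hz.dist tendsto_const_nhds) (fun m => hq (φ m))
  have hzp : z ≠ p := by rintro h; rw [h, dist_self] at hzε; linarith
  have hzT : z ∈ T := hTi hz1T
  have hz1p : z1 ≠ p := fun h => hzp (by rw [hzdef, h, hGp])
  have hGzz : p ∉ seg (G z) z := hidem z1 hz1T hz1p
  have hzTs : seg p z ⊆ T := hX.sub T hpc p hTp z hzT
  have hbrG : ∀ x ∈ T, ∀ y ∈ T, p ∉ seg x y → p ∉ seg (G x) (G y) := by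
    intro x hx y hy h hh
    obtain ⟨u, hu, hup⟩ := hX.image_seg hG x y hh
    rw [hG0 u (hX.sub T hpc x hx y hy hu) hup] at hu
    exact h hu
  have hC : ∀ x ∈ T, p ∉ seg x z → p ∉ seg (G x) z := fun x hx h =>
    br_trans hX (hbrG x hx z hzT h) hGzz
  -- chains from z to p
  have hzp_chain : ∀ ε > 0, EpsChain g ε z p := by
    apply limP (CompactSpace.uniformContinuous_of_continuous hg)
    intro δ hδ
    obtain ⟨m, hm1, hm2⟩ := ((Metric.tendsto_nhds.mp hyφ δ hδ).and
      (Metric.tendsto_nhds.mp hz δ hδ)).exists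
    refine ⟨_, hyCR (φ m), hm1, K * (q (φ m) + 1), ?_⟩
    rw [← hGit, iterate_succ_apply']
    exact hm2
  have : CompactSpace T := isCompact_iff_compactSpace.mp QQ.closed.isCompact
  have hpT : (QQ.inv (g := g) (p := p)).restrict g _ _ (⟨p, hTp⟩ : T) = ⟨p, hTp⟩ :=
    Subtype.ext hp
  have hzpT : ∀ ε > 0, EpsChain (((QQ.inv (g := g) (p := p)).restrict g _ _)^[K]) ε
      (⟨z, hzT⟩ : T) ⟨p, hTp⟩ :=
    chain_pow_to_fixed (CompactSpace.uniformContinuous_of_continuous (hg.restrict _))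
      hpT hK (QQ.chain hg hp ⟨z, hzT⟩ ⟨p, hTp⟩ hzp_chain)
  rw [MapsTo.iterate_restrict] at hzpT
  obtain ⟨w, hw, hwp, nb⟩ := no_branch hX hzp
  refine hno (AHS.of_iterate hK (local_arg hX hG QQ.closed hzTs hC hG0 hGp hw hwp nb ?_ ?_))
  · -- downcross
    intro s hs hsz
    by_contra! hcon
    let U : Set X := {x | p ∉ seg x z} ∩ {x | s < dist p x}
    have hUo : IsOpen U := (br_open p z).inter (isOpen_lt (by fun_prop) (by fun_prop))
    let K' : Set X := {x | x ∈ T ∧ p ∉ seg x z ∧ s ≤ dist p x}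
    have hKc : IsCompact K' := by
      apply IsClosed.isCompact
      rw [← closure_subset_iff_isClosed]
      intro x hx
      have h1 : x ∈ T := (closure_minimal (fun y (hy : y ∈ K') => hy.1) QQ.closed) hx
      have h2 : s ≤ dist p x := by
        have : closure K' ⊆ {x | s ≤ dist p x} :=
          closure_minimal (fun y hy => hy.2.2) (isClosed_le (by fun_prop) (by fun_prop))
        exact this hx
      have hxp : x ≠ p := by rintro rfl; rw [dist_self] at h2; linarith
      obtain ⟨y, hy, hyK⟩ := mem_closure_iff.mp hx _ (br_open p x) (br_refl hxp)
      exact ⟨h1, br_trans hX (br_symm hy) hyK.2.1, h2⟩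
    obtain ⟨δ, hδ, hsub⟩ := (hKc.image hG).exists_thickening_subset_open hUo (by
      rintro _ ⟨v, hv, rfl⟩
      exact ⟨hC v hv.1 hv.2.1, hcon v hv.1 hv.2.1 hv.2.2⟩)
    have hmem : (⟨p, hTp⟩ : T) ∈ {x : T | x.1 ∈ K'} := by
      refine TreeEnt.EpsChain.mem ?_ (hzpT δ hδ) ?_
      · intro x hx y hy
        have : y.1 ∈ U := by
          apply hsub
          rw [Metric.mem_thickening_iff]
          exact ⟨G x.1, mem_image_of_mem _ hx, by rw [dist_comm]; exact hy⟩
        exact ⟨y.2, this.1, le_of_lt this.2⟩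
      · exact ⟨hzT, br_refl hzp, hsz⟩
    have : s ≤ dist p p := hmem.2.2
    rw [dist_self] at this
    linarith
  · -- upcross
    intro s hs hsw
    by_contra! hcon
    let U : Set X := {x | p ∉ seg x z} ∩ {x | s < dist p x}
    have hUo : IsOpen U := (br_open p z).inter (isOpen_lt (by fun_prop) (by fun_prop))
    have hzU : z ∈ U := ⟨br_refl hzp, hsw.trans_le (dist_le_of_mem hw)⟩
    have hr : ∀ δ > 0, ∃ y, dist y p < δ ∧ ∃ j, G (G^[j] y) ∉ U ∧ G (G (G^[j] y)) ∈ U := by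
      intro δ hδ
      have e1 : ∀ᶠ m in atTop, dist p (y (φ m)) < s := by
        have : Tendsto (fun m => dist p (y (φ m))) atTop (𝓝 (dist p p)) :=
          tendsto_const_nhds.dist hyφ
        rw [dist_self] at this
        exact this.eventually (gt_mem_nhds hs)
      have e2 : ∀ᶠ m in atTop, dist p (G (y (φ m))) < s := by
        have : Tendsto (fun m => dist p (G (y (φ m)))) atTop (𝓝 (dist p (G p))) :=
          tendsto_const_nhds.dist ((hG.tendsto p).comp hyφ)
        rw [hGp, dist_self] at this
        exact this.eventually (gt_mem_nhds hs)
      have e3 : ∀ᶠ m in atTop, G (G^[q (φ m)] (y (φ m))) ∈ U := hz.eventually (hUo.mem_nhds hzU)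
      obtain ⟨m, ⟨h1, h2⟩, h3, h4⟩ := ((e1.and e2).and
        (e3.and (Metric.tendsto_nhds.mp hyφ δ hδ))).exists
      classical
      have hex : ∃ n, G^[n] (y (φ m)) ∈ U := ⟨q (φ m) + 1, by rw [iterate_succ_apply']; exact h3⟩
      have hf := Nat.find_spec hex
      have hlt : ∀ k < Nat.find hex, G^[k] (y (φ m)) ∉ U := fun k hk => Nat.find_min hex hk
      rcases hn : Nat.find hex with _ | _ | n
      · rw [hn] at hf; exact absurd hf.2 (not_lt.mpr h1.le)
      · rw [hn] at hf; exact absurd hf.2 (not_lt.mpr h2.le)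
      · refine ⟨_, h4, n, ?_, ?_⟩
        · have := hlt (n + 1) (by omega)
          rwa [iterate_succ_apply'] at this
        · rw [hn] at hf
          rwa [iterate_succ_apply', iterate_succ_apply'] at hf
    choose y' hy'p j hj1 hj2 using fun m : ℕ => hr (1 / ((m : ℝ) + 1)) (by positivity)
    have hy'0 : Tendsto y' atTop (𝓝 p) := by
      rw [tendsto_iff_dist_tendsto_zero]
      exact squeeze_zero (fun _ => dist_nonneg) (fun m => (hy'p m).le)
        tendsto_one_div_add_atTop_nhds_zero_nat
    obtain ⟨r0, _, ψ, hψ, hr0⟩ := isCompact_univ.tendsto_subseq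
      (x := fun m => G^[j m] (y' m)) (fun _ => mem_univ _)
    have hr0T : r0 ∈ T := by
      apply QQ.lim hp
      intro δ hδ
      obtain ⟨m, hm1, hm2⟩ := ((Metric.tendsto_nhds.mp (hy'0.comp hψ.tendsto_atTop) δ hδ).and
        (Metric.tendsto_nhds.mp hr0 δ hδ)).exists
      exact ⟨_, hm1, K * j (ψ m), by rw [← hGit]; exact hm2⟩
    have hl1 : Tendsto (fun m => G (G^[j (ψ m)] (y' (ψ m)))) atTop (𝓝 (G r0)) :=
      (hG.tendsto r0).comp hr0
    have hl2 : Tendsto (fun m => G (G (G^[j (ψ m)] (y' (ψ m))))) atTop (𝓝 (G (G r0))) :=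
      (hG.tendsto _).comp hl1
    have hN : s ≤ dist p (G (G r0)) :=
      ge_of_tendsto' (tendsto_const_nhds.dist hl2) (fun m => le_of_lt (hj2 (ψ m)).2)
    have hne2 : G (G r0) ≠ p := by intro h; rw [h, dist_self] at hN; linarith
    have hne1 : G r0 ≠ p := fun h => hne2 (by rw [h, hGp])
    have hne0 : r0 ≠ p := fun h => hne1 (by rw [h, hGp])
    have hid := hidem r0 hr0T hne0
    obtain ⟨m, hm1, hm2⟩ := ((hl1.eventually ((br_open p (G r0)).mem_nhds (br_refl hne1))).and
      (hl2.eventually ((br_open p (G (G r0))).mem_nhds (br_refl hne2)))).exists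
    change p ∉ seg _ _ at hm1
    change p ∉ seg _ _ at hm2
    have hGr : p ∉ seg (G (G^[j (ψ m)] (y' (ψ m)))) z :=
      br_trans hX hm1 (br_trans hX (br_symm hid) (br_trans hX (br_symm hm2) (hj2 (ψ m)).1))
    have hle : dist p (G (G^[j (ψ m)] (y' (ψ m)))) ≤ s := by
      by_contra! h
      exact hj1 (ψ m) ⟨hGr, h⟩
    have hin : G (G^[j (ψ m)] (y' (ψ m))) ∈ seg p w := by
      rcases nb _ hGr with h | h
      · exact h
      · have := dist_le_of_mem h
        linarith
    have := hcon _ hin hle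
    exact absurd (hj2 (ψ m)).2 (not_lt.mpr this)

end

theorem theoremC {X : Type*} [MetricSpace X] [CompactSpace X] (hX : IsRT X) {f : X → X}
    (hf : Continuous f) {p : X} (hp : p ∈ periodicPts f) {ε : ℝ} (he : 0 < ε)
    (hbad : ∀ δ > 0, ∃ y ∈ chainRecurrentSet f, dist y p < δ ∧
      ∃ n, ε ≤ dist (f^[n] y) (f^[n] p)) : AHS f := by
  by_contra hno
  obtain ⟨s, hs, hps⟩ := hp
  have hno' : ¬ AHS (f^[s]) := fun h => hno (h.of_iterate hs)
  refine mainC hX (hf.iterate s) (p := p) hps hno' ?_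
  intro m hm
  have hp' : ∀ q, ((f^[s])^[m])^[q] p = p := by
    intro q
    apply iterate_fixed
    apply iterate_fixed
    exact hps
  obtain ⟨ε', he', hu⟩ : ∃ ε' > 0, ∀ u, dist u p < ε' → ∀ r < s * m,
      dist (f^[r] u) (f^[r] p) < ε := by
    have : ∀ᶠ u in 𝓝 p, ∀ r ∈ Finset.range (s * m), dist (f^[r] u) (f^[r] p) < ε := by
      rw [Filter.eventually_all_finset]
      intro r _
      exact Metric.tendsto_nhds.mp ((hf.iterate r).tendsto p) ε he
    obtain ⟨ε', he', h⟩ := Metric.eventually_nhds_iff.mp this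
    exact ⟨ε', he', fun u hu r hr => h hu r (Finset.mem_range.mpr hr)⟩
  refine ⟨ε', he', fun δ hδ => ?_⟩
  obtain ⟨y, hy, hyp, n, hn⟩ := hbad δ hδ
  refine ⟨y, cr_pow (CompactSpace.uniformContinuous_of_continuous hf) hs hy, hyp, n / (s * m), ?_⟩
  by_contra! hcon
  have hsm : 0 < s * m := Nat.mul_pos hs hm
  have h1 := hu _ hcon (n % (s * m)) (Nat.mod_lt _ hsm)
  have h2 : ∀ x, f^[n % (s * m)] (((f^[s])^[m])^[n / (s * m)] x) = f^[n] x := by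
    intro x
    rw [← iterate_mul, ← iterate_mul, ← iterate_add_apply, ← mul_assoc, Nat.mod_add_div]
  have h3 : f^[n % (s * m)] p = f^[n] p := by
    rw [← h2 p, hp']
  rw [h2, h3] at h1
  linarith

end TreeEnt

namespace TreeEnt

/-- topological horseshoe -/
def HS1 {X : Type*} [TopologicalSpace X] (f : X → X) : Prop :=
  ∃ N, 1 ≤ N ∧ ∃ P Q : Set X, IsClosed P ∧ IsClosed Q ∧ Disjoint P Q ∧ P.Nonempty ∧
    P ∪ Q ⊆ f^[N] '' P ∧ P ∪ Q ⊆ f^[N] '' Q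

lemma AHS.hs1 {X : Type*} [MetricSpace X] (hX : IsRT X) {f : X → X} (hf : Continuous f)
    (h : AHS f) : HS1 f := by
  obtain ⟨n, hn, a, u, x, hu, hua, hux, hJ, hK⟩ := h
  set G := f^[n] with hG
  have hGc : Continuous G := hf.iterate n
  have hJs : seg a u ⊆ seg a x := seg_sub_left hu
  have hKs : seg u x ⊆ seg a x := seg_sub_right hu
  have hJK : ∀ y, y ∈ seg a u → y ∈ seg u x → y = u := by
    intro y h1 h2
    rw [mem_seg] at *
    have := dist_triangle a y x
    rw [dist_comm u y] at h2
    exact dist_eq_zero.mp (by have := @dist_nonneg _ _ y u; linarith)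
  have main2 : ∀ L : Set X, IsClosed L → L ⊆ seg a x → seg a x ⊆ G '' L → L.Nonempty →
      G u ∉ L → HS1 f := by
    intro L hLc hLs hLG hLne huL
    have hP : L ⊆ G '' (seg a u ∩ G ⁻¹' L) := by
      intro y hy
      obtain ⟨v, hv, rfl⟩ := hJ (hLs hy)
      exact ⟨v, ⟨hv, hy⟩, rfl⟩
    have h2n : ∀ S : Set X, f^[n + n] '' S = G '' (G '' S) := by
      intro S; rw [iterate_add, image_comp]
    have hsub : (seg a u ∩ G ⁻¹' L) ∪ seg u x ⊆ seg a x :=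
      union_subset (inter_subset_left.trans hJs) hKs
    refine ⟨n + n, by omega, seg a u ∩ G ⁻¹' L, seg u x,
      (seg_closed _ _).inter (hLc.preimage hGc), seg_closed _ _, ?_, ?_, ?_, ?_⟩
    · rw [Set.disjoint_left]
      intro y hy hy'
      rw [hJK y hy.1 hy'] at hy
      exact huL hy.2
    · obtain ⟨y, hy⟩ := hLne
      obtain ⟨v, hv, _⟩ := hP hy
      exact ⟨v, hv⟩
    · rw [h2n]
      exact hsub.trans (hLG.trans (image_mono hP))
    · rw [h2n]
      exact hsub.trans (hJ.trans (image_mono (hJs.trans hK)))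
  by_cases h1 : G u ∈ seg a u
  · by_cases h2 : G u ∈ seg u x
    · have hGu := hJK _ h1 h2
      obtain ⟨c, hc, hcx⟩ := hJ (right_mem a x)
      obtain ⟨c', hc', hca⟩ := hJ (left_mem a x)
      have hcu : c ≠ u := by rintro rfl; exact hux (hGu.symm.trans hcx)
      have hcu' : c' ≠ u := by rintro rfl; exact hua (hGu.symm.trans hca)
      have hlt : ∀ d ∈ seg a u, d ≠ u → dist a d < dist a u := by
        intro d hd hdu
        have := dist_pos.mpr hdu
        rw [mem_seg] at hd
        linarith
      have hnu : u ∉ seg c c' := by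
        intro h
        rcases le_total (dist a c) (dist a c') with hle | hle
        · have := dist_le_of_mem (seg_sub_right (hX.mem_of_le hc hc' hle) h)
          linarith [hlt c' hc' hcu']
        · rw [seg_symm] at h
          have := dist_le_of_mem (seg_sub_right (hX.mem_of_le hc' hc hle) h)
          linarith [hlt c hc hcu]
      have hsJ : seg c c' ⊆ seg a u := hX.sub _ (hX.conn a u) c hc c' hc'
      have hsub : seg c c' ∪ seg u x ⊆ seg a x := union_subset (hsJ.trans hJs) hKs
      refine ⟨n, hn, seg c c', seg u x, seg_closed _ _, seg_closed _ _, ?_, ⟨c, left_mem _ _⟩,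
        ?_, hsub.trans hK⟩
      · rw [Set.disjoint_left]
        intro y hy hy'
        rw [hJK y (hsJ hy) hy'] at hy
        exact hnu hy
      · refine hsub.trans ?_
        have := hX.image_seg hGc c c'
        rwa [hcx, hca, seg_symm] at this
    · exact main2 _ (seg_closed _ _) hKs hK ⟨u, left_mem _ _⟩ h2
  · exact main2 _ (seg_closed _ _) hJs hJ ⟨u, right_mem _ _⟩ h1

lemma cover_set_nonempty {X : Type*} [TopologicalSpace X] (f : X → X) (𝒰 : Finset (Set X))
    (h : IsOpenCoverOn univ 𝒰) (n : ℕ) : { m | ∃ c : Fin m → Fin n → Set X, (∀ j i, c j i ∈ 𝒰) ∧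
    (univ : Set X) ⊆ ⋃ j, ⋂ i : Fin n, f^[id i.1] ⁻¹' c j i }.Nonempty := by
  classical
  let e := Fintype.equivFin (Fin n → 𝒰)
  refine ⟨_, fun j i => (e.symm j i).1, fun j i => (e.symm j i).2, fun x _ => ?_⟩
  have : ∀ y : X, ∃ U : 𝒰, y ∈ U.1 := by
    intro y
    obtain ⟨U, hU, hy⟩ := h.2 (mem_univ y)
    exact ⟨⟨U, hU⟩, hy⟩
  choose U hU using this
  refine mem_iUnion.mpr ⟨e (fun i => U (f^[i.1] x)), mem_iInter.mpr fun i => ?_⟩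
  simp only [Equiv.symm_apply_apply]
  exact hU _

theorem HS1.entropy_pos {X : Type*} [TopologicalSpace X] {f : X → X} (h : HS1 f) :
    topEntropy f ≠ 0 := by
  classical
  obtain ⟨N, hN, P, Q, hPc, hQc, hd, hPne, hP, hQ⟩ := h
  let sel : Bool → Set X := fun b => if b then P else Q
  have hsel : ∀ b, P ∪ Q ⊆ f^[N] '' (sel b) := by
    intro b; cases b
    · exact hQ
    · exact hP
  have hsel2 : ∀ b, sel b ⊆ P ∪ Q := by
    intro b; cases b
    · exact subset_union_right
    · exact subset_union_left
  have hword : ∀ k (w : ℕ → Bool), ∃ x, ∀ i ≤ k, f^[N * i] x ∈ sel (w i) := by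
    intro k
    induction k with
    | zero =>
      intro w
      obtain ⟨y, hy⟩ := hPne
      obtain ⟨x, hx, _⟩ := hsel (w 0) (Or.inl hy)
      refine ⟨x, fun i hi => ?_⟩
      have : i = 0 := by omega
      subst this
      exact hx
    | succ k ih =>
      intro w
      obtain ⟨x', hx'⟩ := ih (fun i => w (i + 1))
      obtain ⟨x, hx, hxx⟩ := hsel (w 0) (hsel2 _ (hx' 0 (Nat.zero_le _)))
      refine ⟨x, fun i hi => ?_⟩
      rcases i with _ | i
      · exact hx
      · rw [Nat.mul_succ, iterate_add_apply, hxx]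
        exact hx' i (by omega)
  let 𝒰 : Finset (Set X) := {Pᶜ, Qᶜ}
  have hcov : IsOpenCoverOn univ 𝒰 := by
    constructor
    · intro U hU
      simp only [𝒰, Finset.mem_insert, Finset.mem_singleton] at hU
      rcases hU with rfl | rfl
      · exact hPc.isOpen_compl
      · exact hQc.isOpen_compl
    · intro x _
      by_cases hx : x ∈ P
      · exact ⟨Qᶜ, by simp [𝒰], fun h => Set.disjoint_left.mp hd hx h⟩
      · exact ⟨Pᶜ, by simp [𝒰], hx⟩
  have hcount : ∀ k, 2 ^ k ≤ seqCoverCountOn f univ id 𝒰 (N * k) := by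
    intro k
    apply le_csInf (cover_set_nonempty f 𝒰 hcov _)
    rintro m ⟨c, hc, hcu⟩
    choose x hx using fun w : Fin k → Bool => hword k (fun i => if h : i < k then w ⟨i, h⟩ else true)
    have hj : ∀ w, ∃ j, x w ∈ ⋂ i : Fin (N * k), f^[id i.1] ⁻¹' c j i := fun w =>
      mem_iUnion.mp (hcu (mem_univ (x w)))
    choose j hj using hj
    have hinj : Injective j := by
      intro w w' hww
      by_contra hne
      obtain ⟨i, hi⟩ := Function.ne_iff.mp hne
      have hlt : N * i.1 < N * k := Nat.mul_lt_mul_of_pos_left i.2 hN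
      have h1 := mem_iInter.mp (hj w) ⟨N * i.1, hlt⟩
      have h2 := mem_iInter.mp (hj w') ⟨N * i.1, hlt⟩
      rw [← hww] at h2
      have h3 := hx w i.1 i.2.le
      have h4 := hx w' i.1 i.2.le
      simp only [i.2, dif_pos] at h3 h4
      have h5 := hc (j w) ⟨N * i.1, hlt⟩
      simp only [𝒰, Finset.mem_insert, Finset.mem_singleton] at h5
      simp only [id, mem_preimage] at h1 h2
      change w i ≠ w' i at hi
      cases hb : w i <;> cases hb' : w' i
      · exact hi (hb.trans hb'.symm)
      · rw [hb] at h3; rw [hb'] at h4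
        rcases h5 with h5 | h5
        · rw [h5] at h2; exact h2 h4
        · rw [h5] at h1; exact h1 h3
      · rw [hb] at h3; rw [hb'] at h4
        rcases h5 with h5 | h5
        · rw [h5] at h1; exact h1 h3
        · rw [h5] at h2; exact h2 h4
      · exact hi (hb.trans hb'.symm)
    have := Fintype.card_le_of_injective j hinj
    simpa using this
  have hlow : ENNReal.ofReal (Real.log 2 / N) ≤ topEntropy f := by
    refine le_trans ?_ (le_iSup₂ (f := fun (𝒰 : Finset (Set X)) (_ : IsOpenCoverOn univ 𝒰) =>
      Filter.limsup (fun n : ℕ => ENNReal.ofReal (Real.log (seqCoverCountOn f univ id 𝒰 n) / n))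
        Filter.atTop) 𝒰 hcov)
    refine le_limsup_of_frequently_le ?_ (by isBoundedDefault)
    rw [frequently_atTop]
    intro n0
    refine ⟨N * (n0 + 1), by nlinarith, ?_⟩
    apply ENNReal.ofReal_le_ofReal
    have hNr : (0 : ℝ) < N := by exact_mod_cast hN
    have h1 : ((2 : ℝ) ^ (n0 + 1)) ≤ (seqCoverCountOn f univ id 𝒰 (N * (n0 + 1)) : ℝ) := by
      exact_mod_cast hcount (n0 + 1)
    have h2 := Real.log_le_log (by positivity) h1
    rw [Real.log_pow] at h2
    push_cast at h2 ⊢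
    rw [div_le_div_iff₀ hNr (by positivity)]
    nlinarith
  intro h0
  rw [h0] at hlow
  have : 0 < Real.log 2 / N := div_pos (Real.log_pos (by norm_num)) (by exact_mod_cast hN)
  have := ENNReal.ofReal_pos.mpr this
  exact absurd hlow (not_le.mpr this)

end TreeEnt

namespace TreeEnt

lemma circ {X : Type*} [MetricSpace X] {T : ℝ} (hT : 0 < T) {c : ℝ → X}
    (hc : ContinuousOn c (Icc 0 T)) (h0 : c 0 = c T) (hi : InjOn c (Ico 0 T)) :
    ∃ S : Set X, IsSimpleClosedCurve S := by
  have : Fact (0 < T) := ⟨hT⟩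
  have hcont : Continuous (AddCircle.liftIco T 0 c) := by
    apply AddCircle.liftIco_continuous
    · rw [zero_add]; exact h0
    · rw [zero_add]; exact hc
  have hinj : Injective (AddCircle.liftIco T 0 c) := by
    intro x y hxy
    have h1 := (AddCircle.equivIco T 0 x).2
    have h2 := (AddCircle.equivIco T 0 y).2
    apply (AddCircle.equivIco T 0).injective
    apply Subtype.ext
    exact hi ⟨h1.1, h1.2.trans_eq (zero_add T)⟩ ⟨h2.1, h2.2.trans_eq (zero_add T)⟩ hxy
  let e1 := (AddCircle.homeomorphCircle (T := T) hT.ne').symm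
  have hemb : IsClosedEmbedding (AddCircle.liftIco T 0 c) := hcont.isClosedEmbedding hinj
  exact ⟨range (AddCircle.liftIco T 0 c), ⟨(hemb.isEmbedding.toHomeomorph.symm).trans e1.symm⟩⟩

/-- parametrisation of a geodesic -/
lemma IsRT.geod {Y : Type*} [MetricSpace Y] [CompactSpace Y] (hY : IsRT Y) (a b : Y) :
    ∃ γ : ℝ → Y, Continuous γ ∧ InjOn γ (Icc 0 (dist a b)) ∧ γ 0 = a ∧ γ (dist a b) = b := by
  let g : seg a b → Icc 0 (dist a b) := fun z => ⟨dist a z.1, dist_nonneg, dist_le_of_mem z.2⟩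
  have hg : Continuous g := by
    apply Continuous.subtype_mk
    fun_prop
  have hgb : Bijective g := by
    constructor
    · intro x y h
      apply Subtype.ext
      exact hY.eq_of_dist x.2 y.2 (congrArg Subtype.val h)
    · rintro ⟨t, ht⟩
      obtain ⟨z, hz, h⟩ := hY.exists_at ht.1 ht.2
      exact ⟨⟨z, hz⟩, Subtype.ext h⟩
  have : CompactSpace (seg a b) := isCompact_iff_compactSpace.mp (seg_closed a b).isCompact
  let e := Continuous.homeoOfEquivCompactToT2 (f := Equiv.ofBijective g hgb) hg
  have he : ∀ z, e z = g z := fun z => rfl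
  refine ⟨fun t => (e.symm (projIcc 0 (dist a b) dist_nonneg t)).1, ?_, ?_, ?_, ?_⟩
  · exact continuous_subtype_val.comp (e.symm.continuous.comp continuous_projIcc)
  · intro s hs t ht hst
    have h1 := e.symm.injective (Subtype.ext hst)
    rw [projIcc_of_mem _ hs, projIcc_of_mem _ ht] at h1
    exact congrArg Subtype.val h1
  · have : e ⟨a, left_mem _ _⟩ = projIcc 0 (dist a b) dist_nonneg 0 := by
      rw [he, projIcc_left]; apply Subtype.ext; simp [g]
    simp only []
    rw [← this, e.symm_apply_apply]
  · have : e ⟨b, right_mem _ _⟩ = projIcc 0 (dist a b) dist_nonneg (dist a b) := by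
      rw [he, projIcc_right]
    simp only []
    rw [← this, e.symm_apply_apply]

/-- a parametrised arc -/
structure Par {X : Type*} [MetricSpace X] (A : Set X) (Φ : ℝ → X) : Prop where
  cont : Continuous Φ
  inj : InjOn Φ (Icc 0 1)
  im : Φ '' Icc 0 1 = A

lemma Par.mem {X : Type*} [MetricSpace X] {A : Set X} {Φ : ℝ → X} (h : Par A Φ) {t : ℝ}
    (ht : t ∈ Icc (0 : ℝ) 1) : Φ t ∈ A := by
  have := mem_image_of_mem Φ ht
  rw [h.im] at this
  exact this

lemma exists_par {X : Type*} [MetricSpace X] {A : Set X} (hA : IsArc A) : ∃ Φ, Par A Φ := by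
  obtain ⟨e⟩ := hA
  refine ⟨fun t => (e.symm (projIcc 0 1 zero_le_one t)).1, ?_, ?_, ?_⟩
  · exact continuous_subtype_val.comp (e.symm.continuous.comp continuous_projIcc)
  · intro s hs t ht hst
    have h1 := e.symm.injective (Subtype.ext hst)
    rw [projIcc_of_mem _ hs, projIcc_of_mem _ ht] at h1
    exact congrArg Subtype.val h1
  · ext x
    constructor
    · rintro ⟨t, ht, rfl⟩; exact Subtype.coe_prop _
    · intro hx
      refine ⟨(e ⟨x, hx⟩).1, (e ⟨x, hx⟩).2, ?_⟩
      simp only []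
      rw [projIcc_val, e.symm_apply_apply]

lemma Par.flip {X : Type*} [MetricSpace X] {A : Set X} {Φ : ℝ → X} (h : Par A Φ) :
    Par A (fun t => Φ (1 - t)) := by
  refine ⟨h.cont.comp (by fun_prop), ?_, ?_⟩
  · intro s hs t ht hst
    have := h.inj (x₁ := 1 - s) (x₂ := 1 - t) ⟨by linarith [hs.2], by linarith [hs.1]⟩
      ⟨by linarith [ht.2], by linarith [ht.1]⟩ hst
    linarith
  · rw [← h.im]
    ext x
    constructor
    · rintro ⟨t, ht, rfl⟩; exact ⟨1 - t, ⟨by linarith [ht.2], by linarith [ht.1]⟩, rfl⟩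
    · rintro ⟨t, ht, rfl⟩
      exact ⟨1 - t, ⟨by linarith [ht.2], by linarith [ht.1]⟩, by simp⟩

lemma Par.endpoint {X : Type*} [MetricSpace X] {A : Set X} {Φ : ℝ → X} (h : Par A Φ) {t : ℝ}
    (ht : t ∈ Icc (0 : ℝ) 1) (he : IsArcEndpoint A (Φ t)) : t = 0 ∨ t = 1 := by
  by_contra hcon
  push Not at hcon
  have ht0 : 0 < t := lt_of_le_of_ne ht.1 (Ne.symm hcon.1)
  have ht1 : t < 1 := lt_of_le_of_ne ht.2 hcon.2
  have hp := he.2.isPreconnected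
  have hK0 : IsClosed (Φ '' Icc 0 t) := (isCompact_Icc.image h.cont).isClosed
  have hK1 : IsClosed (Φ '' Icc t 1) := (isCompact_Icc.image h.cont).isClosed
  rw [isPreconnected_closed_iff] at hp
  have := hp _ _ hK0 hK1 ?_ ?_ ?_
  · obtain ⟨x, hx, ⟨s, hs, rfl⟩, ⟨s', hs', h2⟩⟩ := this
    have h3 := h.inj ⟨ht.1.trans hs'.1, hs'.2⟩ ⟨hs.1, hs.2.trans ht.2⟩ h2
    have : s = t := le_antisymm hs.2 (h3 ▸ hs'.1)
    exact hx.2 (by rw [this]; rfl)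
  · rintro x ⟨hx, -⟩
    rw [← h.im] at hx
    obtain ⟨s, hs, rfl⟩ := hx
    rcases le_total s t with h1 | h1
    · exact Or.inl ⟨s, ⟨hs.1, h1⟩, rfl⟩
    · exact Or.inr ⟨s, ⟨h1, hs.2⟩, rfl⟩
  · refine ⟨Φ 0, ⟨?_, ?_⟩, ⟨0, ⟨le_rfl, ht.1⟩, rfl⟩⟩
    · rw [← h.im]; exact ⟨0, by simp, rfl⟩
    · intro h1; exact hcon.1 (h.inj (by simp) ht h1).symm
  · refine ⟨Φ 1, ⟨?_, ?_⟩, ⟨1, ⟨ht.2, le_rfl⟩, rfl⟩⟩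
    · rw [← h.im]; exact ⟨1, by simp, rfl⟩
    · intro h1; exact hcon.2 (h.inj (by simp) ht h1).symm

/-- gluing an arc onto a subtree at both ends gives a circle -/
lemma circ_of_both {X : Type*} [MetricSpace X] {Y : Type*} [MetricSpace Y] [CompactSpace Y]
    (hY : IsRT Y) {j : Y → X} (hj : Continuous j) (hji : Injective j) {A : Set X} {Φ : ℝ → X}
    (h : Par A Φ) (hint : ∀ t ∈ Icc (0 : ℝ) 1, Φ t ∈ range j → t = 0 ∨ t = 1)
    (h0 : Φ 0 ∈ range j) (h1 : Φ 1 ∈ range j) : ∃ S : Set X, IsSimpleClosedCurve S := by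
  obtain ⟨y0, hy0⟩ := h0
  obtain ⟨y1, hy1⟩ := h1
  obtain ⟨γ, hγ, hγi, hγ0, hγ1⟩ := hY.geod y1 y0
  have hne : y1 ≠ y0 := by
    rintro rfl
    have := h.inj (by simp) (by simp) (hy0.symm.trans hy1)
    norm_num at this
  have hL := dist_pos.mpr hne
  set L := dist y1 y0
  refine circ (T := 1 + L) (by linarith) (c := fun t => if t ≤ 1 then Φ t else j (γ (t - 1))) ?_ ?_ ?_
  · apply Continuous.continuousOn
    apply Continuous.if_le h.cont (hj.comp (hγ.comp (by fun_prop))) continuous_id continuous_const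
    intro t ht
    simp only [id] at ht
    simp [ht, hγ0, hy1]
  · have : ¬ (1 + L ≤ 1) := by linarith
    simp [this, hγ1, hy0, hL]
  · have key : ∀ s t, s ∈ Ico 0 (1+L) → t ∈ Ico 0 (1+L) → s ≤ 1 → ¬ t ≤ 1 → Φ s ≠ j (γ (t-1)) := by
      intro s t hs ht hs1 ht1 heq
      push Not at ht1
      have htm : t - 1 ∈ Icc 0 L := ⟨by linarith, by linarith [ht.2]⟩
      rcases hint s ⟨hs.1, hs1⟩ ⟨_, heq.symm⟩ with h2 | h2
      · rw [h2, ← hy0, ← hγ1] at heq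
        have := hγi ⟨hL.le, le_rfl⟩ htm (hji heq)
        linarith [ht.2]
      · rw [h2, ← hy1, ← hγ0] at heq
        have := hγi ⟨le_rfl, hL.le⟩ htm (hji heq)
        linarith
    intro s hs t ht hst
    simp only [] at hst
    split_ifs at hst with hs1 ht1 ht1
    · exact h.inj ⟨hs.1, hs1⟩ ⟨ht.1, ht1⟩ hst
    · exact absurd hst (key s t hs ht hs1 ht1)
    · exact absurd hst.symm (key t s ht hs ht1 hs1)
    · push Not at hs1 ht1
      have := hγi ⟨by linarith, by linarith [hs.2]⟩ ⟨by linarith, by linarith [ht.2]⟩ (hji hst)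
      linarith

end TreeEnt

namespace TreeEnt

/-- wedge of `Y` and a unit interval at `y0` -/
def Wd {Y : Type*} (y0 : Y) : Type _ := {z : WithLp 1 (Y × ℝ) // z.snd ∈ Icc (0:ℝ) 1 ∧ (z.snd = 0 ∨ z.fst = y0)}

noncomputable instance {Y : Type*} [MetricSpace Y] (y0 : Y) : MetricSpace (Wd y0) :=
  inferInstanceAs (MetricSpace {z : WithLp 1 (Y × ℝ) // z.snd ∈ Icc (0:ℝ) 1 ∧ (z.snd = 0 ∨ z.fst = y0)})

namespace Wd
variable {Y : Type*}

def i0 (y0 : Y) (y : Y) : Wd y0 := ⟨WithLp.toLp 1 (y, 0), by simp⟩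
noncomputable def i1 (y0 : Y) (t : ℝ) : Wd y0 :=
  ⟨WithLp.toLp 1 (y0, (projIcc (0:ℝ) 1 zero_le_one t).1), (projIcc (0:ℝ) 1 zero_le_one t).2, Or.inr rfl⟩
def pr {y0 : Y} (z : Wd y0) : Y := z.1.fst
def ta {y0 : Y} (z : Wd y0) : ℝ := z.1.snd

variable {y0 : Y}
@[simp] lemma pr_i0 (y : Y) : pr (i0 y0 y) = y := rfl
@[simp] lemma ta_i0 (y : Y) : ta (i0 y0 y) = 0 := rfl
@[simp] lemma pr_i1 (t : ℝ) : pr (i1 y0 t) = y0 := rfl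
lemma ta_i1 {t : ℝ} (ht : t ∈ Icc (0:ℝ) 1) : ta (i1 y0 t) = t := by
  show (projIcc (0:ℝ) 1 zero_le_one t).1 = t
  rw [projIcc_of_mem _ ht]
lemma ta_mem (z : Wd y0) : ta z ∈ Icc (0:ℝ) 1 := z.2.1
lemma cases (z : Wd y0) : ta z = 0 ∨ pr z = y0 := z.2.2
lemma ext' {z w : Wd y0} (h1 : pr z = pr w) (h2 : ta z = ta w) : z = w := by
  apply Subtype.ext
  apply (WithLp.equiv 1 _).injective
  exact Prod.ext h1 h2
lemma i0_pr {z : Wd y0} (h : ta z = 0) : i0 y0 (pr z) = z := ext' rfl h.symm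
lemma i1_ta {z : Wd y0} (h : pr z = y0) : i1 y0 (ta z) = z := ext' h.symm (ta_i1 (ta_mem z))
lemma i1_zero : i1 y0 0 = i0 y0 y0 := ext' rfl (ta_i1 (by simp))

variable [MetricSpace Y]
lemma dist_eq (z w : Wd y0) : dist z w = dist (pr z) (pr w) + |ta z - ta w| := by
  show dist z.1 w.1 = _
  rw [WithLp.prod_dist_eq_add (by norm_num)]
  simp [pr, ta, Real.dist_eq]

lemma cont_pr : Continuous (pr : Wd y0 → Y) := by
  apply LipschitzWith.continuous (K := 1)
  apply LipschitzWith.of_dist_le_mul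
  intro x y
  rw [dist_eq x y]; simp
lemma cont_ta : Continuous (ta : Wd y0 → ℝ) := by
  apply LipschitzWith.continuous (K := 1)
  apply LipschitzWith.of_dist_le_mul
  intro x y
  rw [dist_eq x y, Real.dist_eq]; simp
lemma cont_i0 : Continuous (i0 y0) := by
  apply LipschitzWith.continuous (K := 1)
  apply LipschitzWith.of_dist_le_mul
  intro x y
  rw [dist_eq]; simp
lemma cont_i1 : Continuous (i1 y0) := by
  have : Isometry (fun s : Icc (0:ℝ) 1 => i1 y0 s.1) := by
    apply Isometry.of_dist_eq
    intro s t
    rw [dist_eq, ta_i1 s.2, ta_i1 t.2]; simp [Subtype.dist_eq, Real.dist_eq]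
  have h2 := this.continuous.comp (continuous_projIcc (a := (0:ℝ)) (b := 1) (h := zero_le_one))
  convert h2 using 1
  funext t
  refine ext' (pr_i1 t) ?_
  simp only [comp_apply]
  rw [ta_i1 (Subtype.coe_prop _)]
  rfl

lemma range_union : range (i0 y0) ∪ i1 y0 '' Icc 0 1 = univ := by
  rw [eq_univ_iff_forall]
  intro z
  rcases cases z with h | h
  · exact Or.inl ⟨_, i0_pr h⟩
  · exact Or.inr ⟨_, ta_mem z, i1_ta h⟩

instance [CompactSpace Y] : CompactSpace (Wd y0) := by
  constructor
  rw [← range_union]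
  exact (isCompact_range cont_i0).union (isCompact_Icc.image cont_i1)

lemma mem_seg_iff {x y z : Wd y0} : z ∈ seg x y ↔ pr z ∈ seg (pr x) (pr y) ∧
    |ta x - ta z| + |ta z - ta y| = |ta x - ta y| := by
  rw [mem_seg, mem_seg, dist_eq, dist_eq, dist_eq]
  have h1 := dist_triangle (pr x) (pr z) (pr y)
  have h2 := abs_sub_le (ta x) (ta z) (ta y)
  constructor
  · intro h; constructor <;> linarith
  · rintro ⟨h, h'⟩; linarith

lemma abs_iff {a b c : ℝ} : |a - c| + |c - b| = |a - b| ↔ c ∈ uIcc a b := by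
  rw [mem_uIcc]
  constructor
  · intro h
    rcases le_total a c with h1 | h1 <;> rcases le_total c b with h2 | h2
    · exact Or.inl ⟨h1, h2⟩
    · rcases le_total a b with h3 | h3
      · rw [abs_of_nonpos (sub_nonpos.2 h1), abs_of_nonneg (sub_nonneg.2 h2), abs_of_nonpos (sub_nonpos.2 h3)] at h
        left; constructor <;> linarith
      · rw [abs_of_nonpos (sub_nonpos.2 h1), abs_of_nonneg (sub_nonneg.2 h2), abs_of_nonneg (sub_nonneg.2 h3)] at h
        right; constructor <;> linarith
    · rcases le_total a b with h3 | h3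
      · rw [abs_of_nonneg (sub_nonneg.2 h1), abs_of_nonpos (sub_nonpos.2 h2), abs_of_nonpos (sub_nonpos.2 h3)] at h
        left; constructor <;> linarith
      · rw [abs_of_nonneg (sub_nonneg.2 h1), abs_of_nonpos (sub_nonpos.2 h2), abs_of_nonneg (sub_nonneg.2 h3)] at h
        right; constructor <;> linarith
    · exact Or.inr ⟨h2, h1⟩
  · rintro (⟨h1, h2⟩ | ⟨h1, h2⟩)
    · rw [abs_of_nonpos (by linarith), abs_of_nonpos (by linarith), abs_of_nonpos (by linarith)]; ring
    · rw [abs_of_nonneg (by linarith), abs_of_nonneg (by linarith), abs_of_nonneg (by linarith)]; ring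

lemma seg_mixed (hY : IsRT Y) (y : Y) {t : ℝ} (ht : t ∈ Icc (0:ℝ) 1) :
    seg (i0 y0 y) (i1 y0 t) = i0 y0 '' seg y y0 ∪ i1 y0 '' Icc 0 t := by
  ext z
  rw [mem_seg_iff, abs_iff, ta_i1 ht, ta_i0, uIcc_of_le ht.1, pr_i0, pr_i1]
  constructor
  · rintro ⟨h1, h2⟩
    rcases cases z with h | h
    · exact Or.inl ⟨_, h1, i0_pr h⟩
    · exact Or.inr ⟨_, h2, i1_ta h⟩
  · rintro (⟨w, hw, rfl⟩ | ⟨s, hs, rfl⟩)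
    · exact ⟨hw, by simp [ht.1]⟩
    · rw [ta_i1 ⟨hs.1, hs.2.trans ht.2⟩]
      exact ⟨right_mem _ _, hs⟩

theorem isRT (hY : IsRT Y) : IsRT (Wd y0) := by
  have hmix : ∀ (y : Y) (t : ℝ), t ∈ Icc (0:ℝ) 1 → IsPreconnected (seg (i0 y0 y) (i1 y0 t)) := by
    intro y t ht
    rw [seg_mixed hY y ht]
    refine IsPreconnected.union (i0 y0 y0) ⟨_, right_mem _ _, rfl⟩ ⟨0, ⟨le_rfl, ht.1⟩, i1_zero⟩
      ((hY.conn _ _).image _ cont_i0.continuousOn) (isPreconnected_Icc.image _ cont_i1.continuousOn)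
  refine ⟨?_, ?_, ?_⟩
  · intro x y
    rcases cases x with hx | hx <;> rcases cases y with hy | hy
    · have : seg x y = i0 y0 '' seg (pr x) (pr y) := by
        ext z
        rw [mem_seg_iff, abs_iff, hx, hy]
        constructor
        · rintro ⟨h1, h2⟩
          exact ⟨_, h1, i0_pr (by simpa using h2)⟩
        · rintro ⟨w, hw, rfl⟩
          exact ⟨hw, by simp⟩
      rw [this]
      exact (hY.conn _ _).image _ cont_i0.continuousOn
    · rw [← i0_pr hx, ← i1_ta hy]; exact hmix _ _ (ta_mem y)
    · rw [seg_symm, ← i0_pr hy, ← i1_ta hx]; exact hmix _ _ (ta_mem x)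
    · have : seg x y = i1 y0 '' uIcc (ta x) (ta y) := by
        ext z
        rw [mem_seg_iff, abs_iff, hx, hy]
        constructor
        · rintro ⟨h1, h2⟩
          exact ⟨_, h2, i1_ta (seg_self h1)⟩
        · rintro ⟨w, hw, rfl⟩
          rw [ta_i1 ((convex_Icc (0:ℝ) 1).ordConnected.uIcc_subset (ta_mem x) (ta_mem y) hw)]
          exact ⟨left_mem _ _, hw⟩
      rw [this]
      exact isPreconnected_uIcc.image _ cont_i1.continuousOn
  · intro T hT x hx y hy z hz
    rw [mem_seg_iff, abs_iff] at hz
    have hp1 : pr z ∈ pr '' T := hY.image hT cont_pr.continuousOn hx hy hz.1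
    have hp2 : ta z ∈ ta '' T :=
      ((hT.image _ cont_ta.continuousOn).ordConnected).uIcc_subset (mem_image_of_mem _ hx)
        (mem_image_of_mem _ hy) hz.2
    obtain ⟨w, hw, hwz⟩ := hp1
    obtain ⟨w', hw', hwz'⟩ := hp2
    by_cases h1 : pr z = y0
    · by_cases h2 : ta z = 0
      · by_contra hzT
        have hsub := hT.subset_or_subset (u := {z : Wd y0 | pr z ≠ y0}) (v := {z : Wd y0 | ta z ≠ 0})
          (isOpen_ne_fun cont_pr continuous_const) (isOpen_ne_fun cont_ta continuous_const) ?_ ?_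
        · rcases hsub with h | h
          · exact h hw (hwz.trans h1)
          · exact h hw' (hwz'.trans h2)
        · rw [Set.disjoint_left]
          intro a ha hb
          rcases cases a with h | h
          · exact hb h
          · exact ha h
        · intro a ha
          by_contra hcon
          simp only [mem_union, mem_ofPred_eq, not_or, not_not] at hcon
          apply hzT
          rwa [ext' (h1.trans hcon.1.symm) (h2.trans hcon.2.symm)]
      · have : pr w' = y0 := (cases w').resolve_left (by rw [hwz']; exact h2)
        rwa [ext' (h1.trans this.symm) hwz'.symm]
    · have hz0 := (cases z).resolve_right h1
      have : ta w = 0 := (cases w).resolve_right (by rw [hwz]; exact h1)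
      rwa [ext' hwz.symm (hz0.trans this.symm)]
  · obtain ⟨V, hV⟩ := hY.fin
    classical
    refine ⟨V.image (i0 y0) ∪ {i1 y0 1}, fun p x => ?_⟩
    rcases cases x with hx | hx
    · obtain ⟨v, hv, hvx⟩ := hV (pr p) (pr x)
      refine ⟨i0 y0 v, by simp only [Finset.mem_union]; exact Or.inl (Finset.mem_image_of_mem _ hv), ?_⟩
      rw [mem_seg_iff]
      exact ⟨hvx, by simp [hx]⟩
    · by_cases hle : ta p ≤ ta x
      · refine ⟨i1 y0 1, by simp, ?_⟩
        rw [mem_seg_iff, abs_iff, ta_i1 (by simp), uIcc_of_le (ta_mem p).2, hx]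
        exact ⟨right_mem _ _, hle, (ta_mem x).2⟩
      · push Not at hle
        obtain ⟨v, hv, -⟩ := hV y0 y0
        refine ⟨i0 y0 v, by simp only [Finset.mem_union]; exact Or.inl (Finset.mem_image_of_mem _ hv), ?_⟩
        have hp : pr p = y0 := (cases p).resolve_left (by have := (ta_mem x).1; intro h; linarith)
        rw [mem_seg_iff, abs_iff, hx, hp, ta_i0, uIcc_of_ge (ta_mem p).1]
        exact ⟨left_mem _ _, (ta_mem x).1, hle.le⟩

end Wd

end TreeEnt

namespace TreeEnt
universe u

/-- edge data -/
structure Edge {Y : Type*} [MetricSpace Y] (φ : ℝ → Y) (r : Y → ℝ) : Prop where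
  cφ : Continuous φ
  cr : Continuous r
  mem : ∀ y, r y ∈ Icc (0:ℝ) 1
  rφ : ∀ t ∈ Icc (0:ℝ) 1, r (φ t) = t
  φr : ∀ y, r y ∈ Ioo (0:ℝ) 1 → φ (r y) = y

def HasDt (X : Type u) [MetricSpace X] (ℬ : Finset (Set X)) (v0 : X) : Prop :=
  ∃ (Y : Type u) (_ : MetricSpace Y) (_ : CompactSpace Y) (j : Y → X) (φ : Set X → ℝ → Y)
    (r : Set X → Y → ℝ), IsRT Y ∧ Continuous j ∧ Injective j ∧
    range j = {v0} ∪ ⋃₀ (ℬ : Set (Set X)) ∧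
    ((ℬ = ∅ ∧ Subsingleton Y) ∨ ∀ y, ∃ A ∈ ℬ, ∃ t ∈ Icc (0:ℝ) 1, φ A t = y) ∧
    ∀ A ∈ ℬ, Edge (φ A) (r A) ∧ Par A (j ∘ φ A)

lemma HasDt.base (X : Type u) [MetricSpace X] (v0 : X) : HasDt X ∅ v0 := by
  refine ⟨PUnit, inferInstance, inferInstance, fun _ => v0, fun _ _ => PUnit.unit, fun _ _ => 0,
    ?_, continuous_const, injective_of_subsingleton _, by simp, Or.inl ⟨rfl, inferInstance⟩, by simp⟩
  refine ⟨fun x y => Set.Subsingleton.isPreconnected (fun a _ b _ => rfl),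
    fun S hS x hx y hy z hz => hx, ⟨{PUnit.unit}, fun p x => ⟨PUnit.unit, by simp, right_mem _ _⟩⟩⟩

lemma HasDt.step {X : Type u} [MetricSpace X] {ℬ : Finset (Set X)} {v0 : X} (h : HasDt X ℬ v0)
    [DecidableEq (Set X)] {A : Set X} (hA : A ∉ ℬ) {Φ : ℝ → X} (hΦ : Par A Φ)
    (h0 : Φ 0 ∈ ({v0} ∪ ⋃₀ (ℬ : Set (Set X)) : Set X))
    (h1 : ∀ t ∈ Icc (0:ℝ) 1, Φ t ∈ ({v0} ∪ ⋃₀ (ℬ : Set (Set X)) : Set X) → t = 0)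
    (hB : ∀ B ∈ ℬ, Φ 0 ∈ B → IsArcEndpoint B (Φ 0)) : HasDt X (insert A ℬ) v0 := by
  classical
  obtain ⟨Y, _, _, j, φ, r, hY, hjc, hji, hjr, hcov, hE⟩ := h
  rw [← hjr] at h0 h1
  obtain ⟨y0, hy0⟩ := h0
  let j' : Wd y0 → X := fun z => if Wd.ta z = 0 then j (Wd.pr z) else Φ (Wd.ta z)
  have hj0 : ∀ y, j' (Wd.i0 y0 y) = j y := by intro y; simp [j']
  have hj1' : ∀ z : Wd y0, Wd.pr z = y0 → j' z = Φ (Wd.ta z) := by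
    intro z hz
    by_cases h : Wd.ta z = 0
    · simp [j', h, hz, hy0]
    · simp [j', h]
  have hj1 : ∀ t ∈ Icc (0:ℝ) 1, j' (Wd.i1 y0 t) = Φ t := by
    intro t ht
    rw [hj1' _ rfl, Wd.ta_i1 ht]
  have hj'c : Continuous j' := by
    have hc1 : IsClosed {z : Wd y0 | Wd.ta z = 0} := isClosed_eq Wd.cont_ta continuous_const
    have hc2 : IsClosed {z : Wd y0 | Wd.pr z = y0} := isClosed_eq Wd.cont_pr continuous_const
    have hu : {z : Wd y0 | Wd.ta z = 0} ∪ {z : Wd y0 | Wd.pr z = y0} = univ :=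
      eq_univ_iff_forall.mpr (fun z => Wd.cases z)
    rw [← continuousOn_univ, ← hu]
    apply ContinuousOn.union_of_isClosed _ _ hc1 hc2
    · apply (hjc.comp Wd.cont_pr).continuousOn.congr
      intro z hz
      have : Wd.ta z = 0 := hz
      simp [j', this]
    · apply (hΦ.cont.comp Wd.cont_ta).continuousOn.congr
      intro z hz
      exact hj1' z hz
  have hj'i : Injective j' := by
    have key : ∀ z w : Wd y0, Wd.ta z = 0 → Wd.ta w ≠ 0 → j' z ≠ j' w := by
      intro z w hz hw heq
      have hpw := (Wd.cases w).resolve_left hw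
      rw [hj1' w hpw, ← Wd.i0_pr hz, hj0] at heq
      exact hw (h1 _ (Wd.ta_mem w) ⟨_, heq⟩)
    intro z w hzw
    by_cases hz : Wd.ta z = 0 <;> by_cases hw : Wd.ta w = 0
    · rw [← Wd.i0_pr hz, ← Wd.i0_pr hw, hj0, hj0] at hzw
      rw [← Wd.i0_pr hz, ← Wd.i0_pr hw, hji hzw]
    · exact absurd hzw (key _ _ hz hw)
    · exact absurd hzw.symm (key _ _ hw hz)
    · have hpz := (Wd.cases z).resolve_left hz
      have hpw := (Wd.cases w).resolve_left hw
      rw [hj1' w hpw, hj1' z hpz] at hzw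
      exact Wd.ext' (hpz.trans hpw.symm) (hΦ.inj (Wd.ta_mem z) (Wd.ta_mem w) hzw)
  refine ⟨Wd y0, inferInstance, inferInstance, j', fun B => if B = A then Wd.i1 y0 else Wd.i0 y0 ∘ φ B,
    fun B => if B = A then Wd.ta else r B ∘ Wd.pr, Wd.isRT hY, hj'c, hj'i, ?_, Or.inr ?_, ?_⟩
  · have e1 : range j' = range j ∪ A := by
      rw [← image_univ, ← Wd.range_union, image_union, ← range_comp, image_image, ← hΦ.im]
      congr 1
      · congr 1; funext y; exact hj0 y
      · exact image_congr (fun t ht => hj1 t ht)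
    rw [e1, hjr]
    simp only [Finset.coe_insert, sUnion_insert]
    rw [union_assoc, union_comm _ A]
  · intro z
    by_cases hz : Wd.pr z = y0
    · exact ⟨A, by simp, Wd.ta z, Wd.ta_mem z, by simp [Wd.i1_ta hz]⟩
    · have hz0 := (Wd.cases z).resolve_right hz
      rcases hcov with ⟨-, hs⟩ | hcov
      · exact absurd (Subsingleton.elim _ _) hz
      · obtain ⟨B, hB, t, ht, h⟩ := hcov (Wd.pr z)
        have hBA : B ≠ A := by rintro rfl; exact hA hB
        exact ⟨B, by simp [hB], t, ht, by simp [hBA, h, Wd.i0_pr hz0]⟩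
  · intro B hBm
    by_cases hBA : B = A
    · subst hBA
      simp only [if_true]
      refine ⟨⟨Wd.cont_i1, Wd.cont_ta, Wd.ta_mem, fun t ht => Wd.ta_i1 ht, ?_⟩, ⟨hj'c.comp Wd.cont_i1, ?_, ?_⟩⟩
      · intro z hz
        exact Wd.i1_ta ((Wd.cases z).resolve_left hz.1.ne')
      · intro s hs t ht hst
        simp only [comp_apply] at hst
        rw [hj1 s hs, hj1 t ht] at hst
        exact hΦ.inj hs ht hst
      · rw [← hΦ.im]
        exact image_congr (fun t ht => hj1 t ht)
    · have hBm' : B ∈ ℬ := by simpa [hBA] using hBm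
      obtain ⟨hEB, hPB⟩ := hE B hBm'
      simp only [hBA, if_false]
      have hcomp : j' ∘ Wd.i0 y0 ∘ φ B = j ∘ φ B := by funext t; exact hj0 _
      refine ⟨⟨Wd.cont_i0.comp hEB.cφ, hEB.cr.comp Wd.cont_pr, fun z => hEB.mem _, fun t ht => hEB.rφ t ht, ?_⟩, ?_⟩
      · intro z hz
        have e := hEB.φr _ hz
        have hne : Wd.pr z ≠ y0 := by
          intro hp
          have h3 : Φ 0 = (j ∘ φ B) (r B (Wd.pr z)) := by
            rw [← hy0]; simp only [comp_apply]; rw [e, hp]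
          have hz' : r B (Wd.pr z) ∈ Icc (0:ℝ) 1 := hEB.mem _
          have h4 : Φ 0 ∈ B := by rw [h3]; exact hPB.mem hz'
          have h5 := hB B hBm' h4
          rw [h3] at h5
          rcases hPB.endpoint hz' h5 with h6 | h6
          · exact hz.1.ne' h6
          · exact hz.2.ne h6
        have hz0 := (Wd.cases z).resolve_right hne
        show Wd.i0 y0 (φ B (r B (Wd.pr z))) = z
        rw [e, Wd.i0_pr hz0]
      · rw [hcomp]; exact hPB

/-- the final data -/
structure Fin' (X : Type u) [MetricSpace X] (Y : Type u) [MetricSpace Y] (e : Y ≃ₜ X)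
    (ι : Type u) (φ : ι → ℝ → X) (r : ι → X → ℝ) : Prop where
  rt : IsRT Y
  edge : ∀ i, Edge (φ i) (r i)
  cov : ∀ x, ∃ i, ∃ t ∈ Icc (0:ℝ) 1, φ i t = x
  disj : ∀ i i', i ≠ i' → ∀ t ∈ Icc (0:ℝ) 1, ∀ t' ∈ Icc (0:ℝ) 1, φ i t = φ i' t' → t = 0 ∨ t = 1

theorem step0 {X : Type u} [MetricSpace X] (hX : IsTree X) :
    ∃ (Y : Type u) (_ : MetricSpace Y) (_ : CompactSpace Y) (e : Y ≃ₜ X) (ι : Type u) (_ : Fintype ι)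
      (φ : ι → ℝ → X) (r : ι → X → ℝ), Fin' X Y e ι φ r := by
  classical
  obtain ⟨hcomp, hconn, ⟨𝒜, harc, hun, hdis⟩, hno⟩ := hX
  obtain ⟨x0⟩ := hconn.toNonempty
  obtain ⟨A0, hA0, hx0⟩ : x0 ∈ ⋃₀ (𝒜 : Set (Set X)) := by rw [hun]; trivial
  obtain ⟨Φ0, hΦ0⟩ := exists_par (harc A0 hA0)
  set v0 := Φ0 0 with hv0
  have hend0 : ∀ B ∈ 𝒜, v0 ∈ B → ∀ Φ, Par B Φ → ∀ t ∈ Icc (0:ℝ) 1, Φ t = v0 → t = 0 ∨ t = 1 := by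
    intro B hB hvB Φ hP t ht htv
    by_cases hBA : B = A0
    · subst hBA
      apply hP.endpoint ht
      rw [htv]
      refine ⟨hvB, ?_⟩
      have : B \ {v0} = Φ0 '' Ioc 0 1 := by
        ext x
        constructor
        · rintro ⟨hx, hxv⟩
          rw [← hΦ0.im] at hx
          obtain ⟨s, hs, rfl⟩ := hx
          refine ⟨s, ⟨lt_of_le_of_ne hs.1 ?_, hs.2⟩, rfl⟩
          rintro rfl
          exact hxv rfl
        · rintro ⟨s, hs, rfl⟩
          refine ⟨hΦ0.mem ⟨hs.1.le, hs.2⟩, fun h => ?_⟩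
          exact hs.1.ne (hΦ0.inj (by simp) ⟨hs.1.le, hs.2⟩ (Eq.symm h))
      rw [this]
      exact (isConnected_Ioc zero_lt_one).image _ hΦ0.cont.continuousOn
    · have hv0A : v0 ∈ A0 := by rw [← hΦ0.im]; exact ⟨0, by simp, rfl⟩
      have := (hdis B hB A0 hA0 hBA v0 ⟨hvB, hv0A⟩).1
      rw [← htv] at this
      exact hP.endpoint ht this
  have hfull : ∃ ℬ ⊆ 𝒜, HasDt X ℬ v0 ∧ ({v0} ∪ ⋃₀ (ℬ : Set (Set X)) : Set X) = univ := by
    by_contra hcon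
    push Not at hcon
    have hall : ∀ n : ℕ, ∃ ℬ ⊆ 𝒜, ℬ.card = n ∧ HasDt X ℬ v0 := by
      intro n
      induction n with
      | zero => exact ⟨∅, by simp, rfl, HasDt.base X v0⟩
      | succ n ih =>
        obtain ⟨ℬ, hℬ, hcard, hD⟩ := ih
        set S : Set X := {v0} ∪ ⋃₀ (ℬ : Set (Set X)) with hS
        have hne := hcon ℬ hℬ hD
        -- compactness of unions
        have hclA : ∀ A ∈ 𝒜, IsClosed A := by
          intro A hA
          obtain ⟨Φ, hP⟩ := exists_par (harc A hA)
          rw [← hP.im]; exact (isCompact_Icc.image hP.cont).isClosed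
        have hSc : IsClosed S := by
          apply isClosed_singleton.union
          rw [sUnion_eq_biUnion]
          exact ℬ.finite_toSet.isClosed_biUnion (fun A hA => hclA A (hℬ hA))
        have hRc : IsClosed (⋃₀ ((𝒜 \ ℬ : Finset (Set X)) : Set (Set X))) := by
          rw [sUnion_eq_biUnion]
          exact (𝒜 \ ℬ).finite_toSet.isClosed_biUnion
            (fun A hA => hclA A (Finset.mem_sdiff.mp hA).1)
        have hmeet : ∃ A ∈ 𝒜, A ∉ ℬ ∧ (A ∩ S).Nonempty := by
          have hp := hconn.isPreconnected_univ
          rw [isPreconnected_closed_iff] at hp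
          have hq := hp S _ hSc hRc ?_ ?_ ?_
          · obtain ⟨x, -, hxS, hxR⟩ := hq
            obtain ⟨A, hA, hxA⟩ := hxR
            have := Finset.mem_sdiff.mp hA
            exact ⟨A, this.1, this.2, x, hxA, hxS⟩
          · intro x _
            obtain ⟨A, hA, hxA⟩ : x ∈ ⋃₀ (𝒜 : Set (Set X)) := by rw [hun]; trivial
            by_cases hAB : A ∈ ℬ
            · exact Or.inl (Or.inr ⟨A, hAB, hxA⟩)
            · exact Or.inr ⟨A, Finset.mem_sdiff.mpr ⟨hA, hAB⟩, hxA⟩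
          · exact ⟨v0, trivial, Or.inl rfl⟩
          · obtain ⟨x, hx⟩ := (ne_univ_iff_exists_notMem _).mp hne
            obtain ⟨A, hA, hxA⟩ : x ∈ ⋃₀ (𝒜 : Set (Set X)) := by rw [hun]; trivial
            refine ⟨x, trivial, A, Finset.mem_sdiff.mpr ⟨hA, fun hAB => hx (Or.inr ⟨A, hAB, hxA⟩)⟩, hxA⟩
        obtain ⟨A, hA, hAB, x, hxA, hxS⟩ := hmeet
        have hendS : ∀ Φ, Par A Φ → ∀ t ∈ Icc (0:ℝ) 1, Φ t ∈ S → t = 0 ∨ t = 1 := by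
          intro Φ hP t ht htS
          have htA : Φ t ∈ A := by rw [← hP.im]; exact mem_image_of_mem _ ht
          rcases htS with h | ⟨B, hB, htB⟩
          · have h' : Φ t = v0 := h
            exact hend0 A hA (h' ▸ htA) Φ hP t ht h'
          · have hne : A ≠ B := by rintro rfl; exact hAB hB
            exact hP.endpoint ht (hdis A hA B (hℬ hB) hne _ ⟨htA, htB⟩).1
        have hfin : ∀ Φ, Par A Φ → Φ 0 ∈ S → HasDt X (insert A ℬ) v0 := by
          intro Φ hP h0
          have h1 : Φ 1 ∉ S := by
            intro h1
            obtain ⟨Y, _, _, j, φ, r, hY, hjc, hji, hjr, -, -⟩ := hD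
            rw [← hS] at hjr
            obtain ⟨C, hC⟩ := circ_of_both hY hjc hji hP (by rw [hjr]; exact hendS Φ hP)
              (by rw [hjr]; exact h0) (by rw [hjr]; exact h1)
            exact hno C hC
          refine hD.step hAB hP h0 ?_ ?_
          · intro t ht htS
            rcases hendS Φ hP t ht htS with h | h
            · exact h
            · rw [h] at htS; exact absurd htS h1
          · intro B hB h0B
            have hne : A ≠ B := by rintro rfl; exact hAB hB
            have h0A : Φ 0 ∈ A := by rw [← hP.im]; exact ⟨0, by simp, rfl⟩
            exact (hdis A hA B (hℬ hB) hne _ ⟨h0A, h0B⟩).2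
        refine ⟨insert A ℬ, Finset.insert_subset hA hℬ, by rw [Finset.card_insert_of_notMem hAB, hcard], ?_⟩
        obtain ⟨Φ, hP⟩ := exists_par (harc A hA)
        rw [← hP.im] at hxA
        obtain ⟨t, ht, rfl⟩ := hxA
        rcases hendS Φ hP t ht hxS with h | h
        · exact hfin Φ hP (h ▸ hxS)
        · exact hfin _ hP.flip (by simp only [sub_zero]; exact h ▸ hxS)
    obtain ⟨ℬ, hℬ, hc, -⟩ := hall (𝒜.card + 1)
    have := Finset.card_le_card hℬ
    omega
  obtain ⟨ℬ, hℬ, ⟨Y, _, _, j, φ, r, hY, hjc, hji, hjr, hcov, hE⟩, hU⟩ := hfull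
  rw [hU, range_eq_univ] at hjr
  let e : Y ≃ₜ X := Continuous.homeoOfEquivCompactToT2 (f := Equiv.ofBijective j ⟨hji, hjr⟩) hjc
  have he : ∀ y, e y = j y := fun y => rfl
  refine ⟨Y, inferInstance, inferInstance, e, ℬ, inferInstance, fun A => j ∘ φ A.1, fun A => r A.1 ∘ e.symm, hY, ?_, ?_, ?_⟩
  · rintro ⟨A, hA⟩
    obtain ⟨h, -⟩ := hE A hA
    refine ⟨hjc.comp h.cφ, h.cr.comp e.symm.continuous, fun y => h.mem _, ?_, ?_⟩
    · intro t ht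
      simp only [comp_apply]
      rw [← he, e.symm_apply_apply]; exact h.rφ t ht
    · intro x hx
      simp only [comp_apply] at hx ⊢
      rw [h.φr _ hx, ← he, e.apply_symm_apply]
  · intro x
    rcases hcov with ⟨-, hs⟩ | hcov
    · exfalso
      have : Subsingleton X := e.symm.injective.subsingleton
      have := hΦ0.inj (x₁ := 0) (x₂ := 1) (by simp) (by simp) (Subsingleton.elim _ _)
      norm_num at this
    · obtain ⟨A, hA, t, ht, h⟩ := hcov (e.symm x)
      exact ⟨⟨A, hA⟩, t, ht, by simp only [comp_apply]; rw [h, ← he, e.apply_symm_apply]⟩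
  · rintro ⟨A, hA⟩ ⟨B, hB⟩ hne t ht t' ht' h
    have hne' : A ≠ B := fun h => hne (Subtype.ext h)
    have hPA := (hE A hA).2
    have hPB := (hE B hB).2
    apply hPA.endpoint ht
    have h1 : (j ∘ φ A) t ∈ A := hPA.mem ht
    have h2 : (j ∘ φ A) t ∈ B := by
      have : (j ∘ φ A) t = (j ∘ φ B) t' := h
      rw [this]; exact hPB.mem ht'
    exact (hdis A (hℬ hA) B (hℬ hB) hne' _ ⟨h1, h2⟩).1

end TreeEnt

namespace TreeEnt
universe u

lemma conj_iter {X Y : Type*} (e : Y ≃ X) (f : X → X) (n : ℕ) (y : Y) :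
    (e.symm ∘ f ∘ e)^[n] y = e.symm (f^[n] (e y)) := by
  induction n generalizing y with
  | zero => simp
  | succ n ih => rw [iterate_succ_apply, ih, iterate_succ_apply]; simp

theorem forward {X : Type u} [MetricSpace X] (hX : IsTree X) {f : X → X} (hf : Continuous f)
    (h0 : topEntropy f = 0) : ∀ p ∈ Function.periodicPts f, ∀ ε > 0, ∃ δ > 0,
      ∀ y ∈ chainRecurrentSet f, dist y p < δ → ∀ n : ℕ, dist (f^[n] y) (f^[n] p) < ε := by
  have : CompactSpace X := hX.1
  obtain ⟨Y, _, _, e, ι, _, φ, r, hF⟩ := step0 hX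
  by_contra hcon
  push Not at hcon
  obtain ⟨p, hp, ε, he, hbad⟩ := hcon
  set F : Y → Y := e.symm ∘ f ∘ e with hFdef
  have hit : ∀ n y, F^[n] y = e.symm (f^[n] (e y)) := fun n y => conj_iter e.toEquiv f n y
  have hFc : Continuous F := e.symm.continuous.comp (hf.comp e.continuous)
  have u1 : UniformContinuous e := CompactSpace.uniformContinuous_of_continuous e.continuous
  have u2 : UniformContinuous e.symm := CompactSpace.uniformContinuous_of_continuous e.symm.continuous
  rw [Metric.uniformContinuous_iff] at u1 u2
  obtain ⟨ε', he', hε'⟩ := u1 ε he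
  have hCR : ∀ y ∈ chainRecurrentSet f, e.symm y ∈ chainRecurrentSet F := by
    intro y hy η hη
    obtain ⟨δ, hδ, hδ'⟩ := u2 η hη
    obtain ⟨n, hn, c, c0, cn, hc⟩ := hy δ hδ
    refine ⟨n, hn, fun i => e.symm (c i), by simp [c0], by simp [cn], fun i hi => ?_⟩
    have := hδ' (hc i hi)
    simpa [F] using this
  have hA : AHS F := by
    refine theoremC hF.rt hFc (p := e.symm p) ?_ he' ?_
    · obtain ⟨n, hn, hnp⟩ := hp
      refine ⟨n, hn, ?_⟩
      unfold IsPeriodicPt IsFixedPt at *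
      rw [hit, e.apply_symm_apply, hnp]
    · intro δ' hδ'
      obtain ⟨δ, hδ, hh⟩ := u2 δ' hδ'
      obtain ⟨y, hy, hyp, n, hn⟩ := hbad δ hδ
      refine ⟨e.symm y, hCR y hy, hh hyp, n, ?_⟩
      by_contra hlt
      push Not at hlt
      have := hε' hlt
      rw [hit, hit] at this
      simp only [e.apply_symm_apply] at this
      linarith
  obtain ⟨N, hN, P, Q, hPc, hQc, hdis, hPn, h1, h2⟩ := AHS.hs1 hF.rt hFc hA
  refine HS1.entropy_pos ⟨N, hN, e '' P, e '' Q, (e.isClosed_image).mpr hPc,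
    (e.isClosed_image).mpr hQc, (disjoint_image_iff e.injective).mpr hdis, hPn.image _, ?_, ?_⟩ h0
  all_goals
    rw [← image_union]
    rintro _ ⟨y, hy, rfl⟩
  · obtain ⟨z, hz, hzy⟩ := h1 hy
    exact ⟨e z, mem_image_of_mem _ hz, by rw [← hzy, hit, e.apply_symm_apply]⟩
  · obtain ⟨z, hz, hzy⟩ := h2 hy
    exact ⟨e z, mem_image_of_mem _ hz, by rw [← hzy, hit, e.apply_symm_apply]⟩

end TreeEnt

namespace TreeEnt

section comb
variable {σ κ : Type*} (st : σ → κ → σ) (b : κ → σ) (ok : σ → Prop)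

/-- admissible words: states stay ok and all full visits are in `F` -/
def Adm (F : Finset κ) : σ → List κ → Prop
  | _, [] => True
  | s, j :: w => ok (st s j) ∧ (st s j = b j → j ∈ F) ∧ Adm F (st s j) w

lemma adm_first {F : Finset κ} {s : σ} {w : List κ} (h : Adm st b ok F s w) :
    Adm st b ok ∅ s w ∨ ∃ u j v, w = u ++ j :: v ∧ Adm st b ok ∅ s u ∧ j ∈ F ∧
      (u ++ [j]).foldl st s = b j ∧ Adm st b ok F (b j) v := by
  induction w generalizing s with
  | nil => left; trivial
  | cons i w ih =>
    obtain ⟨h1, h2, h3⟩ := h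
    by_cases hf : st s i = b i
    · right
      exact ⟨[], i, w, rfl, trivial, h2 hf, by simpa using hf, hf ▸ h3⟩
    · rcases ih h3 with h4 | ⟨u, j, v, rfl, hu, hj, hr, hv⟩
      · left; exact ⟨h1, fun h => absurd h hf, h4⟩
      · right
        exact ⟨i :: u, j, v, rfl, ⟨h1, fun h => absurd h hf, hu⟩, hj, by simpa using hr, hv⟩

lemma adm_last [DecidableEq κ] {F : Finset κ} (j : κ) {s : σ} {w : List κ} (h : Adm st b ok F s w) :
    Adm st b ok (F.erase j) s w ∨ ∃ x y, w = (x ++ [j]) ++ y ∧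
      (x ++ [j]).foldl st s = b j ∧ Adm st b ok (F.erase j) (b j) y := by
  induction w generalizing s with
  | nil => left; trivial
  | cons i w ih =>
    obtain ⟨h1, h2, h3⟩ := h
    rcases ih h3 with h4 | ⟨x, y, rfl, hr, hy⟩
    · by_cases hf : st s i = b i ∧ i = j
      · obtain ⟨hf, rfl⟩ := hf
        right
        exact ⟨[], w, rfl, by simpa using hf, hf ▸ h4⟩
      · left
        refine ⟨h1, fun h => ?_, h4⟩
        rw [Finset.mem_erase]
        exact ⟨fun hij => hf ⟨h, hij⟩, h2 h⟩
    · right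
      exact ⟨i :: x, y, rfl, by simpa using hr, hy⟩

variable [Fintype κ] [DecidableEq κ]

theorem count (G : σ → Prop) (hGb : ∀ j, G (b j)) (hGs : ∀ s j, G s → ok (st s j) → G (st s j))
    (c : ℕ) (hc1 : 1 ≤ c) (hc : ∀ s, G s → ∃ T : Finset κ, T.card ≤ c ∧
      ∀ j, ok (st s j) → st s j ≠ b j → j ∈ T)
    (hU : ∀ j x x', x.length = x'.length → (x ++ [j]).foldl st (b j) = b j →
      (x' ++ [j]).foldl st (b j) = b j → x = x')
    (k : ℕ) : ∀ (F : Finset κ), F.card = k → ∀ s, G s → ∀ n : ℕ, ∃ T : Finset (List κ),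
      T.card ≤ (1 + Fintype.card κ * (n + 1) ^ 2) ^ k * c ^ n ∧
      ∀ w, w.length = n → Adm st b ok F s w → w ∈ T := by
  classical
  -- base
  have base : ∀ (n : ℕ) s, G s → ∃ T : Finset (List κ), T.card ≤ c ^ n ∧
      ∀ w, w.length = n → Adm st b ok ∅ s w → w ∈ T := by
    intro n
    induction n with
    | zero =>
      intro s _
      refine ⟨{[]}, by simp, fun w hw _ => ?_⟩
      simp [List.length_eq_zero_iff.mp hw]
    | succ n ih =>
      intro s hs
      obtain ⟨T, hT, hTm⟩ := hc s hs
      have : ∀ j, ∃ T' : Finset (List κ), T'.card ≤ c ^ n ∧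
          (ok (st s j) → ∀ w, w.length = n → Adm st b ok ∅ (st s j) w → w ∈ T') := by
        intro j
        by_cases hj : ok (st s j)
        · obtain ⟨T', h1, h2⟩ := ih _ (hGs s j hs hj)
          exact ⟨T', h1, fun _ => h2⟩
        · exact ⟨∅, by simp, fun h => absurd h hj⟩
      choose T' h1 h2 using this
      refine ⟨T.biUnion (fun j => (T' j).image (List.cons j)), ?_, ?_⟩
      · calc _ ≤ T.card * c ^ n :=
            Finset.card_biUnion_le_card_mul _ _ _ (fun j _ => Finset.card_image_le.trans (h1 j))
          _ ≤ c ^ (n+1) := by rw [pow_succ, mul_comm]; exact Nat.mul_le_mul_left _ hT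
      · intro w hw ha
        match w, hw, ha with
        | j :: w, hw, ⟨ha1, ha2, ha3⟩ =>
          rw [Finset.mem_biUnion]
          refine ⟨j, hTm j ha1 (fun h => by simpa using ha2 h), ?_⟩
          exact Finset.mem_image_of_mem _ (h2 j ha1 w (by simpa using hw) ha3)
  induction k with
  | zero =>
    intro F hF s hs n
    rw [Finset.card_eq_zero] at hF
    subst hF
    simpa using base n s hs
  | succ k ih =>
    intro F hF s hs n
    set K := Fintype.card κ with hK
    -- loops
    have hloop : ∀ (j : κ) (a : ℕ), ∃ l : List κ, ∀ x, (x = [] ∨ ∃ x', x = x' ++ [j] ∧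
        (x' ++ [j]).foldl st (b j) = b j) → x.length = a → x = l := by
      intro j a
      by_cases h : ∃ x, (x = [] ∨ ∃ x', x = x' ++ [j] ∧
        (x' ++ [j]).foldl st (b j) = b j) ∧ x.length = a
      · obtain ⟨l, hl, hla⟩ := h
        refine ⟨l, fun x hx hxa => ?_⟩
        rcases hl with rfl | ⟨l', rfl, hl'⟩
        · simp only [List.length_nil] at hla
          exact List.length_eq_zero_iff.mp (hxa.trans hla.symm)
        · rcases hx with rfl | ⟨x', rfl, hx'⟩
          · simp at hla hxa; omega
          · rw [hU j x' l' (by simp at hla hxa; omega) hx' hl']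
      · refine ⟨[], fun x hx hxa => absurd ⟨x, hx, hxa⟩ h⟩
    choose loop hloop using hloop
    choose T0 hT0 hT0m using fun m => base m s hs
    have hT1 : ∀ (j : κ) (m : ℕ), ∃ T : Finset (List κ), T.card ≤ (1 + K * (m + 1) ^ 2) ^ k * c ^ m ∧
      (j ∈ F → ∀ w, w.length = m → Adm st b ok (F.erase j) (b j) w → w ∈ T) := by
      intro j m
      by_cases hj : j ∈ F
      · obtain ⟨T, h1, h2⟩ := ih (F.erase j) (by rw [Finset.card_erase_of_mem hj, hF]; rfl) (b j) (hGb j) m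
        exact ⟨T, h1, fun _ => h2⟩
      · exact ⟨∅, by simp, fun h => absurd h hj⟩
    choose T1 hT1 hT1m using hT1
    refine ⟨T0 n ∪ ((Finset.univ : Finset κ) ×ˢ (Finset.range n ×ˢ Finset.range (n+1))).biUnion
      (fun q => Finset.image₂ (fun u y => u ++ q.1 :: (loop q.1 q.2.2 ++ y)) (T0 q.2.1)
        (T1 q.1 (n - 1 - q.2.1 - q.2.2))), ?_, ?_⟩
    · have hb : (((Finset.univ : Finset κ) ×ˢ (Finset.range n ×ˢ Finset.range (n+1))).biUnion
      (fun q => Finset.image₂ (fun u y => u ++ q.1 :: (loop q.1 q.2.2 ++ y)) (T0 q.2.1)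
        (T1 q.1 (n - 1 - q.2.1 - q.2.2)))).card ≤
          ((Finset.univ : Finset κ) ×ˢ (Finset.range n ×ˢ Finset.range (n+1))).card *
          ((1 + K * (n + 1) ^ 2) ^ k * c ^ n) := by
        apply Finset.card_biUnion_le_card_mul
        rintro ⟨j, m, a⟩ hq
        simp only [Finset.mem_product, Finset.mem_range] at hq
        obtain ⟨-, hm, ha⟩ := hq
        refine (Finset.card_image₂_le _ _ _).trans ?_
        calc _ ≤ c ^ m * ((1 + K * ((n - 1 - m - a) + 1) ^ 2) ^ k * c ^ (n - 1 - m - a)) :=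
              Nat.mul_le_mul (hT0 m) (hT1 _ _)
          _ = (1 + K * ((n - 1 - m - a) + 1) ^ 2) ^ k * c ^ (m + (n - 1 - m - a)) := by
              rw [pow_add]; ring
          _ ≤ _ := by
              apply Nat.mul_le_mul
              · gcongr; omega
              · exact Nat.pow_le_pow_right hc1 (by omega)
      refine (Finset.card_union_le _ _).trans ((Nat.add_le_add (hT0 n) hb).trans ?_)
      simp only [Finset.card_product, Finset.card_range, Finset.card_univ]
      rw [← hK]
      set P := (1 + K * (n + 1) ^ 2) ^ k with hP
      have hP1 : 1 ≤ P := Nat.one_le_pow _ _ (by omega)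
      have e1 : (1 + K * (n + 1) ^ 2) ^ (k+1) * c ^ n = P * c ^ n + K * (n+1)^2 * (P * c ^ n) := by
        rw [pow_succ, ← hP]; ring
      rw [e1]
      apply Nat.add_le_add
      · exact Nat.le_mul_of_pos_left _ hP1
      · apply Nat.mul_le_mul_right
        apply Nat.mul_le_mul_left
        nlinarith
    · intro w hw ha
      rw [Finset.mem_union]
      rcases adm_first st b ok ha with h | ⟨u, j, v, rfl, hu, hj, hr, hv⟩
      · left; exact hT0m n w hw h
      · right
        have key : ∃ x y, v = x ++ y ∧ (x = [] ∨ ∃ x', x = x' ++ [j] ∧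
            (x' ++ [j]).foldl st (b j) = b j) ∧ Adm st b ok (F.erase j) (b j) y := by
          rcases adm_last st b ok j hv with h | ⟨x, y, rfl, hx, hy⟩
          · exact ⟨[], v, rfl, Or.inl rfl, h⟩
          · exact ⟨x ++ [j], y, rfl, Or.inr ⟨x, rfl, hx⟩, hy⟩
        obtain ⟨x, y, rfl, hx, hy⟩ := key
        simp only [List.length_append, List.length_cons] at hw
        rw [Finset.mem_biUnion]
        refine ⟨(j, u.length, x.length), ?_, ?_⟩
        · simp only [Finset.mem_product, Finset.mem_univ, Finset.mem_range, true_and]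
          omega
        · simp only []
          rw [← hloop j x.length x hx rfl]
          exact Finset.mem_image₂_of_mem (hT0m _ u rfl hu) (hT1m j _ hj y (by omega) hy)

end comb
end TreeEnt

namespace TreeEnt

def Pc {X ι : Type*} (φ : ι → ℝ → X) (N : ℕ) (j : ι × Fin N) : Set X :=
  φ j.1 '' Icc ((j.2 : ℝ) / N) (((j.2 : ℝ) + 1) / N)

lemma pc_sub {N : ℕ} (l : Fin N) : Icc ((l : ℝ) / N) (((l : ℝ) + 1) / N) ⊆ Icc 0 1 := by
  have hN : (0:ℝ) < N := by exact_mod_cast (Nat.zero_le _).trans_lt l.2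
  apply Icc_subset_Icc
  · positivity
  · rw [div_le_one hN]; exact_mod_cast l.2

lemma branch {X ι : Type*} [MetricSpace X] [Fintype ι] [DecidableEq ι] {φ : ι → ℝ → X} {r : ι → X → ℝ}
    (hE : ∀ i, Edge (φ i) (r i))
    (hI : ∀ S T : Set X, IsPreconnected S → IsPreconnected T → IsPreconnected (S ∩ T))
    (N : ℕ) {D : Set X} (hD : IsPreconnected D) : ∃ T : Finset (ι × Fin N), T.card ≤ 2 * Fintype.card ι ∧
      ∀ j, (D ∩ Pc φ N j).Nonempty → D ∩ Pc φ N j ≠ Pc φ N j → j ∈ T := by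
  classical
  refine ⟨Finset.univ.filter (fun j => (D ∩ Pc φ N j).Nonempty ∧ D ∩ Pc φ N j ≠ Pc φ N j), ?_,
    fun j h1 h2 => by simp only [Finset.mem_filter, Finset.mem_univ, true_and]; exact ⟨h1, h2⟩⟩
  set T := Finset.univ.filter (fun j : ι × Fin N => (D ∩ Pc φ N j).Nonempty ∧ D ∩ Pc φ N j ≠ Pc φ N j) with hT
  refine (Finset.card_le_mul_card_image (f := Prod.fst) T 2 ?_).trans
    (Nat.mul_le_mul_left _ (Finset.card_le_univ _))
  intro i _
  -- the interval of parameters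
  have hord : OrdConnected {t : ℝ | t ∈ Icc (0:ℝ) 1 ∧ φ i t ∈ D} := by
    have h1 : IsPreconnected (D ∩ φ i '' Icc 0 1) :=
      hI _ _ hD (isPreconnected_Icc.image _ (hE i).cφ.continuousOn)
    have h2 := (h1.image (r i) (hE i).cr.continuousOn).ordConnected
    have heq : {t : ℝ | t ∈ Icc (0:ℝ) 1 ∧ φ i t ∈ D} = r i '' (D ∩ φ i '' Icc 0 1) := by
      apply Set.ext
      intro t
      constructor
      · rintro ⟨ht, htD⟩
        exact ⟨φ i t, ⟨htD, mem_image_of_mem _ ht⟩, (hE i).rφ t ht⟩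
      · rintro ⟨x, ⟨hxD, s, hs, rfl⟩, rfl⟩
        rw [(hE i).rφ s hs]
        exact ⟨hs, hxD⟩
    rw [heq]; exact h2
  have h3 : ∀ l1 l2 l3 : Fin N, l1 < l2 → l2 < l3 → (i, l1) ∈ T → (i, l2) ∈ T → (i, l3) ∈ T → False := by
    intro l1 l2 l3 h12 h23 m1 m2 m3
    simp only [hT, Finset.mem_filter, Finset.mem_univ, true_and] at m1 m2 m3
    obtain ⟨_, hx1, t1, ht1, rfl⟩ := m1.1
    obtain ⟨_, hx3, t3, ht3, rfl⟩ := m3.1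
    apply m2.2
    rw [inter_eq_right]
    rintro _ ⟨t, ht, rfl⟩
    have hN : (0:ℝ) < N := by exact_mod_cast (Nat.zero_le _).trans_lt l1.2
    simp only at ht1 ht3 ht hx1 hx3 ⊢
    have a1 : ((l1:ℝ) + 1) / N ≤ (l2 : ℝ) / N := by
      apply div_le_div_of_nonneg_right _ hN.le; exact_mod_cast h12
    have a2 : ((l2:ℝ) + 1) / N ≤ (l3 : ℝ) / N := by
      apply div_le_div_of_nonneg_right _ hN.le; exact_mod_cast h23
    exact (hord.out ⟨pc_sub l1 ht1, hx1⟩ ⟨pc_sub l3 ht3, hx3⟩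
      ⟨ht1.2.trans (a1.trans ht.1), ht.2.trans (a2.trans ht3.1)⟩).2
  by_contra hcard
  push Not at hcard
  obtain ⟨⟨i1, a⟩, ⟨i2, b⟩, ⟨i3, c⟩, ha, hb, hc, hab, hac, hbc⟩ := Finset.two_lt_card_iff.mp hcard
  simp only [Finset.mem_filter] at ha hb hc
  obtain ⟨ha, rfl⟩ := ha
  obtain ⟨hb, rfl⟩ := hb
  obtain ⟨hc, rfl⟩ := hc
  have hab' : a ≠ b := fun h => hab (by rw [h])
  have hac' : a ≠ c := fun h => hac (by rw [h])
  have hbc' : b ≠ c := fun h => hbc (by rw [h])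
  rcases lt_or_gt_of_ne hab' with h1 | h1 <;> rcases lt_or_gt_of_ne hac' with h2 | h2 <;>
    rcases lt_or_gt_of_ne hbc' with h4 | h4
  all_goals first
    | exact h3 _ _ _ h1 h4 ha hb hc
    | exact h3 _ _ _ h2 h4 ha hc hb
    | exact h3 _ _ _ h1 h2 hb ha hc
    | exact h3 _ _ _ h4 h2 hb hc ha
    | exact h3 _ _ _ h2 h1 hc ha hb
    | exact h3 _ _ _ h4 h1 hc hb ha

lemma fine {X ι : Type*} [MetricSpace X] [Fintype ι] {φ : ι → ℝ → X}
    (hφ : ∀ i, Continuous (φ i)) {f : X → X} (hf : Continuous f)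
    {𝒰 : Finset (Set X)} (h𝒰 : IsOpenCoverOn univ 𝒰) (m : ℕ) :
    ∃ N : ℕ, 1 ≤ N ∧ ∀ (j : ι × Fin N) (k : Fin m), ∃ U ∈ 𝒰, ∀ x ∈ Pc φ N j, f^[k] x ∈ U := by
  have hev : ∀ q : ι × Fin m, ∀ᶠ N : ℕ in atTop, ∀ l : Fin N, ∃ U ∈ 𝒰,
      ∀ x ∈ Pc φ N (q.1, l), f^[q.2] x ∈ U := by
    rintro ⟨i, k⟩
    have hc : Continuous (fun t => f^[k] (φ i t)) := (hf.iterate k).comp (hφ i)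
    obtain ⟨δ, hδ, hL⟩ := lebesgue_number_lemma_of_metric (s := Icc (0:ℝ) 1) isCompact_Icc
      (c := fun U : 𝒰 => (fun t => f^[k] (φ i t)) ⁻¹' U.1)
      (fun U => (h𝒰.1 U.1 U.2).preimage hc) (by
        intro t _
        obtain ⟨U, hU, h⟩ := h𝒰.2 (mem_univ (f^[k] (φ i t)))
        exact mem_iUnion.mpr ⟨⟨U, hU⟩, h⟩)
    obtain ⟨N0, hN0⟩ := exists_nat_one_div_lt hδ
    filter_upwards [eventually_ge_atTop (N0 + 1)] with N hN l
    have hNp : (0:ℝ) < N := by exact_mod_cast (Nat.zero_le _).trans_lt l.2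
    have hlm : (l : ℝ) / N ∈ Icc ((l : ℝ) / N) (((l : ℝ) + 1) / N) :=
      ⟨le_rfl, div_le_div_of_nonneg_right (by linarith) hNp.le⟩
    obtain ⟨U, hU⟩ := hL _ (pc_sub l hlm)
    refine ⟨U.1, U.2, ?_⟩
    rintro _ ⟨t, ht, rfl⟩
    apply hU
    rw [Metric.mem_ball, Real.dist_eq, abs_of_nonneg (by linarith [ht.1])]
    have h1 : t ≤ (l:ℝ) / N + 1 / N := by rw [← add_div]; exact ht.2
    have h2 : (1:ℝ) / N ≤ 1 / (N0 + 1) := by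
      apply one_div_le_one_div_of_le (by positivity); exact_mod_cast hN
    linarith
  have hall := (eventually_all.mpr hev).and (eventually_ge_atTop 1)
  obtain ⟨N, hN, hN1⟩ := hall.exists
  exact ⟨N, hN1, fun j k => hN (j.1, k) j.2⟩

lemma adm_itin {X κ : Type*} [Fintype κ] (g : X → X) (B : κ → Set X) (x : X) (it : ℕ → κ)
    (hit : ∀ i, g^[i] x ∈ B (it i)) (n : ℕ) : ∀ (a : ℕ) (C : Set X), g^[a] x ∈ C →
    Adm (fun C j => g '' C ∩ B j) B (fun C => C.Nonempty) Finset.univ C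
      ((List.range' (a+1) n).map it) := by
  induction n with
  | zero => intro a C _; trivial
  | succ n ih =>
    intro a C hC
    rw [List.range'_succ, List.map_cons]
    have h1 : g^[a+1] x ∈ g '' C ∩ B (it (a+1)) := by
      refine ⟨⟨_, hC, ?_⟩, hit _⟩
      rw [iterate_succ_apply']
    exact ⟨⟨_, h1⟩, fun _ => Finset.mem_univ _, ih (a+1) _ h1⟩

end TreeEnt

namespace TreeEnt

lemma cover_count {X ι : Type*} [MetricSpace X] [Fintype ι] {φ : ι → ℝ → X} {r : ι → X → ℝ}
    (hE : ∀ i, Edge (φ i) (r i)) (hcov : ∀ x, ∃ i, ∃ t ∈ Icc (0:ℝ) 1, φ i t = x)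
    (hI : ∀ S T : Set X, IsPreconnected S → IsPreconnected T → IsPreconnected (S ∩ T))
    {f : X → X} (hf : Continuous f)
    (hU : ∀ m ≥ 1, ∀ N ≥ 1, ∀ (j : ι × Fin N) (x x' : List (ι × Fin N)), x.length = x'.length →
      (x ++ [j]).foldl (fun C j => f^[m] '' C ∩ Pc φ N j) (Pc φ N j) = Pc φ N j →
      (x' ++ [j]).foldl (fun C j => f^[m] '' C ∩ Pc φ N j) (Pc φ N j) = Pc φ N j → x = x')
    {𝒰 : Finset (Set X)} (h𝒰 : IsOpenCoverOn univ 𝒰) (m : ℕ) (hm : 1 ≤ m) :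
    ∃ K : ℕ, ∀ n : ℕ, seqCoverCountOn f univ id 𝒰 n ≤
      K * ((1 + K * (n + 1) ^ 2) ^ K * (2 * Fintype.card ι + 1) ^ (n / m)) := by
  classical
  obtain ⟨N, hN, hfine⟩ := fine (φ := φ) (fun i => (hE i).cφ) hf h𝒰 m
  choose U hU1 hU2 using hfine
  set g := f^[m] with hg
  have hgc : Continuous g := hf.iterate m
  have hcnt := count (σ := Set X) (κ := ι × Fin N) (fun C j => g '' C ∩ Pc φ N j) (Pc φ N)
    (fun C => C.Nonempty) (fun C => IsPreconnected C)
    (fun j => isPreconnected_Icc.image _ (hE _).cφ.continuousOn)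
    (fun C j hC _ => hI _ _ (hC.image _ hgc.continuousOn) (isPreconnected_Icc.image _ (hE _).cφ.continuousOn))
    (2 * Fintype.card ι + 1) (by omega)
    (fun C hC => by
      obtain ⟨T, h1, h2⟩ := branch hE hI N (hC.image g hgc.continuousOn)
      exact ⟨T, h1.trans (by omega), h2⟩)
    (hU m hm N hN) (Fintype.card (ι × Fin N)) Finset.univ rfl
  set K := Fintype.card (ι × Fin N) with hK
  refine ⟨K, fun n => ?_⟩
  set q := n / m with hq
  choose T hT1 hT2 using fun j => hcnt (Pc φ N j) (isPreconnected_Icc.image _ (hE _).cφ.continuousOn) q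
  set S : Finset ((ι × Fin N) × List (ι × Fin N)) :=
    Finset.univ.biUnion (fun j => (T j).image (fun w => (j, w))) with hS
  have hScard : S.card ≤ K * ((1 + K * (n + 1) ^ 2) ^ K * (2 * Fintype.card ι + 1) ^ q) := by
    refine (Finset.card_biUnion_le_card_mul _ _ _ (fun j _ => Finset.card_image_le.trans ((hT1 j).trans ?_))).trans
      (by rw [Finset.card_univ])
    apply Nat.mul_le_mul_right
    have : q ≤ n := Nat.div_le_self _ _
    gcongr
  refine le_trans (Nat.sInf_le ?_) hScard
  refine ⟨fun a t => U (((S.equivFin.symm a).1.1 :: (S.equivFin.symm a).1.2).getD (t.1 / m) (S.equivFin.symm a).1.1)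
    ⟨t.1 % m, Nat.mod_lt _ hm⟩, fun a t => hU1 _ _, ?_⟩
  intro x _
  -- itinerary
  have hit : ∀ i : ℕ, ∃ j, g^[i] x ∈ Pc φ N j := by
    intro i
    obtain ⟨k, t, ht, hx⟩ := hcov (g^[i] x)
    have hNp : (0:ℝ) < N := by exact_mod_cast hN
    by_cases h1 : t = 1
    · refine ⟨(k, ⟨N - 1, by omega⟩), t, ?_, hx⟩
      have : ((N - 1 : ℕ) : ℝ) + 1 = N := by
        rw [Nat.cast_sub hN]; simp
      simp only []
      rw [this, h1, div_self hNp.ne']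
      refine ⟨?_, le_rfl⟩
      rw [div_le_one hNp]; linarith
    · have htl : t < 1 := lt_of_le_of_ne ht.2 h1
      have hf0 : 0 ≤ t * N := mul_nonneg ht.1 hNp.le
      refine ⟨(k, ⟨⌊t * N⌋₊, ?_⟩), t, ?_, hx⟩
      · rw [Nat.floor_lt hf0]; nlinarith
      · simp only []
        refine ⟨?_, ?_⟩
        · rw [div_le_iff₀ hNp]; exact Nat.floor_le hf0
        · rw [le_div_iff₀ hNp]; exact (Nat.lt_floor_add_one _).le
  choose it hit using hit
  have hadm := adm_itin g (Pc φ N) x it hit q 0 (Pc φ N (it 0)) (hit 0)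
  have hw : ((List.range' 1 q).map it) ∈ T (it 0) := hT2 _ _ (by simp) hadm
  have hmem : (it 0, (List.range' 1 q).map it) ∈ S := by
    rw [hS, Finset.mem_biUnion]
    exact ⟨it 0, Finset.mem_univ _, Finset.mem_image_of_mem _ hw⟩
  rw [mem_iUnion]
  refine ⟨S.equivFin ⟨_, hmem⟩, ?_⟩
  rw [mem_iInter]
  intro t
  simp only [Equiv.symm_apply_apply]
  have hlet : (it 0 :: (List.range' 1 q).map it).getD (t.1 / m) (it 0) = it (t.1 / m) := by
    have hle : t.1 / m ≤ q := Nat.div_le_div_right t.2.le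
    rcases Nat.eq_zero_or_pos (t.1 / m) with h | h
    · rw [h]; rfl
    · obtain ⟨s, hs⟩ := Nat.exists_eq_succ_of_ne_zero h.ne'
      rw [hs] at hle ⊢
      simp [List.getD_eq_getElem?_getD, List.getElem?_range', show s < q from hle, add_comm]
  rw [hlet]
  have h2 := hU2 (it (t.1/m)) ⟨t.1 % m, Nat.mod_lt _ hm⟩ _ (hit (t.1 / m))
  rw [mem_preimage]
  convert h2 using 1
  simp only [id]
  rw [hg, ← iterate_mul, ← iterate_add_apply]
  congr 2
  exact (Nat.mod_add_div _ _).symm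

theorem partD {X ι : Type*} [MetricSpace X] [Fintype ι] {φ : ι → ℝ → X} {r : ι → X → ℝ}
    (hE : ∀ i, Edge (φ i) (r i)) (hcov : ∀ x, ∃ i, ∃ t ∈ Icc (0:ℝ) 1, φ i t = x)
    (hI : ∀ S T : Set X, IsPreconnected S → IsPreconnected T → IsPreconnected (S ∩ T))
    {f : X → X} (hf : Continuous f)
    (hU : ∀ m ≥ 1, ∀ N ≥ 1, ∀ (j : ι × Fin N) (x x' : List (ι × Fin N)), x.length = x'.length →
      (x ++ [j]).foldl (fun C j => f^[m] '' C ∩ Pc φ N j) (Pc φ N j) = Pc φ N j →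
      (x' ++ [j]).foldl (fun C j => f^[m] '' C ∩ Pc φ N j) (Pc φ N j) = Pc φ N j → x = x') :
    topEntropy f = 0 := by
  have main : ∀ η : ℝ, 0 < η → topEntropy f ≤ ENNReal.ofReal η := by
    intro η hη
    refine iSup₂_le (fun 𝒰 h𝒰 => ?_)
    set c := 2 * Fintype.card ι + 1 with hc
    have hc1 : (1:ℝ) ≤ c := by rw [hc]; push_cast; linarith [Nat.cast_nonneg (α := ℝ) (Fintype.card ι)]
    have hlc : 0 ≤ Real.log c := Real.log_nonneg hc1
    obtain ⟨m, hm⟩ := exists_nat_gt (Real.log c / (η / 2))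
    have hm0 : (0:ℝ) < m := lt_of_le_of_lt (by positivity) hm
    have hm1 : 1 ≤ m := by exact_mod_cast hm0
    have hmc : Real.log c / m < η / 2 := by
      rw [div_lt_iff₀ (by positivity)] at hm
      rw [div_lt_iff₀ hm0]; linarith
    obtain ⟨K, hK⟩ := cover_count hE hcov hI hf hU h𝒰 m hm1
    set A : ℝ := Real.log (K+1) + K * (Real.log (1+K) + 2 * Real.log 2) with hA
    have hlim : Tendsto (fun n : ℕ => A * (1 / (n:ℝ)) + 2 * K * (Real.log n / n) + Real.log c / m) atTop
        (𝓝 (A * 0 + 2 * K * 0 + Real.log c / m)) := by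
      refine ((tendsto_const_nhds.mul tendsto_one_div_atTop_nhds_zero_nat).add
        (tendsto_const_nhds.mul ?_)).add tendsto_const_nhds
      exact (Real.isLittleO_log_id_atTop.tendsto_div_nhds_zero).comp tendsto_natCast_atTop_atTop
    have hev := hlim.eventually (gt_mem_nhds (show A * 0 + 2 * K * 0 + Real.log c / m < η by linarith))
    refine limsup_le_of_le (by isBoundedDefault) ?_
    filter_upwards [hev, eventually_ge_atTop 1] with n hn hn1
    apply ENNReal.ofReal_le_ofReal
    refine le_trans ?_ hn.le
    have hn0 : (0:ℝ) < n := by exact_mod_cast hn1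
    have hn1' : (1:ℝ) ≤ n := by exact_mod_cast hn1
    have hK0 : (0:ℝ) ≤ K := Nat.cast_nonneg K
    have hb : (seqCoverCountOn f univ id 𝒰 n : ℝ) ≤
        (K + 1) * (((1 + K) * (2 * n) ^ 2) ^ K * (c:ℝ) ^ (n / m)) := by
      have h1 : (seqCoverCountOn f univ id 𝒰 n : ℝ) ≤
        K * ((1 + K * (n + 1) ^ 2) ^ K * (c:ℝ) ^ (n / m)) := by exact_mod_cast hK n
      refine h1.trans ?_
      have h4 : (1 + K * ((n:ℝ) + 1) ^ 2) ≤ (1 + K) * (2 * n) ^ 2 := by nlinarith [mul_nonneg hK0 (sq_nonneg ((n:ℝ)-1)), mul_nonneg hK0 (by nlinarith : (0:ℝ) ≤ (2*n)^2 - (n+1)^2)]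
      gcongr
      linarith
    have hlog : Real.log (seqCoverCountOn f univ id 𝒰 n) ≤
        Real.log ((K + 1) * (((1 + K) * (2 * n) ^ 2) ^ K * (c:ℝ) ^ (n / m))) := by
      rcases Nat.eq_zero_or_pos (seqCoverCountOn f univ id 𝒰 n) with h | h
      · rw [h]; simp only [Nat.cast_zero, Real.log_zero]
        apply Real.log_nonneg
        have h1 : (1:ℝ) ≤ ((1 + K) * (2 * n) ^ 2) ^ K := one_le_pow₀ (by nlinarith)
        have h2 : (1:ℝ) ≤ (c:ℝ) ^ (n / m) := one_le_pow₀ hc1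
        nlinarith [mul_le_mul h1 h2 (by norm_num) (by linarith)]
      · exact Real.log_le_log (by exact_mod_cast h) hb
    rw [Real.log_mul (by positivity) (by positivity), Real.log_mul (by positivity) (by positivity), Real.log_pow,
      Real.log_mul (by positivity) (by positivity), Real.log_pow, Real.log_mul (by norm_num) (by positivity), Real.log_pow] at hlog
    have hdiv : ((n / m : ℕ) : ℝ) * Real.log c ≤ (n:ℝ) * (Real.log c / m) := by
      have := @Nat.cast_div_le ℝ _ _ _ n m
      calc _ ≤ ((n:ℝ)/m) * Real.log c := mul_le_mul_of_nonneg_right this hlc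
        _ = _ := by ring
    rw [div_le_iff₀ hn0]
    have e : (A * (1 / (n:ℝ)) + 2 * K * (Real.log n / n) + Real.log c / m) * n =
      A + 2 * K * Real.log n + n * (Real.log c / m) := by field_simp
    rw [e, hA]
    push_cast at hlog
    linarith
  by_contra hne
  have hpos : 0 < topEntropy f := pos_iff_ne_zero.mpr hne
  obtain ⟨η, h1, h2⟩ := ENNReal.lt_iff_exists_real_btwn.mp hpos
  have hη : 0 < η := ENNReal.ofReal_pos.mp h2.1
  exact absurd (main η hη) (not_le.mpr h2.2)

end TreeEnt

namespace TreeEnt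

lemma subint {h : ℝ → ℝ} (hc : Continuous h) {τ1 τ2 s t : ℝ} (hτ : τ1 < τ2) (hst : s < t)
    (h1 : h τ1 = s) (h2 : h τ2 = t) : ∃ σ1 σ2, τ1 ≤ σ1 ∧ σ1 < σ2 ∧ σ2 ≤ τ2 ∧ h σ1 = s ∧ h σ2 = t ∧
      ∀ x ∈ Ioo σ1 σ2, h x ∈ Ioo s t := by
  obtain ⟨σ2, ⟨⟨a1, a2⟩, a3⟩, a4⟩ := (isCompact_Icc.inter_right (isClosed_singleton.preimage hc) :
    IsCompact (Icc τ1 τ2 ∩ h ⁻¹' {t})).exists_isLeast ⟨τ2, ⟨hτ.le, le_rfl⟩, h2⟩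
  simp only [mem_preimage, mem_singleton_iff] at a3
  have hσ : τ1 < σ2 := lt_of_le_of_ne a1 (by rintro rfl; linarith)
  obtain ⟨σ1, ⟨⟨b1, b2⟩, b3⟩, b4⟩ := (isCompact_Icc.inter_right (isClosed_singleton.preimage hc) :
    IsCompact (Icc τ1 σ2 ∩ h ⁻¹' {s})).exists_isGreatest ⟨τ1, ⟨le_rfl, a1⟩, h1⟩
  simp only [mem_preimage, mem_singleton_iff] at b3
  refine ⟨σ1, σ2, b1, lt_of_le_of_ne b2 (by rintro rfl; linarith), a2, b3, a3, ?_⟩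
  rintro x ⟨x1, x2⟩
  constructor
  · by_contra hx
    push Not at hx
    obtain ⟨z, ⟨z1, z2⟩, hz⟩ := intermediate_value_Icc x2.le hc.continuousOn (show s ∈ Icc (h x) (h σ2) from ⟨hx, by linarith⟩)
    have := b4 ⟨⟨by linarith, z2⟩, hz⟩
    linarith
  · by_contra hx
    push Not at hx
    obtain ⟨z, ⟨z1, z2⟩, hz⟩ := intermediate_value_Icc (show τ1 ≤ x by linarith) hc.continuousOn (show t ∈ Icc (h τ1) (h x) from ⟨by linarith, hx⟩)
    have := a4 ⟨⟨z1, by linarith⟩, hz⟩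
    linarith

lemma subint' {h : ℝ → ℝ} (hc : Continuous h) {τ1 τ2 s t : ℝ} (hτ : τ1 < τ2) (hst : s < t)
    (h1 : h τ1 = t) (h2 : h τ2 = s) : ∃ σ1 σ2, τ1 ≤ σ1 ∧ σ1 < σ2 ∧ σ2 ≤ τ2 ∧ h σ1 = t ∧ h σ2 = s ∧
      ∀ x ∈ Ioo σ1 σ2, h x ∈ Ioo s t := by
  obtain ⟨σ1, σ2, a1, a2, a3, a4, a5, a6⟩ := subint (h := fun x => - h x) (s := -t) (t := -s) hc.neg hτ
    (by linarith) (by simp [h1]) (by simp [h2])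
  refine ⟨σ1, σ2, a1, a2, a3, by linarith, by linarith, fun x hx => ?_⟩
  have := a6 x hx
  exact ⟨by linarith [this.2], by linarith [this.1]⟩

lemma ends_Icc {h : ℝ → ℝ} {σ1 σ2 s t : ℝ} (hst : s < t)
    (h1 : (h σ1 = s ∧ h σ2 = t) ∨ (h σ1 = t ∧ h σ2 = s))
    (h2 : ∀ x ∈ Ioo σ1 σ2, h x ∈ Ioo s t) : ∀ x ∈ Icc σ1 σ2, h x ∈ Icc s t := by
  rintro x ⟨x1, x2⟩
  rcases eq_or_lt_of_le x1 with rfl | x1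
  · rcases h1 with ⟨h1, -⟩ | ⟨h1, -⟩ <;> rw [h1] <;> constructor <;> linarith
  rcases eq_or_lt_of_le x2 with rfl | x2
  · rcases h1 with ⟨-, h1⟩ | ⟨-, h1⟩ <;> rw [h1] <;> constructor <;> linarith
  · exact Ioo_subset_Icc_self (h2 x ⟨x1, x2⟩)

/-- Subinterval version of the IVT, unoriented. -/
lemma subintU {h : ℝ → ℝ} (hc : Continuous h) {τ1 τ2 s t : ℝ} (hst : s < t)
    (h1 : h τ1 = s) (h2 : h τ2 = t) : ∃ σ1 σ2, min τ1 τ2 ≤ σ1 ∧ σ1 < σ2 ∧ σ2 ≤ max τ1 τ2 ∧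
      ((h σ1 = s ∧ h σ2 = t) ∨ (h σ1 = t ∧ h σ2 = s)) ∧
      ∀ x ∈ Ioo σ1 σ2, h x ∈ Ioo s t := by
  rcases lt_trichotomy τ1 τ2 with h' | rfl | h'
  · obtain ⟨σ1, σ2, a1, a2, a3, a4, a5, a6⟩ := subint hc h' hst h1 h2
    exact ⟨σ1, σ2, (min_le_left _ _).trans a1, a2, a3.trans (le_max_right _ _), Or.inl ⟨a4, a5⟩, a6⟩
  · linarith
  · obtain ⟨σ1, σ2, a1, a2, a3, a4, a5, a6⟩ := subint' hc h' hst h2 h1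
    exact ⟨σ1, σ2, (min_le_right _ _).trans a1, a2, a3.trans (le_max_left _ _), Or.inr ⟨a4, a5⟩, a6⟩

lemma homoclinic {u : ℝ → ℝ} (hu : Continuous u) {A0 A1 α β c d : ℝ} (h0 : A0 ≤ α) (hab : α < β)
    (hbc : β ≤ c) (hcd : c < d) (hd : d ≤ A1) (uα : u α = A0) (uβ : u β = A1)
    (hcd' : (u c = A0 ∧ u d = A1) ∨ (u c = A1 ∧ u d = A0)) :
    ∃ p ∈ Ico α β, u p = p ∧ ∀ δ > 0, ∃ y, |y - p| < δ ∧ ∃ K : ℕ, u^[K+1] y = y ∧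
      (∀ i < K, u^[i] y ∈ Icc α β) ∧ u^[K] y ∈ Icc c d := by
  have hne : (Icc α β ∩ {x | u x = x}).Nonempty := by
    obtain ⟨z, hz, hz'⟩ := intermediate_value_Icc hab.le (f := fun x => u x - x) (by fun_prop)
      (show (0:ℝ) ∈ Icc (u α - α) (u β - β) from ⟨by linarith, by linarith⟩)
    exact ⟨z, hz, by simp only [] at hz'; rw [mem_ofPred_eq]; linarith⟩
  obtain ⟨p, ⟨⟨p1, p2⟩, p3⟩, p4⟩ := (isCompact_Icc.inter_right (isClosed_eq hu continuous_id) :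
    IsCompact (Icc α β ∩ {x | u x = x})).exists_isGreatest hne
  rw [mem_ofPred_eq] at p3
  have pb : p < β := lt_of_le_of_ne p2 (by rintro rfl; linarith)
  refine ⟨p, ⟨p1, pb⟩, p3, fun δ hδ => ?_⟩
  have hup : ∀ x, p < x → x ≤ β → x < u x := by
    intro x x1 x2
    by_contra hx
    push Not at hx
    obtain ⟨z, hz, hz'⟩ := intermediate_value_Icc x2 (f := fun x => u x - x) (by fun_prop)
      (show (0:ℝ) ∈ Icc (u x - x) (u β - β) from ⟨by linarith, by linarith⟩)
    have := p4 ⟨⟨by linarith [hz.1], hz.2⟩, (by simp only [] at hz'; rw [mem_ofPred_eq]; linarith)⟩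
    linarith [hz.1]
  have step : ∀ I : ℝ × ℝ, ∃ I' : ℝ × ℝ, p < I.1 → I.1 < I.2 → I.2 ≤ A1 →
      p < I'.1 ∧ I'.1 < I'.2 ∧ I'.2 ≤ β ∧ u I'.1 = I.1 ∧ u I'.2 = I.2 ∧
        ∀ x ∈ Icc I'.1 I'.2, u x ∈ Icc I.1 I.2 := by
    rintro ⟨l, m⟩
    by_cases hI : p < l ∧ l < m ∧ m ≤ A1
    · obtain ⟨h1, h2, h3⟩ := hI
      obtain ⟨z, hz, hz'⟩ := intermediate_value_Icc pb.le hu.continuousOn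
        (show l ∈ Icc (u p) (u β) from ⟨by linarith, by linarith⟩)
      have hz1 : p < z := lt_of_le_of_ne hz.1 (by rintro rfl; linarith)
      obtain ⟨w, hw, hw'⟩ := intermediate_value_Icc hz.2 hu.continuousOn
        (show m ∈ Icc (u z) (u β) from ⟨by linarith, by linarith⟩)
      have hw1 : z < w := lt_of_le_of_ne hw.1 (by rintro rfl; linarith)
      obtain ⟨σ1, σ2, a1, a2, a3, a4, a5, a6⟩ := subint hu hw1 h2 hz' hw'
      exact ⟨(σ1, σ2), fun _ _ _ => ⟨by simp only []; linarith, a2, a3.trans hw.2, a4, a5,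
        ends_Icc h2 (Or.inl ⟨a4, a5⟩) a6⟩⟩
    · exact ⟨0, fun a b c => absurd ⟨a, b, c⟩ hI⟩
  choose S hS using step
  let I : ℕ → ℝ × ℝ := fun k => S^[k] (c, d)
  have I0 : I 0 = (c, d) := rfl
  have Is : ∀ k, I (k+1) = S (I k) := fun k => iterate_succ_apply' _ _ _
  have hbase : ∀ k, p < (I k).1 ∧ (I k).1 < (I k).2 ∧ (I k).2 ≤ A1 := by
    intro k
    induction k with
    | zero => rw [I0]; exact ⟨by simp only []; linarith, hcd, hd⟩
    | succ k ih =>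
      obtain ⟨a1, a2, a3, _⟩ := hS (I k) ih.1 ih.2.1 ih.2.2
      rw [Is]; exact ⟨a1, a2, by linarith⟩
  have hstep : ∀ k, (I (k+1)).2 ≤ β ∧ u (I (k+1)).1 = (I k).1 ∧ u (I (k+1)).2 = (I k).2 ∧
        ∀ x ∈ Icc (I (k+1)).1 (I (k+1)).2, u x ∈ Icc (I k).1 (I k).2 := by
    intro k
    obtain ⟨_, _, a3, a4⟩ := hS (I k) (hbase k).1 (hbase k).2.1 (hbase k).2.2
    rw [Is]; exact ⟨a3, a4⟩
  have hanti : Antitone (fun k => (I k).2) := by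
    apply antitone_nat_of_succ_le
    intro k
    have := hup (I (k+1)).2 ((hbase (k+1)).1.trans (hbase (k+1)).2.1) (hstep k).1
    rw [(hstep k).2.2.1] at this
    exact this.le
  have hbdd : BddBelow (range (fun k => (I k).2)) :=
    ⟨p, by rintro _ ⟨k, rfl⟩; exact ((hbase k).1.trans (hbase k).2.1).le⟩
  have hlim := tendsto_atTop_ciInf hanti hbdd
  set L := ⨅ k, (I k).2 with hL
  have hlim1 := (tendsto_add_atTop_iff_nat 1).mpr hlim
  have hfix : u L = L := by
    refine tendsto_nhds_unique ((hu.tendsto L).comp hlim1) (hlim.congr (fun k => ?_))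
    exact (hstep k).2.2.1.symm
  have hLp : p ≤ L := le_ciInf (fun k => ((hbase k).1.trans (hbase k).2.1).le)
  have hLb : L ≤ β := (ciInf_le hbdd 1).trans (hstep 0).1
  have hLe : L = p := le_antisymm (p4 ⟨⟨p1.trans hLp, hLb⟩, hfix⟩) hLp
  rw [hLe] at hlim
  obtain ⟨K, hK⟩ := (hlim.eventually (gt_mem_nhds (show p < p + δ by linarith))).exists
  have hu1 : ∀ k j, k ≤ j → u^[k] (I j).1 = (I (j-k)).1 ∧ u^[k] (I j).2 = (I (j - k)).2 ∧
      ∀ x ∈ Icc (I j).1 (I j).2, u^[k] x ∈ Icc (I (j-k)).1 (I (j-k)).2 := by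
    intro k
    induction k with
    | zero => intro j _; exact ⟨rfl, rfl, fun x hx => hx⟩
    | succ k ih =>
      intro j hj
      obtain ⟨b1, b2, b3⟩ := ih j (by omega)
      obtain ⟨i, hi⟩ : ∃ i, j - k = i + 1 := ⟨j - k - 1, by omega⟩
      have hi' : j - (k+1) = i := by omega
      rw [hi] at b1 b2 b3
      rw [hi', iterate_succ_apply', iterate_succ_apply', b1, b2]
      refine ⟨(hstep i).2.1, (hstep i).2.2.1, fun x hx => ?_⟩
      rw [iterate_succ_apply']
      exact (hstep i).2.2.2 _ (b3 x hx)
  obtain ⟨b1, b2, b3⟩ := hu1 K K le_rfl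
  rw [Nat.sub_self, I0] at b1 b2 b3
  simp only [] at b1 b2 b3
  have hcK : Continuous (fun x => u^[K+1] x - x) := (hu.iterate _).sub continuous_id
  have hl0 : A0 ≤ (I K).1 := by linarith [(hbase K).1]
  have hm1 := (hbase K).2.2
  have hlm := (hbase K).2.1
  obtain ⟨y, hy, hfy⟩ : ∃ y ∈ Icc (I K).1 (I K).2, u^[K+1] y = y := by
    have e1 : u^[K+1] (I K).1 = u c := by rw [iterate_succ_apply', b1]
    have e2 : u^[K+1] (I K).2 = u d := by rw [iterate_succ_apply', b2]
    rcases hcd' with ⟨h1, h2⟩ | ⟨h1, h2⟩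
    · obtain ⟨z, hz, hz'⟩ := intermediate_value_Icc hlm.le hcK.continuousOn
        (show (0:ℝ) ∈ Icc (u^[K+1] (I K).1 - (I K).1) (u^[K+1] (I K).2 - (I K).2) from
          ⟨by rw [e1, h1]; linarith, by rw [e2, h2]; linarith⟩)
      exact ⟨z, hz, by simp only [] at hz'; linarith⟩
    · obtain ⟨z, hz, hz'⟩ := intermediate_value_Icc' hlm.le hcK.continuousOn
        (show (0:ℝ) ∈ Icc (u^[K+1] (I K).2 - (I K).2) (u^[K+1] (I K).1 - (I K).1) from
          ⟨by rw [e2, h2]; linarith, by rw [e1, h1]; linarith⟩)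
      exact ⟨z, hz, by simp only [] at hz'; linarith⟩
  refine ⟨y, ?_, K, hfy, fun i hi => ?_, b3 y hy⟩
  · have := (hbase K).1
    rw [abs_lt]
    constructor <;> linarith [hy.1, hy.2]
  · obtain ⟨_, _, hh⟩ := hu1 i K hi.le
    obtain ⟨k, hk⟩ : ∃ k, K - i = k + 1 := ⟨K - i - 1, by omega⟩
    have := hh y hy
    rw [hk] at this
    have q1 := (hbase (k+1)).1
    exact ⟨by linarith [this.1], this.2.trans (hstep k).1⟩

lemma homoclinic' {u : ℝ → ℝ} (hu : Continuous u) {A0 A1 α β c d : ℝ} (h0 : A0 ≤ c) (hab : α < β)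
    (hbc : d ≤ α) (hcd : c < d) (hd : β ≤ A1) (uα : u α = A0) (uβ : u β = A1)
    (hcd' : (u c = A0 ∧ u d = A1) ∨ (u c = A1 ∧ u d = A0)) :
    ∃ p ∈ Ioc α β, u p = p ∧ ∀ δ > 0, ∃ y, |y - p| < δ ∧ ∃ K : ℕ, u^[K+1] y = y ∧
      (∀ i < K, u^[i] y ∈ Icc α β) ∧ u^[K] y ∈ Icc c d := by
  have hit : ∀ n x, (fun x => - u (-x))^[n] x = - u^[n] (-x) := by
    intro n
    induction n with
    | zero => intro x; simp
    | succ n ih => intro x; rw [iterate_succ_apply', ih, iterate_succ_apply']; simp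
  obtain ⟨p, hp, hfp, hh⟩ := homoclinic (u := fun x => - u (-x)) (A0 := -A1) (A1 := -A0) (α := -β) (β := -α)
    (c := -d) (d := -c) (by fun_prop) (by linarith) (by linarith) (by linarith) (by linarith) (by linarith)
    (by simp [uβ]) (by simp [uα]) (by
      simp only [neg_neg, neg_inj]; tauto)
  refine ⟨-p, ⟨by linarith [hp.2], by linarith [hp.1]⟩, by linarith, fun δ hδ => ?_⟩
  obtain ⟨y, hy, K, h1, h2, h3⟩ := hh δ hδ
  rw [hit] at h1 h3
  refine ⟨-y, by rw [← abs_neg]; convert hy using 2; ring, K, by linarith, fun i hi => ?_, ?_⟩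
  · have := h2 i hi
    rw [hit] at this
    exact ⟨by linarith [this.2], by linarith [this.1]⟩
  · exact ⟨by linarith [h3.2], by linarith [h3.1]⟩

end TreeEnt

namespace TreeEnt

lemma hs_real {h : ℝ → ℝ} (hc : Continuous h) {A0 A1 a b a' b' : ℝ} (ha : A0 ≤ a) (hab : a < b) (hb : b ≤ A1)
    (ha' : A0 ≤ a') (hab' : a' < b') (hb' : b' ≤ A1) (hdis : ∀ x ∈ Ioo a b, x ∉ Ioo a' b')
    (hJ : (h a = A0 ∧ h b = A1) ∨ (h a = A1 ∧ h b = A0))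
    (hJ' : (h a' = A0 ∧ h b' = A1) ∨ (h a' = A1 ∧ h b' = A0)) :
    ∃ p, ∃ η > 0, (p ∈ Icc a b ∧ h p ∈ Icc a b ∪ Icc a' b') ∧ h (h p) = p ∧ ∀ δ > 0, ∃ y, |y - p| < δ ∧
      ∃ K : ℕ, (h ∘ h)^[K+1] y = y ∧ η ≤ |(h ∘ h)^[K] y - p| ∧
      ∀ i ≤ K, (h ∘ h)^[i] y ∈ Icc a b ∧ h ((h ∘ h)^[i] y) ∈ Icc a b ∪ Icc a' b' := by
  have hA : A0 < A1 := by linarith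
  -- J1
  obtain ⟨α, β, α1, αβ, β1, e1, hI1, e3⟩ : ∃ α β, a ≤ α ∧ α < β ∧ β ≤ b ∧ 
      ((h ∘ h) α = A0 ∧ (h ∘ h) β = A1) ∧ (∀ x ∈ Ioo α β, h x ∈ Ioo a b) ∧ (∀ x ∈ Icc α β, h x ∈ Icc a b) := by
    rcases hJ with ⟨h1, h2⟩ | ⟨h1, h2⟩
    · obtain ⟨z, hz, hz'⟩ := intermediate_value_Icc hab.le hc.continuousOn
        (show a ∈ Icc (h a) (h b) from ⟨by linarith, by linarith⟩)
      obtain ⟨w, hw, hw'⟩ := intermediate_value_Icc hz.2 hc.continuousOn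
        (show b ∈ Icc (h z) (h b) from ⟨by linarith, by linarith⟩)
      have hw1 : z < w := lt_of_le_of_ne hw.1 (by rintro rfl; linarith)
      obtain ⟨σ1, σ2, a1, a2, a3, a4, a5, a6⟩ := subint hc hw1 hab hz' hw'
      exact ⟨σ1, σ2, hz.1.trans a1, a2, a3.trans hw.2, ⟨by simp [a4, h1], by simp [a5, h2]⟩, a6,
        ends_Icc hab (Or.inl ⟨a4, a5⟩) a6⟩
    · obtain ⟨z, hz, hz'⟩ := intermediate_value_Icc' hab.le hc.continuousOn
        (show b ∈ Icc (h b) (h a) from ⟨by linarith, by linarith⟩)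
      obtain ⟨w, hw, hw'⟩ := intermediate_value_Icc' hz.2 hc.continuousOn
        (show a ∈ Icc (h b) (h z) from ⟨by linarith, by linarith⟩)
      have hw1 : z < w := lt_of_le_of_ne hw.1 (by rintro rfl; linarith)
      obtain ⟨σ1, σ2, a1, a2, a3, a4, a5, a6⟩ := subint' hc hw1 hab hz' hw'
      exact ⟨σ1, σ2, hz.1.trans a1, a2, a3.trans hw.2, ⟨by simp [a4, h2], by simp [a5, h1]⟩, a6,
        ends_Icc hab (Or.inr ⟨a4, a5⟩) a6⟩
  -- J2
  obtain ⟨c, d, c1, cd, d1, f1, hI2, f3⟩ : ∃ c d, a ≤ c ∧ c < d ∧ d ≤ b ∧ 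
      (((h ∘ h) c = A0 ∧ (h ∘ h) d = A1) ∨ ((h ∘ h) c = A1 ∧ (h ∘ h) d = A0)) ∧
      (∀ x ∈ Ioo c d, h x ∈ Ioo a' b') ∧ (∀ x ∈ Icc c d, h x ∈ Icc a' b') := by
    obtain ⟨z, hz, hz'⟩ : ∃ z ∈ Icc a b, h z = a' := by
      rcases hJ with ⟨h1, h2⟩ | ⟨h1, h2⟩
      · exact intermediate_value_Icc hab.le hc.continuousOn
          (show a' ∈ Icc (h a) (h b) from ⟨by linarith, by linarith⟩)
      · exact intermediate_value_Icc' hab.le hc.continuousOn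
          (show a' ∈ Icc (h b) (h a) from ⟨by linarith, by linarith⟩)
    obtain ⟨w, hw, hw'⟩ : ∃ z ∈ Icc a b, h z = b' := by
      rcases hJ with ⟨h1, h2⟩ | ⟨h1, h2⟩
      · exact intermediate_value_Icc hab.le hc.continuousOn
          (show b' ∈ Icc (h a) (h b) from ⟨by linarith, by linarith⟩)
      · exact intermediate_value_Icc' hab.le hc.continuousOn
          (show b' ∈ Icc (h b) (h a) from ⟨by linarith, by linarith⟩)
    obtain ⟨σ1, σ2, a1, a2, a3, a4, a5⟩ := subintU hc hab' hz' hw'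
    refine ⟨σ1, σ2, (le_min hz.1 hw.1).trans a1, a2, a3.trans (max_le hz.2 hw.2), ?_, a5, ends_Icc hab' a4 a5⟩
    simp only [comp_apply]
    rcases a4 with ⟨q1, q2⟩ | ⟨q1, q2⟩ <;> rw [q1, q2] <;> tauto
  have hu : Continuous (h ∘ h) := hc.comp hc
  have hord : β ≤ c ∨ d ≤ α := by
    by_contra hcon
    push Not at hcon
    obtain ⟨q1, q2⟩ := hcon
    have hlt : max α c < min β d := max_lt (lt_min αβ q2) (lt_min q1 cd)
    obtain ⟨x, x1, x2⟩ := exists_between hlt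
    exact hdis (h x) (hI1 x ⟨(le_max_left _ _).trans_lt x1, x2.trans_le (min_le_left _ _)⟩)
      (hI2 x ⟨(le_max_right _ _).trans_lt x1, x2.trans_le (min_le_right _ _)⟩)
  have g1 : ∀ x ∈ Icc α β, x ∈ Icc a b ∧ h x ∈ Icc a b ∪ Icc a' b' :=
    fun x hx => ⟨⟨α1.trans hx.1, hx.2.trans β1⟩, Or.inl (e3 x hx)⟩
  have g2 : ∀ x ∈ Icc c d, x ∈ Icc a b ∧ h x ∈ Icc a b ∪ Icc a' b' :=
    fun x hx => ⟨⟨c1.trans hx.1, hx.2.trans d1⟩, Or.inr (f3 x hx)⟩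
  rcases hord with hord | hord
  · obtain ⟨p, hp, hfp, hh⟩ := homoclinic hu (ha.trans α1) αβ hord cd (d1.trans hb) e1.1 e1.2 f1
    refine ⟨p, β - p, by linarith [hp.2], g1 p (Ico_subset_Icc_self hp), hfp, fun δ hδ => ?_⟩
    obtain ⟨y, hy, K, k1, k2, k3⟩ := hh δ hδ
    refine ⟨y, hy, K, k1, ?_, fun i hi => ?_⟩
    · exact le_trans (by linarith [k3.1]) (le_abs_self _)
    · rcases hi.lt_or_eq with hi | rfl
      · exact g1 _ (k2 i hi)
      · exact g2 _ k3
  · obtain ⟨p, hp, hfp, hh⟩ := homoclinic' hu (ha.trans c1) αβ hord cd (β1.trans hb) e1.1 e1.2 f1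
    refine ⟨p, p - α, by linarith [hp.1], g1 p (Ioc_subset_Icc_self hp), hfp, fun δ hδ => ?_⟩
    obtain ⟨y, hy, K, k1, k2, k3⟩ := hh δ hδ
    refine ⟨y, hy, K, k1, ?_, fun i hi => ?_⟩
    · exact le_trans (by linarith [k3.2]) (neg_le_abs _)
    · rcases hi.lt_or_eq with hi | rfl
      · exact g1 _ (k2 i hi)
      · exact g2 _ k3

def It {X ι : Type*} (r : ι → X → ℝ) (N : ℕ) (g : X → X) : List (ι × Fin N) → X → Prop
  | [], _ => True
  | a :: w, x => r a.1 (g x) ∈ Ioo ((a.2 : ℝ) / N) (((a.2 : ℝ) + 1) / N) ∧ It r N g w (g x)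

lemma It.unique {X ι : Type*} [MetricSpace X] {φ : ι → ℝ → X} {r : ι → X → ℝ}
    (hE : ∀ i, Edge (φ i) (r i))
    (disj : ∀ i i', i ≠ i' → ∀ t ∈ Icc (0:ℝ) 1, ∀ t' ∈ Icc (0:ℝ) 1, φ i t = φ i' t' → t = 0 ∨ t = 1)
    {N : ℕ} {g : X → X} : ∀ (w w' : List (ι × Fin N)) (x : X), w.length = w'.length →
      It r N g w x → It r N g w' x → w = w' := by
  intro w
  induction w with
  | nil => intro w' x hl _ _; exact (List.length_eq_zero_iff.mp hl.symm).symm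
  | cons a w ih =>
    intro w' x hl h1 h2
    cases w' with
    | nil => simp at hl
    | cons b w' =>
      obtain ⟨p1, q1⟩ := h1
      obtain ⟨p2, q2⟩ := h2
      have hw := ih w' (g x) (by simpa using hl) q1 q2
      have s1 : ∀ l : Fin N, Ioo ((l : ℝ) / N) (((l : ℝ) + 1) / N) ⊆ Ioo 0 1 := by
        intro l
        have hN : (0:ℝ) < N := by exact_mod_cast (Nat.zero_le _).trans_lt l.2
        apply Ioo_subset_Ioo
        · positivity
        · rw [div_le_one hN]; exact_mod_cast l.2
      have h1 : a.1 = b.1 := by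
        by_contra hne
        have e1 := (hE a.1).φr (g x) (s1 _ p1)
        have e2 := (hE b.1).φr (g x) (s1 _ p2)
        have i1 := s1 _ p1
        rcases disj _ _ hne _ (Ioo_subset_Icc_self i1) _ (Ioo_subset_Icc_self (s1 _ p2)) (e1.trans e2.symm) with h | h
        · exact i1.1.ne' h
        · exact i1.2.ne h
      have h2 : a.2 = b.2 := by
        rw [← h1] at p2
        have hN : (0:ℝ) < N := by exact_mod_cast (Nat.zero_le _).trans_lt a.2.2
        have u1 : ((a.2 : ℕ) : ℝ) < (b.2 : ℕ) + 1 := by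
          have := p1.1.trans p2.2
          rwa [div_lt_div_iff_of_pos_right hN] at this
        have u2 : ((b.2 : ℕ) : ℝ) < (a.2 : ℕ) + 1 := by
          have := p2.1.trans p1.2
          rwa [div_lt_div_iff_of_pos_right hN] at this
        have v1 : (a.2 : ℕ) < (b.2 : ℕ) + 1 := by exact_mod_cast u1
        have v2 : (b.2 : ℕ) < (a.2 : ℕ) + 1 := by exact_mod_cast u2
        exact Fin.ext (by omega)
      rw [hw, Prod.ext h1 h2]

lemma pull1 {X ι : Type*} [MetricSpace X] {φ : ι → ℝ → X} {r : ι → X → ℝ}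
    (hE : ∀ i, Edge (φ i) (r i)) {g : X → X} (hg : Continuous g) {k a : ι} {C : Set X}
    (hC : IsPreconnected C) (hCk : C ⊆ φ k '' Icc 0 1) {s t : ℝ} (hst : s < t) (hs : 0 ≤ s) (ht : t ≤ 1)
    (h1 : φ a s ∈ g '' C) (h2 : φ a t ∈ g '' C) :
    ∃ σ1 σ2 : ℝ, σ1 < σ2 ∧ Icc σ1 σ2 ⊆ Icc 0 1 ∧ (∀ σ ∈ Icc σ1 σ2, φ k σ ∈ C ∧
        g (φ k σ) = φ a (r a (g (φ k σ)))) ∧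
      (∀ σ ∈ Ioo σ1 σ2, r a (g (φ k σ)) ∈ Ioo s t) ∧
      ((r a (g (φ k σ1)) = s ∧ r a (g (φ k σ2)) = t) ∨ (r a (g (φ k σ1)) = t ∧ r a (g (φ k σ2)) = s)) := by
  obtain ⟨_, hx1, e1⟩ := h1
  obtain ⟨_, hx2, e2⟩ := h2
  obtain ⟨τ1, hτ1, rfl⟩ := hCk hx1
  obtain ⟨τ2, hτ2, rfl⟩ := hCk hx2
  set h : ℝ → ℝ := fun σ => r a (g (φ k σ)) with hh
  have hc : Continuous h := (hE a).cr.comp (hg.comp (hE k).cφ)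
  have f1 : h τ1 = s := by simp only [hh]; rw [e1, (hE a).rφ s ⟨hs, by linarith⟩]
  have f2 : h τ2 = t := by simp only [hh]; rw [e2, (hE a).rφ t ⟨by linarith, ht⟩]
  obtain ⟨σ1, σ2, a1, a2, a3, a4, a5⟩ := subintU hc hst f1 f2
  have hI01 : Icc σ1 σ2 ⊆ Icc 0 1 :=
    Icc_subset_Icc ((le_min hτ1.1 hτ2.1).trans a1) (a3.trans (max_le hτ1.2 hτ2.2))
  refine ⟨σ1, σ2, a2, hI01, fun σ hσ => ⟨?_, ?_⟩, a5, a4⟩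
  · have hord := (hC.image (r k) (hE k).cr.continuousOn).ordConnected
    have m1 : τ1 ∈ r k '' C := ⟨_, hx1, (hE k).rφ _ hτ1⟩
    have m2 : τ2 ∈ r k '' C := ⟨_, hx2, (hE k).rφ _ hτ2⟩
    have : σ ∈ r k '' C := by
      apply hord.uIcc_subset m1 m2
      exact ⟨a1.trans hσ.1, hσ.2.trans a3⟩
    obtain ⟨x, hx, rfl⟩ := this
    obtain ⟨τ, hτ, rfl⟩ := hCk hx
    rwa [(hE k).rφ _ hτ]
  · have hcl : IsClosed {σ | g (φ k σ) = φ a (h σ)} :=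
      isClosed_eq (hg.comp (hE k).cφ) ((hE a).cφ.comp hc)
    have hsub : Ioo σ1 σ2 ⊆ {σ | g (φ k σ) = φ a (h σ)} := by
      intro x hx
      have := a5 x hx
      exact ((hE a).φr _ ⟨by linarith [this.1], by linarith [this.2]⟩).symm
    have := closure_minimal hsub hcl
    rw [closure_Ioo a2.ne] at this
    exact this hσ

lemma pull {X ι : Type*} [MetricSpace X] {φ : ι → ℝ → X} {r : ι → X → ℝ}
    (hE : ∀ i, Edge (φ i) (r i))
    (hI : ∀ S T : Set X, IsPreconnected S → IsPreconnected T → IsPreconnected (S ∩ T))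
    {g : X → X} (hg : Continuous g) {N : ℕ} (j : ι × Fin N) {s t : ℝ} (hst : s < t) (hs : 0 ≤ s) (ht : t ≤ 1) :
    ∀ (w : List (ι × Fin N)) (k : ι) (C : Set X), IsPreconnected C → C ⊆ φ k '' Icc 0 1 →
      φ j.1 s ∈ (w ++ [j]).foldl (fun C j => g '' C ∩ Pc φ N j) C →
      φ j.1 t ∈ (w ++ [j]).foldl (fun C j => g '' C ∩ Pc φ N j) C →
    ∃ σ1 σ2 : ℝ, σ1 < σ2 ∧ Icc σ1 σ2 ⊆ Icc 0 1 ∧ (∀ σ ∈ Icc σ1 σ2, φ k σ ∈ C ∧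
        g^[w.length + 1] (φ k σ) = φ j.1 (r j.1 (g^[w.length + 1] (φ k σ)))) ∧
      (∀ σ ∈ Ioo σ1 σ2, r j.1 (g^[w.length + 1] (φ k σ)) ∈ Ioo s t ∧ It r N g w (φ k σ)) ∧
      ((r j.1 (g^[w.length + 1] (φ k σ1)) = s ∧ r j.1 (g^[w.length + 1] (φ k σ2)) = t) ∨
       (r j.1 (g^[w.length + 1] (φ k σ1)) = t ∧ r j.1 (g^[w.length + 1] (φ k σ2)) = s)) := by
  intro w
  induction w with
  | nil =>
    intro k C hC hCk h1 h2
    obtain ⟨σ1, σ2, a1, a2, a3, a4, a5⟩ := pull1 hE hg hC hCk hst hs ht h1.1 h2.1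
    exact ⟨σ1, σ2, a1, a2, a3, fun σ hσ => ⟨a4 σ hσ, trivial⟩, a5⟩
  | cons a w ih =>
    intro k C hC hCk h1 h2
    have hP : IsPreconnected (Pc φ N a) := isPreconnected_Icc.image _ (hE _).cφ.continuousOn
    obtain ⟨τ1, τ2, b1, b2, b3, b4, b5⟩ := ih a.1 (g '' C ∩ Pc φ N a)
      (hI _ _ (hC.image _ hg.continuousOn) hP) (inter_subset_right.trans (image_mono (pc_sub a.2))) h1 h2
    have m1 : τ1 ∈ Icc τ1 τ2 := left_mem_Icc.mpr b1.le
    have m2 : τ2 ∈ Icc τ1 τ2 := right_mem_Icc.mpr b1.le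
    obtain ⟨σ1, σ2, a1, a2, a3, a4, a5⟩ := pull1 hE hg hC hCk b1 (b2 m1).1 (b2 m2).2
      (b3 τ1 m1).1.1 (b3 τ2 m2).1.1
    have hpar : ∀ τ ∈ Icc τ1 τ2, τ ∈ Icc ((a.2 : ℝ) / N) (((a.2 : ℝ) + 1) / N) := by
      intro τ hτ
      obtain ⟨τ', hτ', e⟩ := (b3 τ hτ).1.2
      have := congrArg (r a.1) e
      rw [(hE _).rφ _ (b2 hτ), (hE _).rφ _ (pc_sub _ hτ')] at this
      rwa [← this]
    have n1 : σ1 ∈ Icc σ1 σ2 := left_mem_Icc.mpr a1.le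
    have n2 : σ2 ∈ Icc σ1 σ2 := right_mem_Icc.mpr a1.le
    have hin : ∀ σ ∈ Icc σ1 σ2, r a.1 (g (φ k σ)) ∈ Icc τ1 τ2 :=
      ends_Icc (h := fun σ => r a.1 (g (φ k σ))) b1 a5 a4
    refine ⟨σ1, σ2, a1, a2, fun σ hσ => ⟨(a3 σ hσ).1, ?_⟩, fun σ hσ => ?_, ?_⟩
    · rw [List.length_cons, iterate_succ_apply, (a3 σ hσ).2]
      exact (b3 _ (hin σ hσ)).2
    · rw [List.length_cons, iterate_succ_apply]
      have e := (a3 σ (Ioo_subset_Icc_self hσ)).2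
      refine ⟨?_, ?_, ?_⟩
      · rw [e]; exact (b4 _ (a4 σ hσ)).1
      · have := a4 σ hσ
        exact ⟨(hpar τ1 m1).1.trans_lt this.1, this.2.trans_le (hpar τ2 m2).2⟩
      · rw [e]; exact (b4 _ (a4 σ hσ)).2
    · rw [List.length_cons, iterate_succ_apply g (w.length + 1) (φ k σ1), iterate_succ_apply g (w.length + 1) (φ k σ2), (a3 σ1 n1).2, (a3 σ2 n2).2]
      rcases a5 with ⟨q1, q2⟩ | ⟨q1, q2⟩ <;> rw [q1, q2]
      · exact b5
      · tauto

end TreeEnt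

namespace TreeEnt
universe u

lemma periodic_cr {X : Type*} [MetricSpace X] {f : X → X} {x : X} {n : ℕ} (hn : 1 ≤ n) (hx : f^[n] x = x) :
    x ∈ chainRecurrentSet f := by
  intro ε hε
  refine ⟨n, hn, fun i => f^[i] x, rfl, hx, fun i _ => ?_⟩
  simp only []
  rw [iterate_succ_apply', dist_self]; exact hε

theorem partB {X ι : Type*} [MetricSpace X] {φ : ι → ℝ → X} {r : ι → X → ℝ}
    (hE : ∀ i, Edge (φ i) (r i))
    (disj : ∀ i i', i ≠ i' → ∀ t ∈ Icc (0:ℝ) 1, ∀ t' ∈ Icc (0:ℝ) 1, φ i t = φ i' t' → t = 0 ∨ t = 1)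
    (hI : ∀ S T : Set X, IsPreconnected S → IsPreconnected T → IsPreconnected (S ∩ T))
    {f : X → X} (hf : Continuous f)
    (heq : ∀ p ∈ Function.periodicPts f, ∀ ε > 0, ∃ δ > 0,
      ∀ y ∈ chainRecurrentSet f, dist y p < δ → ∀ n : ℕ, dist (f^[n] y) (f^[n] p) < ε) :
    ∀ m ≥ 1, ∀ N ≥ 1, ∀ (j : ι × Fin N) (x x' : List (ι × Fin N)), x.length = x'.length →
      (x ++ [j]).foldl (fun C j => f^[m] '' C ∩ Pc φ N j) (Pc φ N j) = Pc φ N j →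
      (x' ++ [j]).foldl (fun C j => f^[m] '' C ∩ Pc φ N j) (Pc φ N j) = Pc φ N j → x = x' := by
  intro m hm N hN j x x' hl h1 h2
  by_contra hne
  set g := f^[m] with hgdef
  have hg : Continuous g := hf.iterate m
  have hNp : (0:ℝ) < N := by exact_mod_cast hN
  set A0 : ℝ := (j.2 : ℝ) / N with hA0
  set A1 : ℝ := ((j.2 : ℝ) + 1) / N with hA1
  have hA : A0 < A1 := by rw [hA0, hA1]; gcongr; linarith
  have hA01 : Icc A0 A1 ⊆ Icc 0 1 := pc_sub j.2
  have z0 := (hA01 (left_mem_Icc.mpr hA.le)).1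
  have z1 := (hA01 (right_mem_Icc.mpr hA.le)).2
  have m0 : φ j.1 A0 ∈ Pc φ N j := mem_image_of_mem _ (left_mem_Icc.mpr hA.le)
  have m1 : φ j.1 A1 ∈ Pc φ N j := mem_image_of_mem _ (right_mem_Icc.mpr hA.le)
  have hP : IsPreconnected (Pc φ N j) := isPreconnected_Icc.image _ (hE _).cφ.continuousOn
  have hPk : Pc φ N j ⊆ φ j.1 '' Icc 0 1 := image_mono hA01
  obtain ⟨a, b, a1, a2, a3, a4, a5⟩ := pull hE hI hg j hA z0 z1 x j.1 (Pc φ N j) hP hPk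
    (by rw [h1]; exact m0) (by rw [h1]; exact m1)
  obtain ⟨a', b', b1, b2, b3, b4, b5⟩ := pull hE hI hg j hA z0 z1 x' j.1 (Pc φ N j) hP hPk
    (by rw [h2]; exact m0) (by rw [h2]; exact m1)
  rw [← hl] at b3 b4 b5
  set n := x.length + 1 with hn
  set F := g^[n] with hF
  set h : ℝ → ℝ := fun σ => r j.1 (F (φ j.1 σ)) with hh
  have hc : Continuous h := (hE _).cr.comp ((hg.iterate n).comp (hE _).cφ)
  have hpar : ∀ σ ∈ Icc (0:ℝ) 1, φ j.1 σ ∈ Pc φ N j → σ ∈ Icc A0 A1 := by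
    rintro σ hσ ⟨τ, hτ, e⟩
    have := congrArg (r j.1) e
    rw [(hE _).rφ _ hσ, (hE _).rφ _ (hA01 hτ)] at this
    rwa [← this]
  have na := left_mem_Icc.mpr a1.le
  have nb := right_mem_Icc.mpr a1.le
  have na' := left_mem_Icc.mpr b1.le
  have nb' := right_mem_Icc.mpr b1.le
  obtain ⟨p, η, hη, hp, hpp, hy⟩ := hs_real (h := h) hc (A0 := A0) (A1 := A1)
    (hpar a (a2 na) (a3 a na).1).1 a1 (hpar b (a2 nb) (a3 b nb).1).2
    (hpar a' (b2 na') (b3 a' na').1).1 b1 (hpar b' (b2 nb') (b3 b' nb').1).2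
    (fun σ s1 s2 => hne (It.unique hE disj x x' _ hl (a4 σ s1).2 (b4 σ s2).2)) a5 b5
  set G := Icc a b ∪ Icc a' b' with hG
  have hconj : ∀ σ ∈ G, F (φ j.1 σ) = φ j.1 (h σ) := by
    rintro σ (hσ | hσ)
    · exact (a3 σ hσ).2
    · exact (b3 σ hσ).2
  set W := f^[m * n + m * n] with hW
  have hWF : ∀ z, W z = F (F z) := by
    intro z
    rw [hW, iterate_add_apply, hF, hgdef, ← iterate_mul]
  have hWc : ∀ σ, σ ∈ Icc a b ∧ h σ ∈ G → W (φ j.1 σ) = φ j.1 ((h ∘ h) σ) := by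
    rintro σ ⟨s1, s2⟩
    rw [hWF, hconj σ (Or.inl s1), hconj _ s2]; rfl
  have hM : 0 < m * n + m * n := by positivity
  have hWp : W (φ j.1 p) = φ j.1 p := by rw [hWc p hp]; simp [hpp]
  have hWp' : ∀ k, W^[k] (φ j.1 p) = φ j.1 p := fun k => iterate_fixed hWp k
  have hper : φ j.1 p ∈ periodicPts f := ⟨_, hM, hWp⟩
  have hrp : r j.1 (φ j.1 p) = p := (hE _).rφ _ (a2 hp.1)
  obtain ⟨ε, hε, hε'⟩ := Metric.continuousAt_iff.mp ((hE j.1).cr.continuousAt (x := φ j.1 p)) η hη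
  obtain ⟨δ, hδ, hδ'⟩ := heq _ hper ε hε
  obtain ⟨δ1, hδ1, hδ1'⟩ := Metric.continuousAt_iff.mp ((hE j.1).cφ.continuousAt (x := p)) δ hδ
  obtain ⟨y, y1, K, y2, y3, y4⟩ := hy δ1 hδ1
  have hWy : ∀ k ≤ K + 1, W^[k] (φ j.1 y) = φ j.1 ((h ∘ h)^[k] y) := by
    intro k
    induction k with
    | zero => intro _; rfl
    | succ k ih =>
      intro hk
      rw [iterate_succ_apply', ih (by omega), hWc _ (y4 k (by omega)), iterate_succ_apply']
  have hcr : φ j.1 y ∈ chainRecurrentSet f := by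
    refine periodic_cr (n := (m * n + m * n) * (K+1)) (Nat.mul_pos hM (by omega)) ?_
    rw [iterate_mul, ← hW, hWy _ le_rfl, y2]
  have hd := hδ' _ hcr (hδ1' (by rw [Real.dist_eq]; exact y1)) ((m * n + m * n) * K)
  rw [iterate_mul, ← hW, hWp', hWy K (by omega)] at hd
  have := hε' hd
  rw [hrp, (hE _).rφ _ (a2 (y4 K le_rfl).1), Real.dist_eq] at this
  linarith

theorem backward {X : Type u} [MetricSpace X] (hX : IsTree X) {f : X → X} (hf : Continuous f)
    (heq : ∀ p ∈ Function.periodicPts f, ∀ ε > 0, ∃ δ > 0,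
      ∀ y ∈ chainRecurrentSet f, dist y p < δ → ∀ n : ℕ, dist (f^[n] y) (f^[n] p) < ε) :
    topEntropy f = 0 := by
  obtain ⟨Y, _, _, e, ι, _, φ, r, hF⟩ := step0 hX
  have hI : ∀ S T : Set X, IsPreconnected S → IsPreconnected T → IsPreconnected (S ∩ T) := by
    intro S T hS hT
    have h1 : IsPreconnected (e.symm '' S) := hS.image _ e.symm.continuous.continuousOn
    have h2 : IsPreconnected (e.symm '' T) := hT.image _ e.symm.continuous.continuousOn
    have h3 := (hF.rt.preconn_inter h1 h2).image e e.continuous.continuousOn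
    rw [← image_inter e.symm.injective, ← image_comp] at h3
    simpa using h3
  exact partD hF.edge hF.cov hI hf (partB hF.edge hF.disj hI hf heq)

end TreeEnt

/-- A tree map has zero topological entropy iff the restriction
`f|_{CR(f)}` has equicontinuous powers at every periodic point. -/
theorem topEntropy_zero_iff_equicontinuous_at_periodic {X : Type*} [MetricSpace X]
    (hX : IsTree X) (f : X → X) (hf : Continuous f) :
    topEntropy f = 0 ↔
      ∀ p ∈ Function.periodicPts f, ∀ ε > 0, ∃ δ > 0, ∀ y ∈ chainRecurrentSet f,
        dist y p < δ → ∀ n : ℕ, dist (f^[n] y) (f^[n] p) < ε := by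
  exact ⟨TreeEnt.forward hX hf, TreeEnt.backward hX hf⟩
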